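/- Let f, g, g′ ∈ GS with f non-closed, f ∈ closure(W^ss(g)), and g, g′ closed geodesics each unique in its free homotopy class. If g ∼_{s_n} g′ for some sequence s_n → ∞, then f ∼_{s_n} g′. -/

import Mathlib

/-!
The geodesic flow of a Euclidean surface with at least one conical point is topologically mixing:
for all nonempty open `O` and `U`, the set `τ · O` meets `U` for all large `τ`
(`topological_mixing`). Hence `f ∼ g'` along every sequence tending to `∞`, once a conical point is
known to exist, and this is what uniqueness of the closed geodesic `g` gives.

*Existence of a conical point* (`conical_nonempty`). On a flat surface a closed geodesic `g` of
period `T` lies in an immersed flat strip of period `2 * T` (twice around, since the holonomy of the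
normal direction may be a reflection). The parallel curves in the strip are closed geodesics freely
homotopic to `g`, so each of them is a translate of `g`. Infinitely many heights against a compact
circle of phases force two parallel curves to be almost in phase, and these then share a point of
the strip, which is absurd.

*The universal cover.* A cone of angle at least `2π` satisfies the CN inequality of Bruhat and Tits
(`cone_cn`), so the metric of `S` is locally convex (`exists_locConv`). As in the Cartan–Hadamard
theorem, local geodesics can then be perturbed along with their endpoints (`Geo.exists_near`), and
the space of constant speed local geodesics `[0, 1] → S` covers `S × S` through its endpoints
(`GeoPath.ev_isCoveringMap`). Lifting `X × X → S × S` gives a continuous family of geodesics joining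
the points of the simply connected cover. Their lengths define a metric for which the cover is
uniquely geodesic, with geodesics from a point diverging convexly (`GeoCover`, `exists_geoCover`).

*Mixing.* Fix a conical point `P` and call the points of the cover over `P` vertices. Directions at
a vertex form a circle of length `θ > 2π`, and two geodesics meeting at a vertex at an angle at
least `π` concatenate to a geodesic (`Apex.concat`). Since `θ / 2 > π`, there is room to do so along
open arcs of directions. Loops at `P` with initial and final directions in given arcs exist
(`Apex.exists_loop_conn`); their lengths are non-arithmetic (`Apex.nonarith`), because the triangle
inequality for a triangle with an angle slightly less than `π` at a vertex is strict but nearly an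
equality; so all large lengths are attained up to `δ` (`Apex.exists_loop_length`). Finally every
local geodesic is approximated, on a given compact interval, by segments between vertices
(`GeoCover.approx`). Joining such a segment for `O` to one for `U` by a loop of suitable length, and
extending to a line, gives the required geodesic.
-/

open Metric Filter Topology Set

noncomputable section

namespace ESCSPaper

/-! ### The standard cone -/

/-- Angular distance between `a b : ℝ` regarded as angles modulo `θ`. -/
def angDist (θ a b : ℝ) : ℝ := sInf {d : ℝ | ∃ k : ℤ, d = |a - b + θ * k|}

/-- The distance on the standard cone `C(v, θ)` of cone angle `θ`, written in polar
coordinates `(r, t)` around the vertex `v = (0, _)`; it is induced by the length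
element `ds² = dr² + r² dt²`. -/
def coneDist (θ : ℝ) (x y : ℝ × ℝ) : ℝ :=
  if angDist θ x.2 y.2 ≤ Real.pi then
    Real.sqrt (x.1 ^ 2 + y.1 ^ 2 - 2 * x.1 * y.1 * Real.cos (angDist θ x.2 y.2))
  else x.1 + y.1

/-! ### Euclidean surfaces with conical singularities -/

/-- A Euclidean surface with conical singularities (e.s.c.s.): a closed (compact,
connected) surface of genus `≥ 2` (encoded by the fundamental group containing a
free group of rank two, which for closed surfaces characterises negative Euler
characteristic, i.e. genus `≥ 2` in the orientable case), equipped with a length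
metric which is locally Euclidean away from a finite set of conical points, each of
cone angle `> 2π`. -/
structure ESCS (S : Type) [MetricSpace S] : Type where
  compact : CompactSpace S
  connected : ConnectedSpace S
  /-- `S` is a surface: every point has a neighborhood homeomorphic to an open planar set. -/
  surface : ∀ x : S, ∃ U : Set S, U ∈ nhds x ∧ ∃ V : Set (ℝ × ℝ), IsOpen V ∧
    Nonempty (↥U ≃ₜ ↥V)
  /-- genus at least two: the fundamental group contains a free group of rank two. -/
  genus_ge_two : ∃ x : S, ∃ ι : FreeGroup Bool →* FundamentalGroup S x, Function.Injective ι
  /-- the metric of `S` is a length metric. -/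
  length_metric : ∀ x y : S, ∀ ε > (0:ℝ), ∃ γ : ℝ → S, Continuous γ ∧ γ 0 = x ∧ γ 1 = y ∧
    eVariationOn γ (Set.Icc 0 1) ≤ ENNReal.ofReal (dist x y + ε)
  /-- the (finitely many) conical points. -/
  conical : Finset S
  /-- the cone angle at each conical point. -/
  angle : S → ℝ
  angle_gt : ∀ s ∈ conical, 2 * Real.pi < angle s
  /-- every regular point has a neighborhood isometric to a Euclidean disk. -/
  euclidean_at : ∀ x : S, x ∉ conical → ∃ ε > (0:ℝ), ∃ f : S → EuclideanSpace ℝ (Fin 2),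
    (∀ y ∈ ball x ε, ∀ z ∈ ball x ε, dist (f y) (f z) = dist y z) ∧
    f '' ball x ε = ball (f x) ε
  /-- every conical point `s` has a neighborhood isometric to a neighborhood of the
  vertex of the standard cone `C(v, angle s)`. -/
  cone_at : ∀ s ∈ conical, ∃ ε > (0:ℝ), ∃ f : S → ℝ × ℝ,
    f s = (0, 0) ∧
    (∀ y ∈ ball s ε, ∀ z ∈ ball s ε, coneDist (angle s) (f y) (f z) = dist y z) ∧
    f '' ball s ε = insert ((0:ℝ), (0:ℝ)) (Set.Ioo 0 ε ×ˢ Set.Ico 0 (angle s))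

/-! ### Geodesics -/

/-- A local isometric map `ℝ → S`, i.e. a (unit speed, bi-infinite) geodesic of `S`. -/
def IsLocalGeodesic {S : Type} [MetricSpace S] (g : ℝ → S) : Prop :=
  ∀ t : ℝ, ∃ ε > (0:ℝ), ∀ s u : ℝ, |s - t| < ε → |u - t| < ε → dist (g s) (g u) = |s - u|

/-- Two periodic maps (closed curves) `ℝ → S` are freely homotopic: for suitable
periods, the corresponding loops (parametrized with period `1`) are homotopic through
closed loops. -/
def FreelyHomotopic {S : Type} [TopologicalSpace S] (g h : ℝ → S) : Prop :=
  ∃ T₁ > (0:ℝ), ∃ T₂ > (0:ℝ), Function.Periodic g T₁ ∧ Function.Periodic h T₂ ∧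
    ∃ F : ℝ → ℝ → S, Continuous (Function.uncurry F) ∧
      (∀ s : ℝ, F 0 s = g (T₁ * s)) ∧ (∀ s : ℝ, F 1 s = h (T₂ * s)) ∧
      ∀ u s : ℝ, F u (s + 1) = F u s

/-- `g` is a closed geodesic of `S` which is the unique closed geodesic in its free
homotopy class (up to re-parametrization). -/
def UniqueClosedGeodesic {S : Type} [MetricSpace S] (g : ℝ → S) : Prop :=
  IsLocalGeodesic g ∧ (∃ T > (0:ℝ), Function.Periodic g T) ∧
    ∀ h : ℝ → S, IsLocalGeodesic h → (∃ T > (0:ℝ), Function.Periodic h T) →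
      FreelyHomotopic g h → ∃ a : ℝ, ∀ t : ℝ, h t = g (t + a)

/-- `c'` is a parallel translate of the geodesic line `c` (the two lines bound a flat
strip): `c'` is a geodesic line which stays at constant distance from `c`. -/
def ParallelTranslate {X : Type} [MetricSpace X] (c c' : ℝ → X) : Prop :=
  Isometry c' ∧ ∃ d : ℝ, ∀ t : ℝ, dist (c' t) (c t) = d

/-! ### The universal cover and its deck group -/

/-- The universal cover `X` of `S`, with the lifted metric: a simply connected space
together with a covering projection `p : X → S` which is a local isometry. -/
structure UnivCover (S X : Type) [MetricSpace S] [MetricSpace X] : Type where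
  p : X → S
  covering : IsCoveringMap p
  localIsom : ∀ x : X, ∃ ε > (0:ℝ), ∀ y ∈ ball x ε, ∀ z ∈ ball x ε,
    dist (p y) (p z) = dist y z
  simplyConnected : SimplyConnectedSpace X

/-- The deck (covering) group `Γ ≅ π₁(S)` of the universal cover: the group of
isometries of `X` commuting with the projection. -/
def deck {S X : Type} [MetricSpace S] [MetricSpace X] (cov : UnivCover S X) :
    Subgroup (X ≃ᵢ X) where
  carrier := {φ : X ≃ᵢ X | ∀ x : X, cov.p (φ x) = cov.p x}
  one_mem' := fun _ => rfl
  mul_mem' := by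
    intro φ ψ hφ hψ x
    exact (hφ (ψ x)).trans (hψ x)
  inv_mem' := by
    intro φ hφ x
    have h := hφ (φ⁻¹ x)
    have h2 : φ (φ⁻¹ x) = x := by simp
    rw [h2] at h
    exact h.symm

/-! ### The visual boundary -/

/-- A geodesic ray: a map `ℝ → X` which is isometric on `[0, ∞)`. -/
def IsRay {X : Type} [MetricSpace X] (r : ℝ → X) : Prop :=
  ∀ s t : ℝ, 0 ≤ s → 0 ≤ t → dist (r s) (r t) = |s - t|

/-- The space of geodesic rays of `X`, with the topology of pointwise convergence
(which on rays agrees with uniform convergence on compact sets). -/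
abbrev RaySp (X : Type) [MetricSpace X] : Type := {r : ℝ → X // IsRay r}

/-- Two rays are asymptotic if they stay at bounded distance. -/
instance raySetoid (X : Type) [MetricSpace X] : Setoid (RaySp X) where
  r r₁ r₂ := ∃ C : ℝ, ∀ t : ℝ, 0 ≤ t → dist (r₁.1 t) (r₂.1 t) ≤ C
  iseqv := by
    refine ⟨fun r => ⟨0, fun t _ => by simp⟩, ?_, ?_⟩
    · rintro a b ⟨C, h⟩
      exact ⟨C, fun t ht => by rw [dist_comm]; exact h t ht⟩
    · rintro a b c ⟨C₁, h₁⟩ ⟨C₂, h₂⟩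
      exact ⟨C₁ + C₂, fun t ht =>
        (dist_triangle (a.1 t) (b.1 t) (c.1 t)).trans (add_le_add (h₁ t ht) (h₂ t ht))⟩

/-- The visual boundary `∂X̃`: asymptoty classes of geodesic rays, with the quotient
topology. -/
abbrev Bdry (X : Type) [MetricSpace X] : Type := Quotient (raySetoid X)

/-- The point of the visual boundary determined by the positive end of a geodesic
line `g`, i.e. `g(+∞)`. -/
def endPlus {X : Type} [MetricSpace X] (g : ℝ → X) (hg : Isometry g) : Bdry X :=
  ⟦⟨g, fun s t _ _ => by rw [hg.dist_eq, Real.dist_eq]⟩⟧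

/-- The point of the visual boundary determined by the negative end of a geodesic
line `g`, i.e. `g(−∞)`. -/
def endMinus {X : Type} [MetricSpace X] (g : ℝ → X) (hg : Isometry g) : Bdry X :=
  ⟦⟨fun t => g (-t), fun s t _ _ => by
      rw [hg.dist_eq, Real.dist_eq, show -s - -t = -(s - t) by ring, abs_neg]⟩⟧

/-- The induced action of an isometry of `X` on the visual boundary. -/
def bdryMap {X : Type} [MetricSpace X] (φ : X ≃ᵢ X) : Bdry X → Bdry X :=
  Quotient.map
    (fun r => ⟨fun t => φ (r.1 t), fun s t hs ht => by
      rw [φ.dist_eq]; exact r.2 s t hs ht⟩)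
    (by
      rintro r₁ r₂ ⟨C, h⟩
      exact ⟨C, fun t ht => by
        simpa only [φ.dist_eq] using h t ht⟩)

/-- A sequence of points of `X` converges to the boundary point `ξ` (in the cone
topology): the geodesic segments from a fixed origin to the points converge (uniformly
on compacta, equivalently pointwise) to a ray representing `ξ`, while their lengths
tend to infinity. -/
def TendstoBdry {X : Type} [MetricSpace X] (x : ℕ → X) (ξ : Bdry X) : Prop :=
  ∃ r : RaySp X, ⟦r⟧ = ξ ∧
    ∃ (σ : ℕ → ℝ → X) (d : ℕ → ℝ),
      (∀ n : ℕ, 0 ≤ d n ∧ σ n 0 = r.1 0 ∧ σ n (d n) = x n ∧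
        ∀ s t : ℝ, s ∈ Set.Icc 0 (d n) → t ∈ Set.Icc 0 (d n) →
          dist (σ n s) (σ n t) = |s - t|) ∧
      Tendsto d atTop atTop ∧
      ∀ t : ℝ, 0 ≤ t → Tendsto (fun n => σ n t) atTop (nhds (r.1 t))

/-- The set `F_h` of boundary points fixed by some nontrivial (hyperbolic) deck
transformation. -/
def Fh {S X : Type} [MetricSpace S] [MetricSpace X] (cov : UnivCover S X) :
    Set (Bdry X) :=
  {ξ : Bdry X | ∃ φ ∈ deck cov, φ ≠ 1 ∧ bdryMap φ ξ = ξ}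

/-! ### Busemann functions -/

/-- The Busemann function of a geodesic ray: `b_r(y) = lim_{t→∞} (d(y, r t) − t)`
(the function is nonincreasing in `t` and bounded below, so the limit is the inf). -/
def busemannFun {X : Type} [MetricSpace X] (r : RaySp X) (y : X) : ℝ :=
  ⨅ t : Set.Ici (0:ℝ), (dist y (r.1 t.1) - t.1)

/-- The generalized Busemann function `α(ξ, x, x') = "d(x',ξ) − d(x,ξ)"` for a boundary
point `ξ`: the difference of Busemann functions of a ray representing `ξ` (in a Hadamard
space this does not depend on the chosen representative). -/
def genBusemann {X : Type} [MetricSpace X] (ξ : Bdry X) (x y : X) : ℝ :=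
  busemannFun (Quotient.out ξ) y - busemannFun (Quotient.out ξ) x

/-! ### The space of geodesics and the geodesic flow -/

/-- `GS`: the space of (bi-infinite, locally isometric) geodesics of `S`, topologized
as a subspace of `C(ℝ, S)` with the compact-open topology. -/
abbrev GeodSp (S : Type) [MetricSpace S] : Type := {g : C(ℝ, S) // IsLocalGeodesic ⇑g}

/-- The geodesic flow: `(t · g)(s) = g(s + t)`. -/
def geodFlow {S : Type} [MetricSpace S] (t : ℝ) (g : GeodSp S) : GeodSp S :=
  ⟨⟨fun s => g.1 (s + t), g.1.continuous.comp (continuous_id.add continuous_const)⟩, by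
    intro u
    obtain ⟨ε, hε, h⟩ := g.2 (u + t)
    refine ⟨ε, hε, fun s v hs hv => ?_⟩
    have h1 : |s + t - (u + t)| < ε := by rwa [show s + t - (u + t) = s - u by ring]
    have h2 : |v + t - (u + t)| < ε := by rwa [show v + t - (u + t) = v - u by ring]
    have h3 := h (s + t) (v + t) h1 h2
    rwa [show s + t - (v + t) = s - v by ring] at h3⟩

/-- The stable set `W^s(g)` of `g ∈ GS`: geodesics `h` admitting lifts to the universal
cover asymptotic to a lift of `g` (same point at `+∞`). -/
def WsGS {S X : Type} [MetricSpace S] [MetricSpace X] (cov : UnivCover S X)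
    (g : GeodSp S) : Set (GeodSp S) :=
  {h : GeodSp S | ∃ (g' h' : ℝ → X) (hg : Isometry g') (hh : Isometry h'),
    (∀ t : ℝ, cov.p (g' t) = g.1 t) ∧ (∀ t : ℝ, cov.p (h' t) = h.1 t) ∧
    endPlus h' hh = endPlus g' hg}

/-- The strong stable set `W^ss(g)` of `g ∈ GS`: geodesics `h` admitting lifts
asymptotic to a lift of `g` whose time-`0` points are equidistant from the common
point at infinity (the generalized Busemann function vanishes). -/
def WssGS {S X : Type} [MetricSpace S] [MetricSpace X] (cov : UnivCover S X)
    (g : GeodSp S) : Set (GeodSp S) :=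
  {h : GeodSp S | ∃ (g' h' : ℝ → X) (hg : Isometry g') (hh : Isometry h'),
    (∀ t : ℝ, cov.p (g' t) = g.1 t) ∧ (∀ t : ℝ, cov.p (h' t) = h.1 t) ∧
    endPlus h' hh = endPlus g' hg ∧
    genBusemann (endPlus g' hg) (g' 0) (h' 0) = 0}

/-- `h` is `s_n`-mixing with `f`: for all neighborhoods `O ∋ h`, `U ∋ f`, eventually
`s_n · O ∩ U ≠ ∅`. -/
def SnMixing {S : Type} [MetricSpace S] (s : ℕ → ℝ) (h f : GeodSp S) : Prop :=
  ∀ O U : Set (GeodSp S), IsOpen O → IsOpen U → h ∈ O → f ∈ U →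
    ∀ᶠ n in atTop, (geodFlow (s n) '' O ∩ U).Nonempty

/-! ### Angles and the cone -/

lemma angDist_set_bddBelow (θ a b : ℝ) :
    BddBelow {d : ℝ | ∃ k : ℤ, d = |a - b + θ * k|} :=
  ⟨0, by rintro _ ⟨k, rfl⟩; exact abs_nonneg _⟩

lemma angDist_le (θ a b : ℝ) (k : ℤ) : angDist θ a b ≤ |a - b + θ * k| :=
  csInf_le (angDist_set_bddBelow θ a b) ⟨k, rfl⟩

lemma angDist_nonneg (θ a b : ℝ) : 0 ≤ angDist θ a b :=
  Real.sInf_nonneg (by rintro _ ⟨k, rfl⟩; exact abs_nonneg _)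

/-- The infimum defining the angular distance is attained, at a representative of
absolute value at most `θ / 2`. -/
lemma angDist_attained {θ : ℝ} (hθ : 0 < θ) (a b : ℝ) :
    ∃ k : ℤ, angDist θ a b = |a - b + θ * k| ∧ angDist θ a b ≤ θ / 2 := by
  set x := (a - b) / θ with hx
  have hab : a - b = θ * x := by rw [hx]; field_simp
  have key : ∀ k : ℤ, |a - b + θ * k| = θ * |x + k| := by
    intro k
    rw [hab, ← mul_add, abs_mul, abs_of_pos hθ]
  have hround : |x + ((-round x : ℤ) : ℝ)| ≤ 1 / 2 := by
    have := abs_sub_round x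
    push_cast
    rwa [← sub_eq_add_neg]
  have hmin : ∀ k : ℤ, |x + ((-round x : ℤ) : ℝ)| ≤ |x + k| := by
    intro k
    have := round_le x (-k)
    push_cast at this ⊢
    rwa [sub_neg_eq_add, sub_eq_add_neg] at this
  refine ⟨-round x, ?_, ?_⟩
  · apply le_antisymm (angDist_le θ a b _)
    refine le_csInf ⟨|a - b + θ * ((0 : ℤ) : ℝ)|, 0, rfl⟩ ?_
    rintro _ ⟨k, rfl⟩
    rw [key, key]
    exact mul_le_mul_of_nonneg_left (hmin k) hθ.le
  · refine (angDist_le θ a b (-round x)).trans ?_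
    rw [key]
    nlinarith

lemma angDist_self {θ : ℝ} (a : ℝ) : angDist θ a a = 0 :=
  le_antisymm (by simpa using angDist_le θ a a 0) (angDist_nonneg _ _ _)

lemma angDist_comm {θ : ℝ} (a b : ℝ) : angDist θ a b = angDist θ b a := by
  unfold angDist
  congr 1
  ext d
  constructor
  · rintro ⟨k, rfl⟩
    refine ⟨-k, ?_⟩
    rw [← abs_neg]; push_cast; ring_nf
  · rintro ⟨k, rfl⟩
    refine ⟨-k, ?_⟩
    rw [← abs_neg]; push_cast; ring_nf

lemma angDist_triangle {θ : ℝ} (hθ : 0 < θ) (a b c : ℝ) :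
    angDist θ a c ≤ angDist θ a b + angDist θ b c := by
  obtain ⟨k, hk, -⟩ := angDist_attained hθ a b
  obtain ⟨l, hl, -⟩ := angDist_attained hθ b c
  rw [hk, hl]
  refine (angDist_le θ a c (k + l)).trans ?_
  have : a - c + θ * ((k + l : ℤ) : ℝ) = (a - b + θ * k) + (b - c + θ * l) := by
    push_cast; ring
  rw [this]
  exact abs_add_le _ _

lemma angDist_add_zmul {θ : ℝ} (a b : ℝ) (m : ℤ) :
    angDist θ (a + θ * m) b = angDist θ a b := by
  unfold angDist
  congr 1
  ext d
  constructor
  · rintro ⟨k, rfl⟩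
    refine ⟨k + m, ?_⟩
    push_cast; ring_nf
  · rintro ⟨k, rfl⟩
    refine ⟨k - m, ?_⟩
    push_cast; ring_nf

lemma angDist_add_right {θ : ℝ} (a b c : ℝ) :
    angDist θ (a + c) (b + c) = angDist θ a b := by
  unfold angDist
  congr 1
  ext d
  simp only [mem_ofPred_eq, add_sub_add_right_eq_sub]

/-- Reduction of an angle to `[0, θ)`. -/
def angMod (θ a : ℝ) : ℝ := a - θ * ⌊a / θ⌋

lemma angMod_mem {θ : ℝ} (hθ : 0 < θ) (a : ℝ) : angMod θ a ∈ Ico 0 θ := by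
  have h1 := Int.floor_le (a / θ)
  have h2 := Int.lt_floor_add_one (a / θ)
  rw [le_div_iff₀ hθ] at h1
  rw [div_lt_iff₀ hθ] at h2
  unfold angMod
  constructor <;> nlinarith

lemma angDist_angMod {θ : ℝ} (a b : ℝ) : angDist θ (angMod θ a) b = angDist θ a b := by
  have := angDist_add_zmul (θ := θ) a b (-⌊a / θ⌋)
  unfold angMod
  rw [← this]
  push_cast
  congr 1
  ring

lemma angDist_angMod_right {θ : ℝ} (a b : ℝ) :
    angDist θ b (angMod θ a) = angDist θ b a := by
  rw [angDist_comm, angDist_angMod, angDist_comm]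

lemma angDist_eq_zero {θ : ℝ} (hθ : 0 < θ) {a b : ℝ} (ha : a ∈ Ico 0 θ) (hb : b ∈ Ico 0 θ)
    (h : angDist θ a b = 0) : a = b := by
  obtain ⟨k, hk, -⟩ := angDist_attained hθ a b
  rw [h] at hk
  have hk' : a - b + θ * k = 0 := abs_eq_zero.1 hk.symm
  have h0 : k = 0 := by
    by_contra hne
    rcases lt_or_gt_of_ne hne with h1 | h1
    · have : (k : ℝ) ≤ -1 := by exact_mod_cast Int.le_sub_one_of_lt h1
      nlinarith [ha.1, ha.2, hb.1, hb.2]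
    · have : (1 : ℝ) ≤ k := by exact_mod_cast h1
      nlinarith [ha.1, ha.2, hb.1, hb.2]
  subst h0
  simp at hk'
  linarith

/-- The angular distance realised by a displacement of at most half the total angle. -/
lemma angDist_of_abs_le {θ : ℝ} (hθ : 0 < θ) {a b : ℝ} (h : |a - b| ≤ θ / 2) :
    angDist θ a b = |a - b| := by
  apply le_antisymm (by simpa using angDist_le θ a b 0)
  refine le_csInf ⟨|a - b + θ * ((0 : ℤ) : ℝ)|, 0, rfl⟩ ?_
  rintro _ ⟨k, rfl⟩
  rcases eq_or_ne k 0 with rfl | hk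
  · simp
  · have h1 : θ ≤ |θ * (k : ℝ)| := by
      rw [abs_mul, abs_of_pos hθ]
      have : (1 : ℝ) ≤ |(k : ℝ)| := by exact_mod_cast Int.one_le_abs hk
      nlinarith
    have h2 := abs_sub_abs_le_abs_sub (θ * (k : ℝ)) (-(a - b))
    rw [abs_neg] at h2
    have h3 : θ * (k : ℝ) - -(a - b) = a - b + θ * k := by ring
    rw [h3] at h2
    linarith

/-- The cosine truncated at `π`. -/
def tcos (a : ℝ) : ℝ := Real.cos (min a Real.pi)

lemma tcos_of_le {a : ℝ} (h : a ≤ Real.pi) : tcos a = Real.cos a := by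
  rw [tcos, min_eq_left h]

lemma tcos_of_ge {a : ℝ} (h : Real.pi ≤ a) : tcos a = -1 := by
  rw [tcos, min_eq_right h, Real.cos_pi]

lemma neg_one_le_tcos (a : ℝ) : -1 ≤ tcos a := Real.neg_one_le_cos _
lemma tcos_le_one (a : ℝ) : tcos a ≤ 1 := Real.cos_le_one _

lemma tcos_anti {a b : ℝ} (ha : 0 ≤ a) (h : a ≤ b) : tcos b ≤ tcos a := by
  unfold tcos
  apply Real.cos_le_cos_of_nonneg_of_le_pi (le_min ha Real.pi_pos.le) (min_le_right _ _)
  exact min_le_min_right _ h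

lemma tcos_zero : tcos 0 = 1 := by rw [tcos_of_le Real.pi_pos.le, Real.cos_zero]

lemma tcos_continuous : Continuous tcos := by unfold tcos; fun_prop

lemma coneDist_sq {θ : ℝ} (x y : ℝ × ℝ) :
    coneDist θ x y ^ 2 =
      x.1 ^ 2 + y.1 ^ 2 - 2 * x.1 * y.1 * tcos (angDist θ x.2 y.2) := by
  unfold coneDist
  split_ifs with h
  · rw [tcos_of_le h, Real.sq_sqrt]
    have h1 := Real.cos_le_one (angDist θ x.2 y.2)
    have h2 := Real.neg_one_le_cos (angDist θ x.2 y.2)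
    set c := Real.cos (angDist θ x.2 y.2)
    nlinarith [mul_nonneg (by linarith : 0 ≤ 1 - c) (sq_nonneg (x.1 + y.1)),
      mul_nonneg (by linarith : 0 ≤ 1 + c) (sq_nonneg (x.1 - y.1))]
  · rw [tcos_of_ge (not_le.1 h).le]; ring

lemma coneDist_nonneg {θ : ℝ} {x y : ℝ × ℝ} (hx : 0 ≤ x.1) (hy : 0 ≤ y.1) :
    0 ≤ coneDist θ x y := by
  unfold coneDist
  split_ifs
  · exact Real.sqrt_nonneg _
  · positivity

/-- The cone distance is characterised by the law of cosines with the truncated cosine. -/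
lemma coneDist_eq_of_sq {θ : ℝ} {x y : ℝ × ℝ} (hx : 0 ≤ x.1) (hy : 0 ≤ y.1) {d : ℝ}
    (hd : 0 ≤ d)
    (h : x.1 ^ 2 + y.1 ^ 2 - 2 * x.1 * y.1 * tcos (angDist θ x.2 y.2) = d ^ 2) :
    coneDist θ x y = d := by
  rw [← coneDist_sq] at h
  exact (pow_left_inj₀ (coneDist_nonneg hx hy) hd two_ne_zero).1 h

/-- For a total angle of at least `2π`, the truncated cosine of the angular distance is
dominated by the cosine of any representative in `[-2π, 2π]`. -/
lemma tcos_angDist_le {θ a b : ℝ} (hθ : 2 * Real.pi ≤ θ) (k : ℤ)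
    (h : |a - b + θ * k| ≤ 2 * Real.pi) :
    tcos (angDist θ a b) ≤ Real.cos (a - b + θ * k) := by
  have hpi := Real.pi_pos
  rw [← Real.cos_abs]
  set τ := |a - b + θ * k| with hτ
  have hτ0 : 0 ≤ τ := abs_nonneg _
  by_cases h1 : τ ≤ Real.pi
  · rw [← tcos_of_le h1]
    -- the angular distance could be smaller than `τ` only if `τ > θ / 2 ≥ π`
    have : angDist θ a b = τ := by
      have h2 := angDist_of_abs_le (θ := θ) (a := a + θ * k) (b := b) (by linarith) (by
        rw [show a + θ * k - b = a - b + θ * k by ring]; linarith)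
      rw [angDist_add_zmul] at h2
      rw [h2, hτ]; ring_nf
    rw [this]
  · push Not at h1
    -- here `θ - τ` is also the absolute value of a representative
    have h3 : 2 * Real.pi - τ ≤ angDist θ a b := by
      obtain ⟨l, hl, -⟩ := angDist_attained (by linarith : 0 < θ) a b
      rw [hl]
      rcases eq_or_ne l k with rfl | hlk
      · linarith
      · have h4 : θ ≤ |θ * ((l : ℝ) - k)| := by
          rw [abs_mul, abs_of_pos (by linarith : 0 < θ)]
          have : (1 : ℝ) ≤ |(l : ℝ) - k| := by
            exact_mod_cast Int.one_le_abs (sub_ne_zero.2 hlk)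
          nlinarith
        have h5 := abs_sub (a - b + θ * l) (a - b + θ * k)
        rw [show a - b + θ * (l : ℝ) - (a - b + θ * k) = θ * ((l : ℝ) - k) by ring] at h5
        linarith
    have h6 := tcos_anti (by linarith) h3
    rw [tcos_of_le (a := 2 * Real.pi - τ) (by linarith), Real.cos_two_pi_sub] at h6
    exact h6

/-- If two angles add up to at least `π`, their truncated cosines have nonpositive sum. -/
lemma tcos_add_nonpos {α β : ℝ} (hα : 0 ≤ α) (h : Real.pi ≤ α + β) :
    tcos α + tcos β ≤ 0 := by
  by_cases h1 : α ≤ Real.pi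
  · have h2 := tcos_anti (a := Real.pi - α) (b := β) (by linarith) (by linarith)
    rw [tcos_of_le (a := Real.pi - α) (by linarith), Real.cos_pi_sub] at h2
    rw [tcos_of_le h1]
    linarith
  · rw [tcos_of_ge (not_le.1 h1).le]
    linarith [tcos_le_one β]

/-- Polar coordinates of the midpoint of `r₁` and `r₂ e^{iδ}`; its argument lies between
`0` and `δ`. -/
lemma polar_mid {r₁ r₂ δ : ℝ} (h1 : 0 ≤ r₁) (h2 : 0 ≤ r₂) (hδ : |δ| < Real.pi) :
    ∃ ρ ψ : ℝ, 0 ≤ ρ ∧ ρ * Real.cos ψ = (r₁ + r₂ * Real.cos δ) / 2 ∧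
      ρ * Real.sin ψ = r₂ * Real.sin δ / 2 ∧ |ψ| + |δ - ψ| = |δ| := by
  have main : ∀ δ : ℝ, 0 ≤ δ → δ < Real.pi →
      ∃ ρ ψ : ℝ, 0 ≤ ρ ∧ ρ * Real.cos ψ = (r₁ + r₂ * Real.cos δ) / 2 ∧
      ρ * Real.sin ψ = r₂ * Real.sin δ / 2 ∧ 0 ≤ ψ ∧ ψ ≤ δ := by
    intro δ h0 hpi
    set z : ℂ := ⟨(r₁ + r₂ * Real.cos δ) / 2, r₂ * Real.sin δ / 2⟩ with hz
    have hs : 0 ≤ Real.sin δ := Real.sin_nonneg_of_nonneg_of_le_pi h0 hpi.le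
    have hre : ‖z‖ * Real.cos z.arg = (r₁ + r₂ * Real.cos δ) / 2 := Complex.norm_mul_cos_arg z
    have him : ‖z‖ * Real.sin z.arg = r₂ * Real.sin δ / 2 := Complex.norm_mul_sin_arg z
    rcases eq_or_lt_of_le h0 with h0' | h0'
    · subst h0'
      refine ⟨(r₁ + r₂) / 2, 0, by positivity, by simp, by simp, le_rfl, le_rfl⟩
    rcases eq_or_ne z 0 with hz0 | hz0
    · rw [hz0] at hre him
      simp only [norm_zero, zero_mul] at hre him
      exact ⟨0, 0, le_rfl, by simpa using hre, by simpa using him, le_rfl, h0⟩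
    · have hpos : 0 < ‖z‖ := norm_pos_iff.2 hz0
      have harg : 0 ≤ z.arg := Complex.arg_nonneg_iff.2 (by simp only [hz]; positivity)
      refine ⟨‖z‖, z.arg, hpos.le, hre, him, harg, ?_⟩
      by_contra hlt
      push Not at hlt
      have h3 : Real.sin (δ - z.arg) < 0 := by
        apply Real.sin_neg_of_neg_of_neg_pi_lt (by linarith)
        linarith [Complex.arg_le_pi z]
      have h4 : ‖z‖ * Real.sin (δ - z.arg) = r₁ * Real.sin δ / 2 := by
        rw [Real.sin_sub]
        linear_combination Real.sin δ * hre - Real.cos δ * him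
      have h5 : 0 ≤ r₁ * Real.sin δ / 2 := by positivity
      nlinarith
  rcases le_total 0 δ with h0 | h0
  · obtain ⟨ρ, ψ, a, b, c, d, e⟩ := main δ h0 (lt_of_abs_lt hδ)
    refine ⟨ρ, ψ, a, b, c, ?_⟩
    rw [abs_of_nonneg d, abs_of_nonneg (by linarith : 0 ≤ δ - ψ), abs_of_nonneg h0]
    ring
  · obtain ⟨ρ, ψ, a, b, c, d, e⟩ := main (-δ) (by linarith) (by linarith [neg_lt_of_abs_lt hδ])
    refine ⟨ρ, -ψ, a, by simpa using b, ?_, ?_⟩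
    · rw [Real.sin_neg] at c ⊢
      linarith
    · rw [abs_neg, abs_of_nonneg d, abs_of_nonpos (by linarith : δ - -ψ ≤ 0),
        abs_of_nonpos h0]
      ring

/-- The CN inequality of Bruhat and Tits for a cone of total angle at least `2π`: some
point `m` is a midpoint of `x` and `y` and satisfies the median inequality with respect to
all points `q`. -/
lemma cone_cn {θ : ℝ} (hθ : 2 * Real.pi ≤ θ) {x y : ℝ × ℝ} (hx : 0 ≤ x.1) (hy : 0 ≤ y.1) :
    ∃ m : ℝ × ℝ, 0 ≤ m.1 ∧ m.1 ≤ max x.1 y.1 ∧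
      coneDist θ x m ^ 2 = coneDist θ x y ^ 2 / 4 ∧
      coneDist θ y m ^ 2 = coneDist θ x y ^ 2 / 4 ∧
      ∀ q : ℝ × ℝ, 0 ≤ q.1 → coneDist θ q m ^ 2 ≤
        coneDist θ q x ^ 2 / 2 + coneDist θ q y ^ 2 / 2 - coneDist θ x y ^ 2 / 4 := by
  have hpi := Real.pi_pos
  have hθ0 : 0 < θ := by linarith
  simp only [coneDist_sq]
  by_cases hang : Real.pi ≤ angDist θ x.2 y.2
  · -- the geodesic from `x` to `y` passes through the vertex
    have main : ∀ x y : ℝ × ℝ, 0 ≤ y.1 → y.1 ≤ x.1 → Real.pi ≤ angDist θ x.2 y.2 →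
        ∃ m : ℝ × ℝ, 0 ≤ m.1 ∧ m.1 ≤ x.1 ∧
      x.1 ^ 2 + m.1 ^ 2 - 2 * x.1 * m.1 * tcos (angDist θ x.2 m.2) =
        (x.1 ^ 2 + y.1 ^ 2 - 2 * x.1 * y.1 * tcos (angDist θ x.2 y.2)) / 4 ∧
      y.1 ^ 2 + m.1 ^ 2 - 2 * y.1 * m.1 * tcos (angDist θ y.2 m.2) =
        (x.1 ^ 2 + y.1 ^ 2 - 2 * x.1 * y.1 * tcos (angDist θ x.2 y.2)) / 4 ∧
      ∀ q : ℝ × ℝ, 0 ≤ q.1 →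
        q.1 ^ 2 + m.1 ^ 2 - 2 * q.1 * m.1 * tcos (angDist θ q.2 m.2) ≤
        (q.1 ^ 2 + x.1 ^ 2 - 2 * q.1 * x.1 * tcos (angDist θ q.2 x.2)) / 2 +
        (q.1 ^ 2 + y.1 ^ 2 - 2 * q.1 * y.1 * tcos (angDist θ q.2 y.2)) / 2 -
        (x.1 ^ 2 + y.1 ^ 2 - 2 * x.1 * y.1 * tcos (angDist θ x.2 y.2)) / 4 := by
      rintro ⟨r₁, t₁⟩ ⟨r₂, t₂⟩ h0 hle hang
      simp only at h0 hle hang ⊢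
      refine ⟨((r₁ - r₂) / 2, t₁), by simp only; linarith, by simp only; linarith, ?_, ?_, ?_⟩
      · simp only [angDist_self, tcos_zero, tcos_of_ge hang]; ring
      · rw [angDist_comm] at hang
        simp only [tcos_of_ge hang, angDist_comm t₁ t₂]; ring
      · rintro ⟨s, t⟩ hs
        simp only at hs ⊢
        have htri := angDist_triangle hθ0 t₁ t t₂
        rw [angDist_comm t₁ t] at htri
        have h3 := tcos_add_nonpos (α := angDist θ t t₁) (β := angDist θ t t₂)
          (angDist_nonneg _ _ _) (by linarith)
        rw [tcos_of_ge hang]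
        nlinarith [mul_nonneg (mul_nonneg hs h0) (neg_nonneg.2 h3)]
    rcases le_total y.1 x.1 with h | h
    · obtain ⟨m, a, b, c, d, e⟩ := main x y hy h hang
      exact ⟨m, a, b.trans (le_max_left _ _), c, d, e⟩
    · rw [angDist_comm] at hang
      obtain ⟨m, a, b, c, d, e⟩ := main y x hx h hang
      refine ⟨m, a, b.trans (le_max_right _ _), ?_, ?_, ?_⟩
      · rw [d, angDist_comm x.2]; ring
      · rw [c, angDist_comm x.2]; ring
      · intro q hq
        have := e q hq
        rw [angDist_comm x.2]
        linarith
  · push Not at hang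
    obtain ⟨k, hk, -⟩ := angDist_attained hθ0 y.2 x.2
    rw [angDist_comm] at hang
    set δ := y.2 - x.2 + θ * k with hδ
    rw [hk] at hang
    obtain ⟨ρ, ψ, hρ, hc, hs, hψ⟩ := polar_mid hx hy hang
    have hψ1 : |ψ| ≤ |δ| := by linarith [abs_nonneg (δ - ψ)]
    have hψ2 : |δ - ψ| ≤ |δ| := by linarith [abs_nonneg ψ]
    have hxy : tcos (angDist θ x.2 y.2) = Real.cos δ := by
      rw [angDist_comm, hk, tcos_of_le hang.le, Real.cos_abs]
    have hxm : angDist θ x.2 (x.2 + ψ) = |ψ| := by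
      rw [angDist_of_abs_le hθ0] <;> rw [show x.2 - (x.2 + ψ) = -ψ by ring, abs_neg]
      linarith
    have hym : angDist θ y.2 (x.2 + ψ) = |δ - ψ| := by
      rw [← angDist_add_zmul _ _ k, angDist_of_abs_le hθ0] <;>
        rw [show y.2 + θ * k - (x.2 + ψ) = δ - ψ by rw [hδ]; ring]
      linarith
    have hρsq : ρ ^ 2 = ((x.1 + y.1 * Real.cos δ) / 2) ^ 2 + (y.1 * Real.sin δ / 2) ^ 2 := by
      rw [← hc, ← hs]
      linear_combination (-ρ ^ 2) * Real.sin_sq_add_cos_sq ψ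
    have hρsq' : ρ ^ 2 = (x.1 ^ 2 + y.1 ^ 2 + 2 * x.1 * y.1 * Real.cos δ) / 4 := by
      rw [hρsq]
      linear_combination (y.1 ^ 2 / 4) * Real.sin_sq_add_cos_sq δ
    have hcd : ρ * Real.cos (δ - ψ) = (x.1 * Real.cos δ + y.1) / 2 := by
      rw [Real.cos_sub]
      linear_combination Real.cos δ * hc + Real.sin δ * hs +
        (y.1 / 2) * Real.sin_sq_add_cos_sq δ
    refine ⟨(ρ, x.2 + ψ), hρ, ?_, ?_, ?_, ?_⟩
    · simp only
      have hm : ρ ^ 2 ≤ ((x.1 + y.1) / 2) ^ 2 := by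
        rw [hρsq']
        nlinarith [Real.cos_le_one δ, mul_nonneg hx hy]
      have := abs_le_of_sq_le_sq hm (by positivity)
      have h1 := le_max_left x.1 y.1
      have h2 := le_max_right x.1 y.1
      linarith [le_abs_self ρ]
    · simp only
      rw [hxm, hxy, tcos_of_le (by linarith), Real.cos_abs]
      linear_combination hρsq' - 2 * x.1 * hc
    · simp only
      rw [hym, hxy, tcos_of_le (by linarith), Real.cos_abs]
      linear_combination hρsq' - 2 * y.1 * hcd
    · rintro ⟨s, t⟩ hs0
      simp only at hs0 ⊢
      rw [hxy]
      suffices h : x.1 * tcos (angDist θ t x.2) + y.1 * tcos (angDist θ t y.2) ≤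
          2 * ρ * tcos (angDist θ t (x.2 + ψ)) by
        nlinarith [mul_le_mul_of_nonneg_left h hs0]
      obtain ⟨l, hl, -⟩ := angDist_attained hθ0 t (x.2 + ψ)
      set τ := t - (x.2 + ψ) + θ * l with hτ
      rw [hl]
      have htotal : ∀ τ : ℝ, x.1 * Real.cos (τ + ψ) + y.1 * Real.cos (τ + ψ - δ) =
          2 * ρ * Real.cos τ := by
        intro τ
        have e1 : Real.cos τ = Real.cos (τ + ψ) * Real.cos ψ + Real.sin (τ + ψ) * Real.sin ψ := by
          rw [← Real.cos_sub]; congr 1; ring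
        rw [e1, Real.cos_sub (τ + ψ)]
        linear_combination (-2 * Real.cos (τ + ψ)) * hc - 2 * Real.sin (τ + ψ) * hs
      by_cases hμ : |τ| ≤ Real.pi
      · rw [tcos_of_le hμ, Real.cos_abs, ← htotal]
        have f1 : tcos (angDist θ t x.2) ≤ Real.cos (τ + ψ) := by
          have e : t - x.2 + θ * l = τ + ψ := by rw [hτ]; ring
          rw [← e]
          apply tcos_angDist_le hθ
          rw [e]
          linarith [abs_add_le τ ψ]
        have f2 : tcos (angDist θ t y.2) ≤ Real.cos (τ + ψ - δ) := by
          have e : t - y.2 + θ * ((l - k : ℤ) : ℝ) = τ + ψ - δ := by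
            rw [hτ, hδ]; push_cast; ring
          rw [← e]
          apply tcos_angDist_le hθ
          rw [e, show τ + ψ - δ = τ - (δ - ψ) by ring]
          linarith [abs_sub τ (δ - ψ)]
        nlinarith [mul_le_mul_of_nonneg_left f1 hx, mul_le_mul_of_nonneg_left f2 hy]
      · push Not at hμ
        rw [tcos_of_ge hμ.le]
        have f1 : tcos (angDist θ t x.2) ≤ -Real.cos ψ := by
          have h1 := angDist_triangle hθ0 t x.2 (x.2 + ψ)
          rw [hxm, hl] at h1
          have h2 := tcos_anti (a := Real.pi - |ψ|) (b := angDist θ t x.2) (by linarith)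
            (by linarith)
          rw [tcos_of_le (a := Real.pi - |ψ|) (by linarith [abs_nonneg ψ]), Real.cos_pi_sub,
            Real.cos_abs] at h2
          exact h2
        have f2 : tcos (angDist θ t y.2) ≤ -Real.cos (δ - ψ) := by
          have h1 := angDist_triangle hθ0 t y.2 (x.2 + ψ)
          rw [hym, hl] at h1
          have h2 := tcos_anti (a := Real.pi - |δ - ψ|) (b := angDist θ t y.2) (by linarith)
            (by linarith)
          rw [tcos_of_le (a := Real.pi - |δ - ψ|) (by linarith [abs_nonneg (δ - ψ)]),
            Real.cos_pi_sub, Real.cos_abs] at h2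
          exact h2
        have h0 := htotal 0
        rw [zero_add, Real.cos_zero, show ψ - δ = -(δ - ψ) by ring, Real.cos_neg] at h0
        nlinarith [mul_le_mul_of_nonneg_left f1 hx, mul_le_mul_of_nonneg_left f2 hy]

/-! ### Local convexity of the metric -/

/-- `m` is a metric midpoint of `x` and `y`. -/
def Mid {S : Type} [MetricSpace S] (x y m : S) : Prop :=
  dist x m = dist x y / 2 ∧ dist y m = dist x y / 2

lemma Mid.symm {S : Type} [MetricSpace S] {x y m : S} (h : Mid x y m) : Mid y x m := by
  rw [Mid, dist_comm y x]; exact ⟨h.2, h.1⟩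

/-- Polar coordinates around a conical point: the radius is the distance to it. -/
lemma cone_chart {S : Type} [MetricSpace S] (hS : ESCS S) {s : S} (hs : s ∈ hS.conical) :
    ∃ ε > (0:ℝ), ∃ f : S → ℝ × ℝ, f s = (0, 0) ∧
      (∀ y ∈ ball s ε, ∀ z ∈ ball s ε, coneDist (hS.angle s) (f y) (f z) = dist y z) ∧
      (∀ y ∈ ball s ε, (f y).1 = dist s y ∧ (f y).2 ∈ Ico 0 (hS.angle s)) ∧
      (∀ r t : ℝ, 0 < r → r < ε → t ∈ Ico 0 (hS.angle s) → ∃ y ∈ ball s ε, f y = (r, t)) := by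
  obtain ⟨ε, hε, f, hf0, hiso, himg⟩ := hS.cone_at s hs
  have hθ := hS.angle_gt s hs
  have hpi := Real.pi_pos
  refine ⟨ε, hε, f, hf0, hiso, ?_, ?_⟩
  · intro y hy
    have hmem : f y ∈ insert ((0:ℝ), (0:ℝ)) (Set.Ioo 0 ε ×ˢ Set.Ico 0 (hS.angle s)) := by
      rw [← himg]; exact mem_image_of_mem f hy
    have h1 : 0 ≤ (f y).1 ∧ (f y).2 ∈ Ico 0 (hS.angle s) := by
      rcases hmem with h | h
      · rw [h]; exact ⟨le_rfl, le_rfl, by simp only; linarith⟩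
      · exact ⟨h.1.1.le, h.2⟩
    refine ⟨?_, h1.2⟩
    rw [← hiso s (mem_ball_self hε) y hy, hf0]
    symm
    apply coneDist_eq_of_sq le_rfl h1.1 h1.1
    simp
  · intro r t hr hrε ht
    have : (r, t) ∈ f '' ball s ε := by
      rw [himg]; exact Or.inr ⟨⟨hr, hrε⟩, ht⟩
    obtain ⟨y, hy, e⟩ := this
    exact ⟨y, hy, e⟩

lemma sq_midpoint {E : Type} [NormedAddCommGroup E] [InnerProductSpace ℝ E] (x y q : E) :
    dist q (midpoint ℝ x y) ^ 2 = dist q x ^ 2 / 2 + dist q y ^ 2 / 2 - dist x y ^ 2 / 4 := by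
  have h := parallelogram_law_with_norm ℝ (q - x) (q - y)
  have e1 : q - x + (q - y) = (2 : ℝ) • (q - midpoint ℝ x y) := by
    rw [midpoint_eq_smul_add, smul_sub, smul_smul]
    norm_num
    rw [two_smul]; abel
  have e2 : q - x - (q - y) = y - x := by abel
  rw [e1, e2, norm_smul, Real.norm_eq_abs, abs_of_pos (by norm_num : (0:ℝ) < 2)] at h
  rw [dist_eq_norm, dist_eq_norm, dist_eq_norm, dist_eq_norm, norm_sub_rev x y]
  nlinarith

/-- Every point has a ball in which midpoints exist and satisfy the CN inequality. -/
lemma local_cn {S : Type} [MetricSpace S] (hS : ESCS S) (s : S) :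
    ∃ ε > (0:ℝ), ∀ x ∈ ball s ε, ∀ y ∈ ball s ε, ∃ m ∈ ball s ε, Mid x y m ∧
      ∀ q ∈ ball s ε,
        dist q m ^ 2 ≤ dist q x ^ 2 / 2 + dist q y ^ 2 / 2 - dist x y ^ 2 / 4 := by
  by_cases hs : s ∈ hS.conical
  · obtain ⟨ε, hε, f, hf0, hiso, hr, hsurj⟩ := cone_chart hS hs
    have hθ := hS.angle_gt s hs
    refine ⟨ε, hε, fun x hx y hy => ?_⟩
    have hnn : ∀ z ∈ ball s ε, 0 ≤ (f z).1 := fun z hz => by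
      rw [(hr z hz).1]; exact dist_nonneg
    obtain ⟨m, hm0, hmax, h1, h2, h3⟩ := cone_cn hθ.le (hnn x hx) (hnn y hy)
    -- a point of the surface with the polar coordinates of `m`
    have hex : ∃ z ∈ ball s ε, ∀ q : ℝ × ℝ,
        coneDist (hS.angle s) q (f z) ^ 2 = coneDist (hS.angle s) q m ^ 2 := by
      rcases eq_or_lt_of_le hm0 with h0 | h0
      · refine ⟨s, mem_ball_self hε, fun q => ?_⟩
        rw [hf0, coneDist_sq, coneDist_sq, ← h0]
        simp
      · have hlt : m.1 < ε := by
          refine lt_of_le_of_lt hmax (max_lt ?_ ?_)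
          · rw [(hr x hx).1, dist_comm]; exact hx
          · rw [(hr y hy).1, dist_comm]; exact hy
        obtain ⟨z, hz, e⟩ := hsurj m.1 (angMod (hS.angle s) m.2) h0 hlt
          (angMod_mem (by linarith [Real.pi_pos]) _)
        refine ⟨z, hz, fun q => ?_⟩
        rw [e, coneDist_sq, coneDist_sq]
        simp only [angDist_angMod_right]
    obtain ⟨z, hz, hq⟩ := hex
    rw [← hq, hiso x hx z hz, hiso x hx y hy] at h1
    rw [← hq, hiso y hy z hz, hiso x hx y hy] at h2
    refine ⟨z, hz, ⟨?_, ?_⟩, ?_⟩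
    · refine (pow_left_inj₀ dist_nonneg (by positivity) two_ne_zero).1 ?_
      rw [h1]; ring
    · refine (pow_left_inj₀ dist_nonneg (by positivity) two_ne_zero).1 ?_
      rw [h2]; ring
    · intro q hqq
      have := h3 (f q) (hnn q hqq)
      rwa [← hq, hiso q hqq z hz, hiso x hx y hy, hiso q hqq x hx, hiso q hqq y hy] at this
  · obtain ⟨ε, hε, f, hiso, himg⟩ := hS.euclidean_at s hs
    refine ⟨ε, hε, fun x hx y hy => ?_⟩
    have hmem : ∀ z ∈ ball s ε, f z ∈ ball (f s) ε := fun z hz => by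
      rw [← himg]; exact mem_image_of_mem f hz
    have : midpoint ℝ (f x) (f y) ∈ f '' ball s ε := by
      rw [himg]
      exact (convex_ball (f s) ε).midpoint_mem (hmem x hx) (hmem y hy)
    obtain ⟨m, hm, e⟩ := this
    have key : ∀ q ∈ ball s ε,
        dist q m ^ 2 = dist q x ^ 2 / 2 + dist q y ^ 2 / 2 - dist x y ^ 2 / 4 := by
      intro q hq
      rw [← hiso q hq m hm, e, sq_midpoint, hiso q hq x hx, hiso q hq y hy, hiso x hx y hy]
    refine ⟨m, hm, ⟨?_, ?_⟩, fun q hq => (key q hq).le⟩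
    · refine (pow_left_inj₀ dist_nonneg (by positivity) two_ne_zero).1 ?_
      rw [key x hx, dist_self]; ring
    · refine (pow_left_inj₀ dist_nonneg (by positivity) two_ne_zero).1 ?_
      rw [key y hy, dist_self, dist_comm y x]; ring

/-- Uniform local Busemann convexity: in balls of radius `R` midpoints exist and midpoint
maps are convex. -/
structure LocConv (S : Type) [MetricSpace S] (R : ℝ) : Prop where
  pos : 0 < R
  mid : ∀ o x y : S, x ∈ ball o R → y ∈ ball o R → ∃ m, Mid x y m
  conv : ∀ o x y x' y' m m' : S, x ∈ ball o R → y ∈ ball o R → x' ∈ ball o R →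
    y' ∈ ball o R → Mid x y m → Mid x' y' m' → dist m m' ≤ (dist x x' + dist y y') / 2

lemma exists_locConv {S : Type} [MetricSpace S] (hS : ESCS S) : ∃ R, LocConv S R := by
  have := hS.compact
  choose ε hε hcn using local_cn hS
  obtain ⟨δ, hδ, hleb⟩ := lebesgue_number_lemma_of_metric (s := (univ : Set S))
    (c := fun s => ball s (ε s)) isCompact_univ (fun s => isOpen_ball)
    (fun s _ => mem_iUnion.2 ⟨s, mem_ball_self (hε s)⟩)
  have hmidball : ∀ {o x y m : S} {r : ℝ}, x ∈ ball o r → y ∈ ball o r → Mid x y m →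
      m ∈ ball o (2 * r) := by
    intro o x y m r hx hy hm
    rw [mem_ball] at *
    have h1 := dist_triangle m x o
    have h2 := dist_triangle_right x y o
    rw [dist_comm m x, hm.1] at h1
    linarith
  -- the median inequality holds for every midpoint, midpoints being unique
  have hCN : ∀ o x y m q : S, x ∈ ball o (δ / 2) → y ∈ ball o (δ / 2) → q ∈ ball o (δ / 2) →
      Mid x y m →
      dist q m ^ 2 ≤ dist q x ^ 2 / 2 + dist q y ^ 2 / 2 - dist x y ^ 2 / 4 := by
    intro o x y m q hx hy hq hm
    obtain ⟨s, hs⟩ := hleb o (mem_univ o)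
    have hsub : ball o (δ / 2) ⊆ ball o δ := ball_subset_ball (by linarith)
    obtain ⟨m', hm', hmid', hcn'⟩ := hcn s x (hs (hsub hx)) y (hs (hsub hy))
    have hmm : m ∈ ball s (ε s) := hs (by
      have := hmidball hx hy hm
      rwa [mul_div_cancel₀ δ (by norm_num : (2:ℝ) ≠ 0)] at this)
    have h0 := hcn' m hmm
    rw [dist_comm m x, dist_comm m y, hm.1, hm.2] at h0
    have h1 : dist m m' ^ 2 ≤ 0 := by nlinarith
    have h2 : dist m m' = 0 := by
      have := sq_nonneg (dist m m')
      exact pow_eq_zero_iff two_ne_zero |>.1 (le_antisymm h1 this)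
    rw [dist_eq_zero.1 h2]
    exact hcn' q (hs (hsub hq))
  have hmidex : ∀ o x y : S, x ∈ ball o (δ / 2) → y ∈ ball o (δ / 2) → ∃ m, Mid x y m := by
    intro o x y hx hy
    obtain ⟨s, hs⟩ := hleb o (mem_univ o)
    have hsub : ball o (δ / 2) ⊆ ball o δ := ball_subset_ball (by linarith)
    obtain ⟨m', hm', hmid', -⟩ := hcn s x (hs (hsub hx)) y (hs (hsub hy))
    exact ⟨m', hmid'⟩
  have hsub : ∀ {o z : S}, z ∈ ball o (δ / 4) → z ∈ ball o (δ / 2) := fun {o z} hz =>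
    ball_subset_ball (by linarith) hz
  -- triangles with a common vertex
  have htri : ∀ o x y z m n : S, x ∈ ball o (δ / 4) → y ∈ ball o (δ / 4) → z ∈ ball o (δ / 4) →
      Mid x y m → Mid x z n → dist m n ≤ dist y z / 2 := by
    intro o x y z m n hx hy hz hm hn
    have hmb : m ∈ ball o (δ / 2) := by
      have := hmidball hx hy hm
      rwa [show 2 * (δ / 4) = δ / 2 by ring] at this
    have h1 := hCN o x z n m (hsub hx) (hsub hz) hmb hn
    have h2 := hCN o x y m z (hsub hx) (hsub hy) (hsub hz) hm
    rw [dist_comm m x, hm.1, dist_comm m z] at h1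
    rw [dist_comm z x, dist_comm z y] at h2
    have h3 : dist m n ^ 2 ≤ (dist y z / 2) ^ 2 := by nlinarith
    have := abs_le_of_sq_le_sq h3 (by positivity)
    exact (le_abs_self _).trans this
  refine ⟨δ / 4, by linarith, fun o x y hx hy => hmidex o x y (hsub hx) (hsub hy), ?_⟩
  intro o x y x' y' m m' hx hy hx' hy' hm hm'
  obtain ⟨n, hn⟩ := hmidex o x y' (hsub hx) (hsub hy')
  have h1 := htri o x y y' m n hx hy hy' hm hn
  have h2 := htri o y' x x' n m' hy' hx hx' hn.symm hm'.symm
  linarith [dist_triangle m n m']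

lemma LocConv.unique {S : Type} [MetricSpace S] {R : ℝ} (h : LocConv S R) {x y m m' : S}
    (hxy : dist x y < R) (hm : Mid x y m) (hm' : Mid x y m') : m = m' := by
  have := h.conv x x y x y m m' (mem_ball_self h.pos) (by rwa [mem_ball, dist_comm])
    (mem_ball_self h.pos) (by rwa [mem_ball, dist_comm]) hm hm'
  simp only [dist_self, add_zero, zero_div] at this
  exact dist_le_zero.1 this

/-- Geodesics ending at `s` can be prolonged a little. -/
lemma local_ext {S : Type} [MetricSpace S] (hS : ESCS S) (s : S) :
    ∃ ε > (0:ℝ), ∀ a ∈ ball s ε, a ≠ s → ∀ ρ : ℝ, 0 < ρ → ρ < ε →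
      ∃ b, dist s b = ρ ∧ dist a b = dist a s + ρ := by
  have hpi := Real.pi_pos
  by_cases hs : s ∈ hS.conical
  · obtain ⟨ε, hε, f, hf0, hiso, hr, hsurj⟩ := cone_chart hS hs
    have hθ := hS.angle_gt s hs
    have hθ0 : 0 < hS.angle s := by linarith
    refine ⟨ε, hε, fun a ha hne ρ h0 h1 => ?_⟩
    obtain ⟨b, hb, e⟩ := hsurj ρ (angMod (hS.angle s) ((f a).2 + Real.pi)) h0 h1
      (angMod_mem hθ0 _)
    have hb1 : dist s b = ρ := by rw [← (hr b hb).1, e]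
    refine ⟨b, hb1, ?_⟩
    rw [← hiso a ha b hb]
    have ha1 := (hr a ha).1
    rw [dist_comm a s]
    apply coneDist_eq_of_sq
    · rw [ha1]; exact dist_nonneg
    · rw [e]; exact h0.le
    · positivity
    · rw [e]
      simp only [angDist_angMod_right]
      rw [angDist_of_abs_le hθ0] <;>
        rw [show (f a).2 - ((f a).2 + Real.pi) = -Real.pi by ring, abs_neg, abs_of_pos hpi]
      · rw [tcos_of_ge le_rfl, ha1]; ring
      · linarith
  · obtain ⟨ε, hε, f, hiso, himg⟩ := hS.euclidean_at s hs
    refine ⟨ε, hε, fun a ha hne ρ h0 h1 => ?_⟩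
    have hd : 0 < dist a s := dist_pos.2 hne
    have hfa : ‖f s - f a‖ = dist a s := by
      rw [← dist_eq_norm, hiso s (mem_ball_self hε) a ha, dist_comm]
    have hmem : f s + (ρ / dist a s) • (f s - f a) ∈ f '' ball s ε := by
      rw [himg, mem_ball, dist_eq_norm, add_sub_cancel_left, norm_smul, hfa,
        Real.norm_eq_abs, abs_of_pos (by positivity), div_mul_cancel₀ _ hd.ne']
      exact h1
    obtain ⟨b, hb, e⟩ := hmem
    refine ⟨b, ?_, ?_⟩
    · rw [← hiso s (mem_ball_self hε) b hb, e, dist_comm, dist_eq_norm, add_sub_cancel_left,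
        norm_smul, hfa, Real.norm_eq_abs, abs_of_pos (by positivity), div_mul_cancel₀ _ hd.ne']
    · rw [← hiso a ha b hb, e, dist_comm, dist_eq_norm,
        show f s + (ρ / dist a s) • (f s - f a) - f a = (1 + ρ / dist a s) • (f s - f a) by
          rw [add_smul, one_smul]; abel,
        norm_smul, hfa, Real.norm_eq_abs, abs_of_pos (by positivity)]
      field_simp

/-! ### Discrete geodesics -/

/-- `x 0, …, x N` is a discrete geodesic of step `σ`: every inner point is a midpoint of its
neighbours. -/
def Bal {S : Type} [MetricSpace S] (N : ℕ) (σ : ℝ) (x : ℕ → S) : Prop :=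
  (∀ i, i < N → dist (x i) (x (i + 1)) = σ) ∧
    ∀ i, i + 2 ≤ N → dist (x i) (x (i + 2)) = 2 * σ

lemma Bal.mid {S : Type} [MetricSpace S] {N : ℕ} {σ : ℝ} {x : ℕ → S} (h : Bal N σ x) {i : ℕ}
    (hi : i + 2 ≤ N) : Mid (x i) (x (i + 2)) (x (i + 1)) := by
  have h1 := h.1 i (by omega)
  have h2 := h.1 (i + 1) (by omega)
  have h3 := h.2 i hi
  refine ⟨by rw [h1, h3]; ring, ?_⟩
  rw [dist_comm, h2, h3]; ring

lemma Bal.shift {S : Type} [MetricSpace S] {N : ℕ} {σ : ℝ} {x : ℕ → S} (h : Bal N σ x)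
    (k M : ℕ) (hk : k + M ≤ N) : Bal M σ (fun i => x (k + i)) :=
  ⟨fun i hi => h.1 (k + i) (by omega), fun i hi => h.2 (k + i) (by omega)⟩

lemma bal_const {S : Type} [MetricSpace S] (N : ℕ) (o : S) : Bal N 0 (fun _ => o) :=
  ⟨fun _ _ => dist_self _, fun _ _ => by simp⟩

/-- A midpoint-convex sequence lies below its chord. -/
lemma discrete_convex {N : ℕ} {D : ℕ → ℝ}
    (h : ∀ i, i + 2 ≤ N → D (i + 1) ≤ (D i + D (i + 2)) / 2) {i : ℕ} (hi : i ≤ N) :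
    N * D i ≤ (N - i) * D 0 + i * D N := by
  rcases Nat.eq_zero_or_pos N with rfl | hN
  · have : i = 0 := by omega
    subst this; simp
  have hN' : (0:ℝ) < N := by exact_mod_cast hN
  set E : ℕ → ℝ := fun i => N * D i - ((N - i) * D 0 + i * D N) with hE
  have hconv : ∀ i, i + 2 ≤ N → E (i + 1) ≤ (E i + E (i + 2)) / 2 := by
    intro i hi
    have := h i hi
    simp only [hE]; push_cast
    nlinarith
  have hE0 : E 0 = 0 := by simp [hE]
  have hEN : E N = 0 := by simp [hE]
  -- the slopes seen from `0` are increasing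
  have hslope : ∀ i : ℕ, i + 1 ≤ N → (i + 1) * E i ≤ i * E (i + 1) := by
    intro i
    induction i with
    | zero => intro _; simp [hE0]
    | succ k ih =>
      intro hk
      have h1 := ih (by omega)
      have h2 := hconv k (by omega)
      push_cast
      nlinarith
  have hpos : ¬ 0 < E i := by
    intro hp
    have : ∀ j : ℕ, i + j ≤ N → 0 < E (i + j) := by
      intro j
      induction j with
      | zero => intro _; simpa using hp
      | succ k ih =>
        intro hk
        have h1 := ih (by omega)
        have h2 := hslope (i + k) (by omega)
        have h3 : (0:ℝ) ≤ ((i + k : ℕ) : ℝ) := Nat.cast_nonneg _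
        by_contra hcon
        push Not at hcon
        have : E (i + k + 1) ≤ 0 := hcon
        nlinarith
    have h4 := this (N - i) (by omega)
    rw [Nat.add_sub_cancel' hi, hEN] at h4
    exact lt_irrefl _ h4
  simp only [hE] at hpos
  linarith

/-- The distance between two discrete geodesics staying close is convex. -/
lemma Bal.convex {S : Type} [MetricSpace S] {R : ℝ} (hR : LocConv S R) {N : ℕ} {σ σ' : ℝ}
    {x y : ℕ → S} (hx : Bal N σ x) (hy : Bal N σ' y) (hσ : σ < R / 2)
    (hD : ∀ i ≤ N, dist (x i) (y i) < R / 2) {i : ℕ} (hi : i + 2 ≤ N) :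
    dist (x (i + 1)) (y (i + 1)) ≤ (dist (x i) (y i) + dist (x (i + 2)) (y (i + 2))) / 2 := by
  have hp := hR.pos
  have e1 : dist (x i) (x (i + 1)) < R / 2 := by rw [hx.1 i (by omega)]; exact hσ
  have e2 : dist (x (i + 2)) (x (i + 1)) < R / 2 := by
    rw [dist_comm, hx.1 (i + 1) (by omega)]; exact hσ
  have d1 := hD i (by omega)
  have d2 := hD (i + 2) (by omega)
  refine hR.conv (x (i + 1)) _ _ _ _ _ _ ?_ ?_ ?_ ?_ (hx.mid hi) (hy.mid hi)
  · rw [mem_ball]; linarith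
  · rw [mem_ball]; linarith
  · rw [mem_ball]
    have := dist_triangle_left (y i) (x (i + 1)) (x i)
    linarith
  · rw [mem_ball]
    have := dist_triangle_left (y (i + 2)) (x (i + 1)) (x (i + 2))
    linarith

lemma Bal.dist_le {S : Type} [MetricSpace S] {R : ℝ} (hR : LocConv S R) {N : ℕ} {σ σ' : ℝ}
    {x y : ℕ → S} (hx : Bal N σ x) (hy : Bal N σ' y) (hσ : σ < R / 2)
    (hD : ∀ i ≤ N, dist (x i) (y i) < R / 2) {i : ℕ} (hi : i ≤ N) :
    N * dist (x i) (y i) ≤ (N - i) * dist (x 0) (y 0) + i * dist (x N) (y N) :=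
  discrete_convex (D := fun i => dist (x i) (y i))
    (fun _ hj => hx.convex hR hy hσ hD hj) hi

lemma Bal.step_nonneg {S : Type} [MetricSpace S] {N : ℕ} {σ : ℝ} {x : ℕ → S} (h : Bal N σ x)
    (hN : 0 < N) : 0 ≤ σ := by rw [← h.1 0 hN]; exact dist_nonneg

lemma Bal.dist_zero_le {S : Type} [MetricSpace S] {N : ℕ} {σ : ℝ} {x : ℕ → S} (h : Bal N σ x)
    {i : ℕ} (hi : i ≤ N) : dist (x 0) (x i) ≤ i * σ := by
  induction i with
  | zero => simp
  | succ k ih =>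
    have h1 := ih (by omega)
    have h2 := h.1 k (by omega)
    have h3 := dist_triangle (x 0) (x k) (x (k + 1))
    push_cast
    linarith

/-- Short discrete geodesics are minimizing. -/
lemma Bal.dist_zero_eq {S : Type} [MetricSpace S] {R : ℝ} (hR : LocConv S R) {N : ℕ} {σ : ℝ}
    {x : ℕ → S} (h : Bal N σ x) (hσ : N * σ < R / 2) {i : ℕ} (hi : i ≤ N) :
    dist (x 0) (x i) = i * σ := by
  have hp := hR.pos
  rcases Nat.eq_zero_or_pos N with rfl | hN
  · have : i = 0 := by omega
    subst this; simp
  have hσ0 := h.step_nonneg hN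
  have hD : ∀ j ≤ N, dist (x 0) (x j) < R / 2 := by
    intro j hj
    have h1 := h.dist_zero_le hj
    have h2 : (j:ℝ) ≤ N := by exact_mod_cast hj
    nlinarith
  -- the distance to `x 0` is convex with initial increment `σ`
  have hinc : ∀ j, j + 1 ≤ N → σ ≤ dist (x 0) (x (j + 1)) - dist (x 0) (x j) := by
    intro j
    induction j with
    | zero => intro h1; simp [h.1 0 (by omega)]
    | succ k ih =>
      intro hk
      have h1 := ih (by omega)
      have h2 := (bal_const N (x 0)).convex hR h (by linarith) hD (i := k) (by omega)
      linarith
  have hge : ∀ j, j ≤ N → j * σ ≤ dist (x 0) (x j) := by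
    intro j
    induction j with
    | zero => intro _; simp
    | succ k ih =>
      intro hk
      have h1 := ih (by omega)
      have h2 := hinc k hk
      push_cast
      linarith
  exact le_antisymm (h.dist_zero_le hi) (hge i hi)

lemma Bal.dist_eq {S : Type} [MetricSpace S] {R : ℝ} (hR : LocConv S R) {N : ℕ} {σ : ℝ}
    {x : ℕ → S} (h : Bal N σ x) {i k : ℕ} (hσ : k * σ < R / 2) (hi : i + k ≤ N) :
    dist (x i) (x (i + k)) = k * σ :=
  (h.shift i k hi).dist_zero_eq hR hσ le_rfl

/-- A point at distances `d` and `e` from two points at distance `D` is a midpoint of them if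
`d ^ 2 + e ^ 2` is minimal. -/
lemma mid_of_energy {d e D : ℝ} (h1 : D ≤ d + e) (hd : 0 ≤ D)
    (h2 : d ^ 2 + e ^ 2 ≤ D ^ 2 / 2) : d = D / 2 ∧ e = D / 2 := by
  have : (d - e) ^ 2 ≤ 0 := by nlinarith
  have h3 : d - e = 0 := by
    exact pow_eq_zero_iff two_ne_zero |>.1 (le_antisymm this (sq_nonneg _))
  have h4 : d = e := by linarith
  subst h4
  have : d ≤ D / 2 := by
    by_contra hc
    push Not at hc
    nlinarith
  constructor <;> linarith

/-- The endpoints of a discrete geodesic can be moved slightly. The new discrete geodesic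
minimizes the energy among nearby sequences with the prescribed endpoints. -/
lemma Bal.exists_near {S : Type} [MetricSpace S] [CompactSpace S] {R : ℝ} (hR : LocConv S R)
    {N : ℕ} (hN : 0 < N) {σ : ℝ} {x : ℕ → S} (hx : Bal N σ x) (hσ : σ < R / 8) (a b : S)
    (ha : dist a (x 0) < R / 8) (hb : dist b (x N) < R / 8) :
    ∃ (σ' : ℝ) (y : ℕ → S), Bal N σ' y ∧ y 0 = a ∧ y N = b ∧
      ∀ i ≤ N, N * dist (y i) (x i) ≤ (N - i) * dist a (x 0) + i * dist b (x N) := by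
  have hp := hR.pos
  have hN' : (0:ℝ) < N := by exact_mod_cast hN
  set Z : Set (ℕ → S) := {y | y 0 = a ∧ y N = b ∧
      ∀ i ≤ N, N * dist (y i) (x i) ≤ (N - i) * dist a (x 0) + i * dist b (x N)} with hZ
  have hZc : IsCompact Z := by
    apply IsClosed.isCompact
    have e : Z = {y | y 0 = a} ∩ ({y | y N = b} ∩ ⋂ i, ⋂ (_ : i ≤ N), {y : ℕ → S |
        N * dist (y i) (x i) ≤ (N - i) * dist a (x 0) + i * dist b (x N)}) := by
      ext y; simp [hZ]
    rw [e]
    refine (isClosed_eq (continuous_apply 0) continuous_const).inter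
      ((isClosed_eq (continuous_apply N) continuous_const).inter ?_)
    refine isClosed_iInter fun i => isClosed_iInter fun _ => ?_
    exact isClosed_le (by fun_prop) continuous_const
  have hZn : Z.Nonempty := by
    refine ⟨fun i => if i = 0 then a else if i = N then b else x i, ?_, ?_, ?_⟩
    · simp
    · simp [hN.ne']
    · intro i hi
      have hi' : (0:ℝ) ≤ N - i := by rw [sub_nonneg]; exact_mod_cast hi
      by_cases h0 : i = 0
      · subst h0; simp
      by_cases h1 : i = N
      · subst h1; simp [h0]
      simp only [h0, h1, if_false, dist_self, mul_zero]
      positivity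
  set En : (ℕ → S) → ℝ := fun y => ∑ j ∈ Finset.range N, dist (y j) (y (j + 1)) ^ 2 with hEn
  have hcont : Continuous En := by
    simp only [hEn]
    fun_prop
  obtain ⟨y, hyZ, hmin⟩ := hZc.exists_isMinOn hZn hcont.continuousOn
  obtain ⟨hy0, hyN, hyd⟩ := hyZ
  have hclose : ∀ i ≤ N, dist (y i) (x i) < R / 8 := by
    intro i hi
    have h1 := hyd i hi
    have hi' : (0:ℝ) ≤ N - i := by rw [sub_nonneg]; exact_mod_cast hi
    have hi0 : (0:ℝ) ≤ i := Nat.cast_nonneg i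
    by_contra hc
    push Not at hc
    rcases hi'.lt_or_eq with h2 | h2
    · nlinarith
    · nlinarith
  have hmid : ∀ i, i + 2 ≤ N → Mid (y i) (y (i + 2)) (y (i + 1)) := by
    intro i hi
    have c0 := hclose i (by omega)
    have c2 := hclose (i + 2) (by omega)
    have s0 := hx.1 i (by omega)
    have s1 := hx.1 (i + 1) (by omega)
    have b0 : y i ∈ ball (x (i + 1)) R := by
      rw [mem_ball]
      have := dist_triangle (y i) (x i) (x (i + 1))
      linarith
    have b2 : y (i + 2) ∈ ball (x (i + 1)) R := by
      rw [mem_ball]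
      have := dist_triangle_right (y (i + 2)) (x (i + 1)) (x (i + 2))
      linarith
    have bx0 : x i ∈ ball (x (i + 1)) R := by rw [mem_ball]; linarith
    have bx2 : x (i + 2) ∈ ball (x (i + 1)) R := by rw [mem_ball, dist_comm]; linarith
    obtain ⟨m, hm⟩ := hR.mid (x (i + 1)) (y i) (y (i + 2)) b0 b2
    have hmd := hR.conv (x (i + 1)) _ _ _ _ _ _ b0 b2 bx0 bx2 hm (hx.mid hi)
    have hz : Function.update y (i + 1) m ∈ Z := by
      refine ⟨?_, ?_, ?_⟩
      · rw [Function.update_of_ne (by omega)]; exact hy0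
      · rw [Function.update_of_ne (by omega)]; exact hyN
      · intro j hj
        by_cases hji : j = i + 1
        · subst hji
          rw [Function.update_self]
          have h0 := hyd i (by omega)
          have h2 := hyd (i + 2) (by omega)
          push_cast at h0 h2 ⊢
          nlinarith
        · rw [Function.update_of_ne hji]; exact hyd j hj
    have hle : En y ≤ En (Function.update y (i + 1) m) := hmin hz
    simp only [hEn] at hle
    have hsplit : ∀ z : ℕ → S, ∑ j ∈ Finset.range N, dist (z j) (z (j + 1)) ^ 2 =
        dist (z i) (z (i + 1)) ^ 2 + (dist (z (i + 1)) (z (i + 2)) ^ 2 +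
        ∑ j ∈ ((Finset.range N).erase i).erase (i + 1), dist (z j) (z (j + 1)) ^ 2) := by
      intro z
      rw [← Finset.add_sum_erase (Finset.range N) _ (Finset.mem_range.2 (by omega : i < N)),
        ← Finset.add_sum_erase ((Finset.range N).erase i) _
          (Finset.mem_erase.2 ⟨by omega, Finset.mem_range.2 (by omega : i + 1 < N)⟩)]
    rw [hsplit, hsplit (Function.update y (i + 1) m)] at hle
    have hrest : ∑ j ∈ ((Finset.range N).erase i).erase (i + 1),
        dist (Function.update y (i + 1) m j) (Function.update y (i + 1) m (j + 1)) ^ 2 =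
        ∑ j ∈ ((Finset.range N).erase i).erase (i + 1), dist (y j) (y (j + 1)) ^ 2 := by
      apply Finset.sum_congr rfl
      intro j hj
      simp only [Finset.mem_erase] at hj
      rw [Function.update_of_ne (by omega), Function.update_of_ne (by omega)]
    rw [hrest, Function.update_self, Function.update_of_ne (by omega),
      Function.update_of_ne (by omega), dist_comm m, hm.1, hm.2] at hle
    have := mid_of_energy (d := dist (y i) (y (i + 1))) (e := dist (y (i + 1)) (y (i + 2)))
      (dist_triangle _ _ _) dist_nonneg (by nlinarith)
    exact ⟨this.1, by rw [dist_comm]; exact this.2⟩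
  have hstep : ∀ i, i < N → dist (y i) (y (i + 1)) = dist (y 0) (y 1) := by
    intro i
    induction i with
    | zero => intro _; rfl
    | succ k ih =>
      intro hk
      have h1 := ih (by omega)
      have h2 := hmid k (by omega)
      rw [← h1, h2.1, dist_comm (y (k + 1)), h2.2]
  refine ⟨dist (y 0) (y 1), y, ⟨hstep, ?_⟩, hy0, hyN, hyd⟩
  intro i hi
  have h1 := hstep i (by omega)
  have h2 := (hmid i hi).1
  linarith

/-! ### Local geodesics of constant speed on `[0, 1]` -/

/-- On `[0, 1]`, the curve `c` is a local geodesic of constant speed `v`, isometric up to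
scaling on all pieces of length at most `R / 8`. -/
def Geo {S : Type} [MetricSpace S] (R v : ℝ) (c : ℝ → S) : Prop :=
  0 ≤ v ∧ ∀ s ∈ Icc (0:ℝ) 1, ∀ t ∈ Icc (0:ℝ) 1, v * |s - t| ≤ R / 8 →
    dist (c s) (c t) = v * |s - t|

lemma Geo.continuousOn {S : Type} [MetricSpace S] {R v : ℝ} (hR : 0 < R) {c : ℝ → S}
    (h : Geo R v c) : ContinuousOn c (Icc 0 1) := by
  rw [Metric.continuousOn_iff]
  intro t ht ε hε
  refine ⟨min (R / 8) ε / (v + 1), div_pos (lt_min (by positivity) hε) (by linarith [h.1]), ?_⟩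
  intro s hs hst
  rw [Real.dist_eq, lt_div_iff₀ (by linarith [h.1])] at hst
  have h1 : v * |s - t| < min (R / 8) ε := by nlinarith [abs_nonneg (s - t)]
  rw [h.2 s hs t ht (h1.le.trans (min_le_left _ _))]
  exact h1.trans_le (min_le_right _ _)

lemma Geo.bal {S : Type} [MetricSpace S] {R v : ℝ} {c : ℝ → S} (h : Geo R v c)
    {N : ℕ} (hN : 0 < N) (hv : 2 * (v / N) ≤ R / 8) : Bal N (v / N) (fun i => c (i / N)) := by
  have hN' : (0:ℝ) < N := by exact_mod_cast hN
  have hmem : ∀ i : ℕ, i ≤ N → (i:ℝ) / N ∈ Icc (0:ℝ) 1 := by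
    intro i hi
    refine ⟨by positivity, ?_⟩
    rw [div_le_one hN']; exact_mod_cast hi
  have hv0 := h.1
  have hvN : 0 ≤ v / N := by positivity
  constructor
  · intro i hi
    have e : |(i:ℝ) / N - ((i + 1 : ℕ):ℝ) / N| = 1 / N := by
      rw [← sub_div]; push_cast
      rw [show (i:ℝ) - (i + 1) = -1 by ring, abs_div, abs_neg, abs_one, abs_of_pos hN']
    simp only
    rw [h.2 _ (hmem i hi.le) _ (hmem (i + 1) hi), e]
    · ring
    · rw [e, mul_one_div]; linarith
  · intro i hi
    have e : |(i:ℝ) / N - ((i + 2 : ℕ):ℝ) / N| = 2 / N := by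
      rw [← sub_div]; push_cast
      rw [show (i:ℝ) - (i + 2) = -2 by ring, abs_div, abs_neg, abs_of_pos hN']
      norm_num
    simp only
    rw [h.2 _ (hmem i (by omega)) _ (hmem (i + 2) hi), e]
    · ring
    · rw [e]; calc v * (2 / N) = 2 * (v / N) := by ring
        _ ≤ _ := hv

/-- A curve which is locally isometric up to scaling by `v`, uniformly on an interval, has
this property on all pieces of length less than `R / 2`. -/
lemma dist_eq_of_local {S : Type} [MetricSpace S] {R : ℝ} (hR : LocConv S R) {v : ℝ}
    (hv : 0 ≤ v) {c : ℝ → S} {a b ε : ℝ} (hε : 0 < ε) (hab : a ≤ b)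
    (h : ∀ s ∈ Icc a b, ∀ t ∈ Icc a b, |s - t| < ε → dist (c s) (c t) = v * |s - t|)
    (hlen : v * (b - a) < R / 2) : dist (c a) (c b) = v * (b - a) := by
  obtain ⟨n, hn⟩ := exists_nat_gt (2 * (b - a) / ε)
  set N := n + 1 with hNdef
  have hN' : (0:ℝ) < N := by rw [hNdef]; positivity
  have hN2 : 2 * (b - a) / N < ε := by
    rw [div_lt_iff₀ hε] at hn
    rw [div_lt_iff₀ hN', hNdef]; push_cast; nlinarith
  have hba : 0 ≤ b - a := by linarith
  set x : ℕ → S := fun i => c (a + (b - a) * (i / N)) with hx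
  have hmem : ∀ i : ℕ, i ≤ N → a + (b - a) * ((i:ℝ) / N) ∈ Icc a b := by
    intro i hi
    have h1 : (0:ℝ) ≤ (i:ℝ) / N := by positivity
    have h2 : (i:ℝ) / N ≤ 1 := by rw [div_le_one hN']; exact_mod_cast hi
    constructor <;> nlinarith
  have hd : ∀ i k : ℕ, i + k ≤ N → k ≤ 2 → dist (x i) (x (i + k)) = k * (v * (b - a) / N) := by
    intro i k hi hk
    have e : |a + (b - a) * ((i:ℝ) / N) - (a + (b - a) * (((i + k : ℕ):ℝ) / N))| =
        k * (b - a) / N := by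
      rw [show a + (b - a) * ((i:ℝ) / N) - (a + (b - a) * (((i + k : ℕ):ℝ) / N)) =
        -(k * (b - a) / N) by push_cast; ring, abs_neg, abs_of_nonneg (by positivity)]
    simp only [hx]
    rw [h _ (hmem i (by omega)) _ (hmem (i + k) hi), e]
    · ring
    · rw [e]
      refine lt_of_le_of_lt ?_ hN2
      have : (k:ℝ) ≤ 2 := by exact_mod_cast hk
      gcongr
  have hbal : Bal N (v * (b - a) / N) x :=
    ⟨fun i hi => by simpa using hd i 1 hi (by norm_num),
      fun i hi => by simpa using hd i 2 hi le_rfl⟩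
  have := hbal.dist_zero_eq hR (by rw [mul_div_cancel₀ _ hN'.ne']; exact hlen) le_rfl
  rw [mul_div_cancel₀ _ hN'.ne'] at this
  rw [← this]
  simp only [hx]
  rw [div_self hN'.ne']
  simp

lemma geo_of_local {S : Type} [MetricSpace S] {R : ℝ} (hR : LocConv S R) {v : ℝ}
    (hv : 0 ≤ v) {c : ℝ → S} {ε : ℝ} (hε : 0 < ε)
    (h : ∀ s ∈ Icc (0:ℝ) 1, ∀ t ∈ Icc (0:ℝ) 1, |s - t| < ε → dist (c s) (c t) = v * |s - t|) :
    Geo R v c := by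
  have hp := hR.pos
  have main : ∀ s ∈ Icc (0:ℝ) 1, ∀ t ∈ Icc (0:ℝ) 1, s ≤ t → v * (t - s) ≤ R / 8 →
      dist (c s) (c t) = v * (t - s) := by
    intro s hs t ht hst hle
    refine dist_eq_of_local hR hv hε hst (fun s' hs' t' ht' => h s' ?_ t' ?_) (by linarith)
    · exact ⟨hs.1.trans hs'.1, hs'.2.trans ht.2⟩
    · exact ⟨hs.1.trans ht'.1, ht'.2.trans ht.2⟩
  refine ⟨hv, fun s hs t ht hle => ?_⟩
  rcases le_total s t with hst | hst
  · rw [abs_sub_comm, abs_of_nonneg (by linarith)] at hle ⊢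
    exact main s hs t ht hst hle
  · rw [abs_of_nonneg (by linarith)] at hle ⊢
    rw [dist_comm]
    exact main t ht s hs hst hle

/-- A local geodesic is isometric on intervals of length less than `R / 2`. -/
lemma IsLocalGeodesic.dist_eq {S : Type} [MetricSpace S] {R : ℝ} (hR : LocConv S R)
    {f : ℝ → S} (hf : IsLocalGeodesic f) {s t : ℝ} (hst : |s - t| < R / 2) :
    dist (f s) (f t) = |s - t| := by
  have main : ∀ a b : ℝ, a ≤ b → b - a < R / 2 → dist (f a) (f b) = b - a := by
    intro a b hab hlt
    choose ε hε h using hf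
    obtain ⟨δ, hδ, hleb⟩ := lebesgue_number_lemma_of_metric (s := Icc a b)
      (c := fun t => ball t (ε t)) isCompact_Icc (fun t => isOpen_ball)
      (fun t _ => mem_iUnion.2 ⟨t, mem_ball_self (hε t)⟩)
    have := dist_eq_of_local hR zero_le_one (c := f) hδ hab (fun s hs t _ hst => ?_)
      (by rwa [one_mul])
    · rwa [one_mul] at this
    · obtain ⟨u, hu⟩ := hleb s hs
      have h1 := hu (mem_ball_self hδ)
      have h2 : t ∈ ball u (ε u) := hu (by rwa [mem_ball, Real.dist_eq, abs_sub_comm])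
      rw [mem_ball, Real.dist_eq] at h1 h2
      rw [one_mul]
      exact h u s t h1 h2
  rcases le_total s t with h | h
  · rw [abs_sub_comm, abs_of_nonneg (by linarith)] at hst ⊢
    exact main s t h hst
  · rw [abs_of_nonneg (by linarith)] at hst ⊢
    rw [dist_comm]
    exact main t s h hst

lemma floor_div_tendsto {t : ℝ} (ht : 0 ≤ t) :
    Tendsto (fun N : ℕ => ((⌊t * N⌋₊ : ℕ) : ℝ) / N) atTop (𝓝 t) :=
  (tendsto_nat_floor_mul_div_atTop ht).comp tendsto_natCast_atTop_atTop

lemma floor_le_of_mem {t : ℝ} (ht : t ∈ Icc (0:ℝ) 1) (N : ℕ) : ⌊t * N⌋₊ ≤ N := by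
  apply Nat.floor_le_of_le
  have : (0:ℝ) ≤ N := Nat.cast_nonneg N
  nlinarith [ht.2]

/-- Convexity of the distance between two local geodesics which stay close. -/
lemma Geo.dist_le {S : Type} [MetricSpace S] {R : ℝ} (hR : LocConv S R) {v v' : ℝ}
    {c c' : ℝ → S} (h : Geo R v c) (h' : Geo R v' c')
    (hD : ∀ t ∈ Icc (0:ℝ) 1, dist (c t) (c' t) < R / 2) {t : ℝ} (ht : t ∈ Icc (0:ℝ) 1) :
    dist (c t) (c' t) ≤ (1 - t) * dist (c 0) (c' 0) + t * dist (c 1) (c' 1) := by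
  have hp := hR.pos
  have hfl := floor_div_tendsto ht.1
  have hmem : ∀ N : ℕ, ((⌊t * N⌋₊ : ℕ) : ℝ) / N ∈ Icc (0:ℝ) 1 := fun N =>
    ⟨by positivity, div_le_one_of_le₀ (by exact_mod_cast floor_le_of_mem ht N)
      (Nat.cast_nonneg N)⟩
  have hflw : Tendsto (fun N : ℕ => ((⌊t * N⌋₊ : ℕ) : ℝ) / N) atTop (𝓝[Icc 0 1] t) :=
    tendsto_nhdsWithin_iff.2 ⟨hfl, Eventually.of_forall hmem⟩
  have hl : Tendsto (fun N : ℕ => dist (c (((⌊t * N⌋₊ : ℕ) : ℝ) / N))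
      (c' (((⌊t * N⌋₊ : ℕ) : ℝ) / N))) atTop (𝓝 (dist (c t) (c' t))) :=
    ((h.continuousOn hp t ht).tendsto.comp hflw).dist
      ((h'.continuousOn hp t ht).tendsto.comp hflw)
  have hr : Tendsto (fun N : ℕ => (1 - ((⌊t * N⌋₊ : ℕ) : ℝ) / N) * dist (c 0) (c' 0) +
      ((⌊t * N⌋₊ : ℕ) : ℝ) / N * dist (c 1) (c' 1)) atTop
      (𝓝 ((1 - t) * dist (c 0) (c' 0) + t * dist (c 1) (c' 1))) :=
    ((tendsto_const_nhds.sub hfl).mul_const _).add (hfl.mul_const _)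
  refine le_of_tendsto_of_tendsto hl hr ?_
  have hev : ∀ w : ℝ, ∀ᶠ N : ℕ in atTop, 2 * (w / N) ≤ R / 8 := by
    intro w
    have : Tendsto (fun N : ℕ => 2 * (w / N)) atTop (𝓝 (2 * 0)) :=
      (tendsto_const_div_atTop_nhds_zero_nat w).const_mul 2
    rw [mul_zero] at this
    exact this.eventually_le_const (by positivity)
  filter_upwards [hev v, hev v', eventually_gt_atTop 0] with N h1 h2 hN
  have hN' : (0:ℝ) < N := by exact_mod_cast hN
  have := (h.bal hN h1).dist_le hR (h'.bal hN h2) (by linarith) (fun i hi => ?_)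
    (floor_le_of_mem ht N)
  · simp only [Nat.cast_zero, zero_div, div_self hN'.ne'] at this
    rw [← mul_le_mul_iff_right₀ hN']
    refine this.trans (le_of_eq ?_)
    field_simp
  · apply hD
    refine ⟨by positivity, ?_⟩
    rw [div_le_one hN']; exact_mod_cast hi

lemma exists_ultra_lim {S : Type} [TopologicalSpace S] [CompactSpace S] (U : Ultrafilter ℕ)
    (u : ℕ → S) : ∃ x, Tendsto u U (𝓝 x) := by
  obtain ⟨x, -, hx⟩ := isCompact_univ.ultrafilter_le_nhds (U.map u) (by simp)
  exact ⟨x, hx⟩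

lemma exists_ultra_lim_real (U : Ultrafilter ℕ) {u : ℕ → ℝ} {a b : ℝ}
    (h : ∀ᶠ n in (U : Filter ℕ), u n ∈ Icc a b) :
    ∃ x, x ∈ Icc a b ∧ Tendsto u U (𝓝 x) := by
  obtain ⟨x, hx, hx'⟩ := isCompact_Icc.ultrafilter_le_nhds (U.map u) (le_principal_iff.2 h)
  exact ⟨x, hx, hx'⟩

/-- The endpoints of a local geodesic can be moved slightly; the new local geodesic is a
limit of discrete geodesics of finer and finer mesh. -/
lemma Geo.exists_near {S : Type} [MetricSpace S] [CompactSpace S] {R : ℝ} (hR : LocConv S R)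
    {v : ℝ} {c : ℝ → S} (h : Geo R v c) (a b : S) (ha : dist a (c 0) ≤ R / 64)
    (hb : dist b (c 1) ≤ R / 64) :
    ∃ (v' : ℝ) (c' : ℝ → S), Geo R v' c' ∧ c' 0 = a ∧ c' 1 = b ∧
      ∀ t ∈ Icc (0:ℝ) 1, dist (c' t) (c t) ≤ (1 - t) * dist a (c 0) + t * dist b (c 1) := by
  have hp := hR.pos
  have hv0 := h.1
  have : Nonempty S := ⟨a⟩
  have hev : ∀ᶠ N : ℕ in atTop, v / N ≤ R / 32 :=
    (tendsto_const_div_atTop_nhds_zero_nat v).eventually_le_const (by positivity)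
  have hex : ∀ N : ℕ, (0 < N ∧ v / N ≤ R / 32) → ∃ (σ : ℝ) (y : ℕ → S), Bal N σ y ∧ y 0 = a ∧
      y N = b ∧ ∀ i ≤ N, N * dist (y i) (c (i / N)) ≤
        (N - i) * dist a (c 0) + i * dist b (c 1) := by
    rintro N ⟨hN, hvN⟩
    have hN' : (0:ℝ) < N := by exact_mod_cast hN
    have := (h.bal hN (by linarith)).exists_near hR hN (by linarith) a b
      (by simp only [Nat.cast_zero, zero_div]; linarith)
      (by simp only [div_self hN'.ne']; linarith)
    simpa only [Nat.cast_zero, zero_div, div_self hN'.ne'] using this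
  choose! σ y hbal hy0 hy1 hyd using hex
  have hgood : ∀ᶠ N : ℕ in atTop, 0 < N ∧ v / N ≤ R / 32 := (eventually_gt_atTop 0).and hev
  have hδ : ∀ N : ℕ, (0 < N ∧ v / N ≤ R / 32) → ∀ i ≤ N, dist (y N i) (c (i / N)) ≤ R / 64 := by
    intro N hN i hi
    have hN' : (0:ℝ) < N := by exact_mod_cast hN.1
    have h1 := hyd N hN i hi
    have h2 : (i:ℝ) ≤ N := by exact_mod_cast hi
    have h3 : (0:ℝ) ≤ i := Nat.cast_nonneg i
    rw [← mul_le_mul_iff_right₀ hN']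
    nlinarith
  -- the lengths of the discrete geodesics are bounded
  have hbound : ∀ N : ℕ, (0 < N ∧ v / N ≤ R / 32) → N * σ N ∈ Icc 0 (max (R / 8) (4 * v)) := by
    intro N hN
    have hN' : (0:ℝ) < N := by exact_mod_cast hN.1
    have hB := hbal N hN
    have hσ0 := hB.step_nonneg hN.1
    refine ⟨by positivity, ?_⟩
    by_cases hc : N * σ N ≤ R / 8
    · exact hc.trans (le_max_left _ _)
    push Not at hc
    refine le_trans ?_ (le_max_right _ _)
    have hσpos : 0 < σ N := by
      rcases hσ0.lt_or_eq with h1 | h1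
      · exact h1
      · rw [← h1] at hc; simp at hc; linarith
    set k := ⌊R / 8 / σ N⌋₊ with hk
    have hk1 : k * σ N ≤ R / 8 := by
      rw [← le_div_iff₀ hσpos]; exact Nat.floor_le (by positivity)
    have hk2 : R / 8 < (k + 1) * σ N := by
      rw [← div_lt_iff₀ hσpos]; exact Nat.lt_floor_add_one _
    have hkN : k ≤ N := by
      have : (k:ℝ) ≤ N := by
        by_contra hcon
        push Not at hcon
        nlinarith
      exact_mod_cast this
    have hgeo : ∀ i ≤ N, dist (c (0 / N)) (c (i / N)) ≤ i * (v / N) := by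
      intro i hi
      have := (h.bal hN.1 (by linarith [hN.2])).dist_zero_le hi
      simpa using this
    have hdk := hB.dist_eq hR (i := 0) (k := k) (by linarith) (by omega)
    have hd1 := hB.1 0 hN.1
    have g1 := hgeo 1 hN.1
    have gk := hgeo k hkN
    have e0 := hδ N hN 0 (by omega)
    have e1 := hδ N hN 1 hN.1
    have ek := hδ N hN k hkN
    simp only [zero_add, Nat.cast_zero, Nat.cast_one, one_mul] at hdk hd1 g1 gk e0 e1 ek
    have t1 := dist_triangle4 (y N 0) (c (0 / N)) (c (1 / N)) (y N 1)
    have tk := dist_triangle4 (y N 0) (c (0 / N)) (c (k / N)) (y N k)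
    rw [dist_comm (c (1 / N))] at t1
    rw [dist_comm (c (k / N))] at tk
    have s1 : σ N ≤ R / 16 := by linarith [hN.2]
    have s2 : R / 16 < k * σ N := by linarith
    have s3 : k * σ N ≤ R / 32 + k * (v / N) := by linarith
    have hkpos : (0:ℝ) < k := by
      by_contra hcon
      push Not at hcon
      nlinarith
    have s4 : k * σ N ≤ k * (2 * (v / N)) := by linarith
    have s5 : σ N ≤ 2 * (v / N) := le_of_mul_le_mul_left s4 hkpos
    calc N * σ N ≤ N * (2 * (v / N)) := by gcongr
      _ = 2 * v := by field_simp
      _ ≤ 4 * v := by linarith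
  set U : Ultrafilter ℕ := hyperfilter ℕ with hU
  have hUle : (U : Filter ℕ) ≤ atTop := by
    rw [hU, ← Nat.cofinite_eq_atTop]; exact hyperfilter_le_cofinite
  obtain ⟨v', hv'mem, hv'⟩ := exists_ultra_lim_real U (u := fun N => N * σ N)
    (hUle (hgood.mono fun N hN => hbound N hN))
  choose c' hc' using fun t : ℝ => exists_ultra_lim U (fun N => y N ⌊t * N⌋₊)
  refine ⟨v', c', ⟨hv'mem.1, ?_⟩, ?_, ?_, ?_⟩
  · have main : ∀ s ∈ Icc (0:ℝ) 1, ∀ t ∈ Icc (0:ℝ) 1, s ≤ t → v' * (t - s) ≤ R / 8 →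
        dist (c' s) (c' t) = v' * (t - s) := by
      intro s hs t ht hst hle
      have hlim : Tendsto (fun N : ℕ => dist (y N ⌊s * N⌋₊) (y N ⌊t * N⌋₊)) U
          (𝓝 (dist (c' s) (c' t))) := (hc' s).dist (hc' t)
      have hlim2 : Tendsto (fun N : ℕ => (N * σ N) *
          (((⌊t * N⌋₊ : ℕ) : ℝ) / N - ((⌊s * N⌋₊ : ℕ) : ℝ) / N)) U (𝓝 (v' * (t - s))) :=
        hv'.mul (((floor_div_tendsto ht.1).mono_left hUle).sub
          ((floor_div_tendsto hs.1).mono_left hUle))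
      refine tendsto_nhds_unique hlim (hlim2.congr' ?_)
      filter_upwards [hUle hgood, hlim2.eventually_lt_const (by linarith : _ < R / 2)]
        with N hN hlt
      have hN' : (0:ℝ) < N := by exact_mod_cast hN.1
      have hfl : ⌊s * N⌋₊ ≤ ⌊t * N⌋₊ := Nat.floor_le_floor (by nlinarith)
      have e : (N * σ N) * (((⌊t * N⌋₊ : ℕ) : ℝ) / N - ((⌊s * N⌋₊ : ℕ) : ℝ) / N) =
          ((⌊t * N⌋₊ - ⌊s * N⌋₊ : ℕ) : ℝ) * σ N := by
        rw [Nat.cast_sub hfl]; field_simp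
      rw [e] at hlt ⊢
      have hh := (hbal N hN).dist_eq hR (i := ⌊s * N⌋₊) hlt
        (by rw [Nat.add_sub_cancel' hfl]; exact floor_le_of_mem ht N)
      rw [Nat.add_sub_cancel' hfl] at hh
      exact hh.symm
    intro s hs t ht hle
    rcases le_total s t with hst | hst
    · rw [abs_sub_comm, abs_of_nonneg (by linarith)] at hle ⊢
      exact main s hs t ht hst hle
    · rw [abs_of_nonneg (by linarith)] at hle ⊢
      rw [dist_comm]
      exact main t ht s hs hst hle
  · refine tendsto_nhds_unique (hc' 0) (tendsto_const_nhds.congr' ?_)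
    filter_upwards [hUle hgood] with N hN
    simp [hy0 N hN]
  · refine tendsto_nhds_unique (hc' 1) (tendsto_const_nhds.congr' ?_)
    filter_upwards [hUle hgood] with N hN
    simp [hy1 N hN]
  · intro t ht
    have hfl := floor_div_tendsto ht.1
    have hmem : ∀ N : ℕ, ((⌊t * N⌋₊ : ℕ) : ℝ) / N ∈ Icc (0:ℝ) 1 := fun N =>
      ⟨by positivity, div_le_one_of_le₀ (by exact_mod_cast floor_le_of_mem ht N)
        (Nat.cast_nonneg N)⟩
    have hflw : Tendsto (fun N : ℕ => ((⌊t * N⌋₊ : ℕ) : ℝ) / N) atTop (𝓝[Icc 0 1] t) :=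
      tendsto_nhdsWithin_iff.2 ⟨hfl, Eventually.of_forall hmem⟩
    have hl : Tendsto (fun N : ℕ => dist (y N ⌊t * N⌋₊) (c (((⌊t * N⌋₊ : ℕ) : ℝ) / N))) U
        (𝓝 (dist (c' t) (c t))) :=
      (hc' t).dist (((h.continuousOn hp t ht).tendsto.comp hflw).mono_left hUle)
    have hr : Tendsto (fun N : ℕ => (1 - ((⌊t * N⌋₊ : ℕ) : ℝ) / N) * dist a (c 0) +
        ((⌊t * N⌋₊ : ℕ) : ℝ) / N * dist b (c 1)) U
        (𝓝 ((1 - t) * dist a (c 0) + t * dist b (c 1))) :=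
      (((tendsto_const_nhds.sub hfl).mul_const _).add (hfl.mul_const _)).mono_left hUle
    refine le_of_tendsto_of_tendsto hl hr ?_
    filter_upwards [hUle hgood] with N hN
    have hN' : (0:ℝ) < N := by exact_mod_cast hN.1
    have h1 := hyd N hN _ (floor_le_of_mem ht N)
    rw [← mul_le_mul_iff_right₀ hN']
    refine h1.trans (le_of_eq ?_)
    field_simp

lemma Geo.speed_le_of_start {S : Type} [MetricSpace S] {R : ℝ} (hR : 0 < R) {v v' : ℝ}
    {c c' : ℝ → S} (h : Geo R v c) (h' : Geo R v' c') (h0 : c 0 = c' 0) {d : ℝ}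
    (hD : ∀ t ∈ Icc (0:ℝ) 1, dist (c t) (c' t) ≤ t * d) : v ≤ v' + d := by
  obtain ⟨t, ht0, ht1, hv, hv'⟩ : ∃ t : ℝ, 0 < t ∧ t ≤ 1 ∧ v * t ≤ R / 8 ∧ v' * t ≤ R / 8 := by
    refine ⟨min 1 (R / 8 / (v + v' + 1)), ?_, min_le_left _ _, ?_, ?_⟩
    · have := h.1; have := h'.1; positivity
    all_goals
      have h1 := h.1
      have h2 := h'.1
      have h3 := min_le_right (1:ℝ) (R / 8 / (v + v' + 1))
      rw [le_div_iff₀ (by positivity)] at h3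
      have h4 : 0 < min (1:ℝ) (R / 8 / (v + v' + 1)) := by positivity
      nlinarith
  have m0 : (0:ℝ) ∈ Icc (0:ℝ) 1 := by simp
  have mt : t ∈ Icc (0:ℝ) 1 := ⟨ht0.le, ht1⟩
  have e : |0 - t| = t := by rw [zero_sub, abs_neg, abs_of_pos ht0]
  have e1 := h.2 0 m0 t mt (by rwa [e])
  have e2 := h'.2 0 m0 t mt (by rwa [e])
  rw [e] at e1 e2
  have h3 := dist_triangle_right (c 0) (c t) (c' t)
  rw [e1, h0, e2] at h3
  have h4 := hD t mt
  have : t * v ≤ t * (v' + d) := by nlinarith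
  exact le_of_mul_le_mul_left this ht0

/-! ### Covering maps from uniform local isometries -/

/-- A map which is isometric on `δ`-balls and has uniform lifting of `δ`-close points is a
covering map. -/
lemma isCoveringMap_of_uniform {E B : Type} [MetricSpace E] [MetricSpace B] {f : E → B} {δ : ℝ}
    (hδ : 0 < δ) (h1 : ∀ e e', dist e e' < δ → dist (f e) (f e') = dist e e')
    (h2 : ∀ e b, dist (f e) b < δ → ∃ e', f e' = b ∧ dist e e' = dist (f e) b) :
    IsCoveringMap f := by
  have uniq : ∀ e e', dist e e' < δ → f e = f e' → e = e' := by
    intro e e' h he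
    have := h1 e e' h
    rw [he, dist_self] at this
    exact dist_eq_zero.1 this.symm
  have hcont : Continuous f := by
    rw [Metric.continuous_iff]
    intro e ε hε
    refine ⟨min δ ε, lt_min hδ hε, fun e' he' => ?_⟩
    rw [h1 e' e (he'.trans_le (min_le_left _ _))]
    exact he'.trans_le (min_le_right _ _)
  choose! L hL1 hL2 using h2
  intro b
  have hdisc : DiscreteTopology (f ⁻¹' {b}) := by
    refine DiscreteTopology.of_forall_le_dist hδ ?_
    intro x y hxy
    by_contra hlt
    push Not at hlt
    exact hxy (Subtype.ext (uniq _ _ hlt (x.2.trans y.2.symm)))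
  refine ⟨hdisc, ball b (δ / 4), mem_ball_self (by positivity), isOpen_ball,
    isOpen_ball.preimage hcont, ?_⟩
  have hb : ∀ e : f ⁻¹' ball b (δ / 4), dist (f e.1) b < δ / 4 := fun e => e.2
  have hu : ∀ (u : ball b (δ / 4)) (e : f ⁻¹' {b}), dist (f e.1) u.1 < δ / 4 := by
    intro u e
    rw [show f e.1 = b from e.2, dist_comm]
    exact u.2
  refine ⟨{ toFun := fun e => (⟨f e.1, e.2⟩, ⟨L e.1 b, hL1 e.1 b (by linarith [hb e])⟩)
            invFun := fun q => ⟨L q.2.1 q.1.1, by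
              have := hL1 q.2.1 q.1.1 (by linarith [hu q.1 q.2])
              rw [mem_preimage, this]; exact q.1.2⟩
            left_inv := ?_
            right_inv := ?_
            continuous_toFun := ?_
            continuous_invFun := ?_ }, fun _ => rfl⟩
  · rintro ⟨e, he⟩
    have he' : dist (f e) b < δ / 4 := he
    apply Subtype.ext
    have a1 := hL1 e b (by linarith)
    have a2 := hL2 e b (by linarith)
    have a3 : dist (f (L e b)) (f e) < δ / 4 := by rw [a1, dist_comm]; exact he'
    refine uniq _ _ ?_ (hL1 _ _ (by linarith))
    have := hL2 (L e b) (f e) (by linarith)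
    have tri := dist_triangle (L (L e b) (f e)) (L e b) e
    have k1 := dist_comm (L (L e b) (f e)) (L e b)
    have k2 := dist_comm (L e b) e
    linarith
  · rintro ⟨u, e⟩
    have h0 := hu u e
    have a1 := hL1 e.1 u.1 (by linarith)
    have a2 := hL2 e.1 u.1 (by linarith)
    refine Prod.ext (Subtype.ext a1) (Subtype.ext ?_)
    have a3 : dist (f (L e.1 u.1)) b < δ / 4 := by rw [a1]; exact u.2
    refine uniq _ _ ?_ ((hL1 _ _ (by linarith)).trans e.2.symm)
    have := hL2 (L e.1 u.1) b (by linarith)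
    have tri := dist_triangle (L (L e.1 u.1) b) (L e.1 u.1) e.1
    have k1 := dist_comm (L (L e.1 u.1) b) (L e.1 u.1)
    have k2 := dist_comm (L e.1 u.1) e.1
    linarith
  · refine Continuous.prodMk ?_ ?_
    · exact Continuous.subtype_mk (hcont.comp continuous_subtype_val) _
    · refine IsLocallyConstant.continuous ?_
      rw [IsLocallyConstant.iff_eventually_eq]
      intro e
      filter_upwards [ball_mem_nhds e (show 0 < δ / 4 by positivity)] with e' he'
      apply Subtype.ext
      have hd : dist e'.1 e.1 < δ / 4 := he'
      have b1 := hb e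
      have b2 := hb e'
      refine uniq _ _ ?_ ((hL1 _ _ (by linarith)).trans (hL1 _ _ (by linarith)).symm)
      have c1 := hL2 e.1 b (by linarith)
      have c2 := hL2 e'.1 b (by linarith)
      have t1 := dist_triangle (L e'.1 b) e'.1 (L e.1 b)
      have t2 := dist_triangle e'.1 e.1 (L e.1 b)
      rw [dist_comm _ e'.1] at t1
      simp only at t1 t2 ⊢
      linarith
  · refine Continuous.subtype_mk ?_ _
    rw [continuous_iff_continuousAt]
    rintro ⟨u, e⟩
    rw [ContinuousAt, Metric.tendsto_nhds]
    intro ε hε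
    have hev : ∀ᶠ q : ball b (δ / 4) × f ⁻¹' {b} in 𝓝 (u, e), q.2 = e := by
      have : ∀ᶠ y in 𝓝 e, y = e := by rw [nhds_discrete]; rfl
      exact (continuous_snd.tendsto (u, e)).eventually this
    have hev2 : ∀ᶠ q : ball b (δ / 4) × f ⁻¹' {b} in 𝓝 (u, e), dist q.1 u < ε :=
      (continuous_fst.tendsto (u, e)).eventually (ball_mem_nhds u hε)
    filter_upwards [hev, hev2] with q hq hq2
    have b1 := hu u e
    have b2 := hu q.1 e
    rw [hq, ← h1, hL1 _ _ (by linarith), hL1 _ _ (by linarith)]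
    · exact hq2
    · have c1 := hL2 e.1 u.1 (by linarith)
      have c2 := hL2 e.1 q.1.1 (by linarith)
      have t1 := dist_triangle (L e.1 q.1.1) e.1 (L e.1 u.1)
      rw [dist_comm _ e.1] at t1
      linarith

/-! ### The space of local geodesics covers `S × S` -/

lemma Geo.reverse {S : Type} [MetricSpace S] {R v : ℝ} {c : ℝ → S} (h : Geo R v c) :
    Geo R v (fun t => c (1 - t)) := by
  refine ⟨h.1, fun s hs t ht hst => ?_⟩
  have e : |1 - s - (1 - t)| = |s - t| := by rw [← abs_neg]; congr 1; ring
  have := h.2 (1 - s) ⟨by linarith [hs.2], by linarith [hs.1]⟩ (1 - t)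
    ⟨by linarith [ht.2], by linarith [ht.1]⟩ (by rwa [e])
  rwa [e] at this

lemma Geo.congr {S : Type} [MetricSpace S] {R v : ℝ} {c c' : ℝ → S} (h : Geo R v c)
    (e : ∀ t ∈ Icc (0:ℝ) 1, c t = c' t) : Geo R v c' :=
  ⟨h.1, fun s hs t ht hst => by rw [← e s hs, ← e t ht]; exact h.2 s hs t ht hst⟩

lemma Geo.const {S : Type} [MetricSpace S] (R : ℝ) (x : S) : Geo R 0 (fun _ => x) :=
  ⟨le_rfl, fun s _ t _ _ => by simp⟩

/-- Affine reparametrization of a local geodesic. -/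
lemma Geo.sub {S : Type} [MetricSpace S] {R v : ℝ} {c : ℝ → S} (h : Geo R v c) {a b : ℝ}
    (ha : a ∈ Icc (0:ℝ) 1) (hb : b ∈ Icc (0:ℝ) 1) :
    Geo R (v * |b - a|) (fun t => c (a + t * (b - a))) := by
  refine ⟨mul_nonneg h.1 (abs_nonneg _), fun s hs t ht hst => ?_⟩
  have e : |a + s * (b - a) - (a + t * (b - a))| = |b - a| * |s - t| := by
    rw [← abs_mul]; congr 1; ring
  have hm : ∀ s ∈ Icc (0:ℝ) 1, a + s * (b - a) ∈ Icc (0:ℝ) 1 := by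
    intro s hs
    constructor
    · nlinarith [mul_nonneg hs.1 hb.1, mul_nonneg (sub_nonneg.2 hs.2) ha.1]
    · nlinarith [mul_nonneg hs.1 (sub_nonneg.2 hb.2),
        mul_nonneg (sub_nonneg.2 hs.2) (sub_nonneg.2 ha.2)]
  have := h.2 _ (hm s hs) _ (hm t ht) (by rw [e]; linarith)
  rw [this, e]; ring

lemma Geo.speed_unique {S : Type} [MetricSpace S] {R : ℝ} (hR : 0 < R) {v v' : ℝ} {c : ℝ → S}
    (h : Geo R v c) (h' : Geo R v' c) : v = v' := by
  refine le_antisymm ?_ ?_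
  · have := h.speed_le_of_start hR h' rfl (d := 0) (fun t _ => by simp)
    linarith
  · have := h'.speed_le_of_start hR h rfl (d := 0) (fun t _ => by simp)
    linarith

lemma Geo.speed_le_of_start' {S : Type} [MetricSpace S] {R : ℝ} (hR : LocConv S R) {v v' : ℝ}
    {c c' : ℝ → S} (h : Geo R v c) (h' : Geo R v' c') (h0 : c 0 = c' 0)
    (hD : ∀ t ∈ Icc (0:ℝ) 1, dist (c t) (c' t) < R / 2) : v ≤ v' + dist (c 1) (c' 1) := by
  refine h.speed_le_of_start hR.pos h' h0 (fun t ht => ?_)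
  have := Geo.dist_le hR h h' hD ht
  rwa [h0, dist_self, mul_zero, zero_add] at this

lemma Geo.speed_le {S : Type} [MetricSpace S] [CompactSpace S] {R : ℝ} (hR : LocConv S R)
    {v v' : ℝ} {c c' : ℝ → S} (h : Geo R v c) (h' : Geo R v' c')
    (hD : ∀ t ∈ Icc (0:ℝ) 1, dist (c t) (c' t) ≤ R / 64) :
    v ≤ v' + dist (c 0) (c' 0) + dist (c 1) (c' 1) := by
  have hp := hR.pos
  obtain ⟨w, e, he, e0, e1, hed⟩ := h.exists_near hR (c 0) (c' 1) (by simp; positivity)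
    (by rw [dist_comm]; exact hD 1 (by simp))
  have hed' : ∀ t ∈ Icc (0:ℝ) 1, dist (e t) (c t) ≤ R / 64 := by
    intro t ht
    refine (hed t ht).trans ?_
    rw [dist_self, mul_zero, zero_add, dist_comm]
    have := hD 1 (by simp)
    nlinarith [ht.1, ht.2, dist_nonneg (x := c 1) (y := c' 1)]
  have s1 := h.speed_le_of_start' hR he e0.symm (fun t ht => by
    rw [dist_comm]; linarith [hed' t ht])
  have s2 := he.reverse.speed_le_of_start' hR h'.reverse (by simp [e1]) (fun t ht => by
    have ht' : 1 - t ∈ Icc (0:ℝ) 1 := ⟨by linarith [ht.2], by linarith [ht.1]⟩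
    have := dist_triangle (e (1 - t)) (c (1 - t)) (c' (1 - t))
    have := hed' _ ht'
    have := hD _ ht'
    linarith)
  simp only [sub_self] at s2
  rw [e1] at s1
  rw [e0] at s2
  linarith

/-- The space of local geodesics `[0, 1] → S` of constant speed, with the uniform metric. -/
abbrev GeoPath (S : Type) [MetricSpace S] (R : ℝ) : Type :=
  {c : C(unitInterval, S) // ∃ v, Geo R v (IccExtend (zero_le_one' ℝ) c)}

namespace GeoPath

variable {S : Type} [MetricSpace S] {R : ℝ}

/-- The curve underlying an element of `GeoPath`, extended by constants to the real line. -/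
def fn (c : GeoPath S R) : ℝ → S := IccExtend (zero_le_one' ℝ) c.1

/-- The length of an element of `GeoPath`. -/
def len (c : GeoPath S R) : ℝ := Classical.choose c.2

lemma geo (c : GeoPath S R) : Geo R c.len c.fn := Classical.choose_spec c.2

lemma fn_coe (c : GeoPath S R) (t : unitInterval) : c.fn t = c.1 t := by
  rw [fn, IccExtend_val]

lemma fn_continuous (c : GeoPath S R) : Continuous c.fn :=
  c.1.continuous.Icc_extend'

/-- Bundle a local geodesic. -/
def mk' (hR : 0 < R) {v : ℝ} {c : ℝ → S} (h : Geo R v c) : GeoPath S R :=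
  ⟨⟨fun t => c t.1, by
    have := h.continuousOn hR
    rw [continuousOn_iff_continuous_domRestrict] at this
    exact this⟩, v, h.congr (fun t ht => by rw [IccExtend_of_mem _ _ ht]; rfl)⟩

lemma mk'_fn (hR : 0 < R) {v : ℝ} {c : ℝ → S} (h : Geo R v c) {t : ℝ} (ht : t ∈ Icc (0:ℝ) 1) :
    (mk' hR h).fn t = c t := by
  rw [fn, IccExtend_of_mem _ _ ht]; rfl

lemma mk'_len (hR : 0 < R) {v : ℝ} {c : ℝ → S} (h : Geo R v c) : (mk' hR h).len = v :=
  ((mk' hR h).geo.congr (fun _ ht => mk'_fn hR h ht)).speed_unique hR h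

lemma ext_fn {c c' : GeoPath S R} (h : ∀ t ∈ Icc (0:ℝ) 1, c.fn t = c'.fn t) : c = c' := by
  apply Subtype.ext
  ext t
  rw [← fn_coe, ← fn_coe]
  exact h t t.2

lemma len_eq_of_fn (hR : 0 < R) {c : GeoPath S R} {v : ℝ} (h : Geo R v c.fn) : c.len = v :=
  c.geo.speed_unique hR h

lemma dist_fn_le (c c' : GeoPath S R) (t : ℝ) : dist (c.fn t) (c'.fn t) ≤ dist c c' :=
  ContinuousMap.dist_apply_le_dist (f := c.1) (g := c'.1) _

lemma dist_le' {c c' : GeoPath S R} {d : ℝ} (hd : 0 ≤ d)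
    (h : ∀ t ∈ Icc (0:ℝ) 1, dist (c.fn t) (c'.fn t) ≤ d) : dist c c' ≤ d := by
  rw [Subtype.dist_eq, ContinuousMap.dist_le hd]
  intro t
  rw [← fn_coe, ← fn_coe]
  exact h t t.2

/-- The pair of endpoints. -/
def ev (c : GeoPath S R) : S × S := (c.fn 0, c.fn 1)

lemma ev_isCoveringMap [CompactSpace S] (hR : LocConv S R) :
    IsCoveringMap (ev : GeoPath S R → S × S) := by
  have hp := hR.pos
  refine isCoveringMap_of_uniform (δ := R / 64) (by positivity) ?_ ?_
  · intro c c' h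
    refine le_antisymm ?_ ?_
    · exact max_le (dist_fn_le c c' 0) (dist_fn_le c c' 1)
    · refine dist_le' dist_nonneg (fun t ht => ?_)
      refine (Geo.dist_le hR c.geo c'.geo (fun t _ => ?_) ht).trans ?_
      · linarith [dist_fn_le c c' t]
      · have h0 : dist (c.fn 0) (c'.fn 0) ≤ dist (ev c) (ev c') := le_max_left _ _
        have h1 : dist (c.fn 1) (c'.fn 1) ≤ dist (ev c) (ev c') := le_max_right _ _
        nlinarith [ht.1, ht.2]
  · intro c b h
    have h0 : dist (c.fn 0) b.1 ≤ dist (ev c) b := le_max_left _ _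
    have h1 : dist (c.fn 1) b.2 ≤ dist (ev c) b := le_max_right _ _
    obtain ⟨v, e, he, e0, e1, hd⟩ := c.geo.exists_near hR b.1 b.2
      (by rw [dist_comm]; linarith) (by rw [dist_comm]; linarith)
    have m0 : (0:ℝ) ∈ Icc (0:ℝ) 1 := by simp
    have m1 : (1:ℝ) ∈ Icc (0:ℝ) 1 := by simp
    have hev : ev (mk' hp he) = b := by
      rw [ev, mk'_fn _ _ m0, mk'_fn _ _ m1, e0, e1]
    refine ⟨mk' hp he, hev, le_antisymm ?_ ?_⟩
    · refine dist_le' dist_nonneg (fun t ht => ?_)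
      rw [mk'_fn _ _ ht, dist_comm]
      refine (hd t ht).trans ?_
      rw [dist_comm b.1, dist_comm b.2]
      nlinarith [ht.1, ht.2]
    · conv_lhs => rw [← hev]
      exact max_le (dist_fn_le _ _ 0) (dist_fn_le _ _ 1)

lemma len_continuous [CompactSpace S] (hR : LocConv S R) :
    Continuous (len : GeoPath S R → ℝ) := by
  have hp := hR.pos
  rw [Metric.continuous_iff]
  intro c ε hε
  refine ⟨min (R / 64) (ε / 4), by positivity, fun c' h => ?_⟩
  have h1 : dist c' c < R / 64 := h.trans_le (min_le_left _ _)
  have h2 : dist c' c < ε / 4 := h.trans_le (min_le_right _ _)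
  have a := Geo.speed_le hR c.geo c'.geo (fun t _ => by
    rw [dist_comm]; exact (dist_fn_le c' c t).trans h1.le)
  have b := Geo.speed_le hR c'.geo c.geo (fun t _ => (dist_fn_le c' c t).trans h1.le)
  have d0 := dist_fn_le c' c 0
  have d1 := dist_fn_le c' c 1
  rw [dist_comm (c.fn 0), dist_comm (c.fn 1)] at a
  rw [Real.dist_eq, abs_lt]
  constructor <;> linarith

end GeoPath

/-! ### Geodesics in the universal cover -/

lemma ESCS.locallyPathConnected {S : Type} [MetricSpace S] (hS : ESCS S) :
    LocallyPathConnectedSpace S := by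
  refine LocallyPathConnectedSpace.of_bases (fun x => nhds_basis_ball (x := x)) ?_
  intro x r hr
  refine ⟨x, mem_ball_self hr, ?_⟩
  intro y hy
  obtain ⟨γ, hγ, h0, h1, hv⟩ := hS.length_metric x y ((r - dist x y) / 2)
    (by rw [mem_ball, dist_comm] at hy; linarith)
  refine ⟨⟨⟨fun t => γ t, by fun_prop⟩, by simpa using h0, by simpa using h1⟩, ?_⟩
  intro t
  have h3 := eVariationOn.edist_le γ (s := Icc 0 1) (x := t) (y := 0) t.2 (by simp)
  have h4 := h3.trans hv
  rw [edist_dist] at h4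
  have hxy := dist_nonneg (x := x) (y := y)
  rw [mem_ball, dist_comm] at hy
  rw [ENNReal.ofReal_le_ofReal_iff (by linarith), h0] at h4
  change γ t ∈ ball x r
  rw [mem_ball]
  linarith

lemma UnivCover.locallyPathConnected {S X : Type} [MetricSpace S] [MetricSpace X] (hS : ESCS S)
    (cov : UnivCover S X) : LocallyPathConnectedSpace X := by
  have := hS.locallyPathConnected
  have hl := cov.covering.isLocalHomeomorph
  choose e he _ using hl
  let _ : ChartedSpace S X :=
    { atlas := range e
      chartAt := e
      mem_chart_source := he
      chart_mem_atlas := fun x => ⟨x, rfl⟩ }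
  exact ChartedSpace.locallyPathConnectedSpace S X

lemma simplyConnected_prod {X Y : Type} [TopologicalSpace X] [TopologicalSpace Y]
    [SimplyConnectedSpace X] [SimplyConnectedSpace Y] : SimplyConnectedSpace (X × Y) := by
  rw [simply_connected_iff_paths_homotopic']
  refine ⟨inferInstance, ?_⟩
  rintro ⟨a, b⟩ ⟨a', b'⟩ q q'
  have h1 := SimplyConnectedSpace.paths_homotopic (q.map continuous_fst) (q'.map continuous_fst)
  have h2 := SimplyConnectedSpace.paths_homotopic (q.map continuous_snd) (q'.map continuous_snd)
  exact Nonempty.map2 Path.Homotopic.prodHomotopy h1 h2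

namespace GeoPath

/-- The constant geodesic. -/
def cst {S : Type} [MetricSpace S] (R : ℝ) (x : S) : GeoPath S R :=
  ⟨ContinuousMap.const _ x, 0, (Geo.const R x).congr (fun _ _ => rfl)⟩

lemma cst_fn {S : Type} [MetricSpace S] (R : ℝ) (x : S) (t : ℝ) : (cst R x).fn t = x := rfl

lemma cst_continuous {S : Type} [MetricSpace S] (R : ℝ) : Continuous (cst R : S → GeoPath S R) :=
  Continuous.subtype_mk ContinuousMap.continuous_const' _

lemma cst_len {S : Type} [MetricSpace S] {R : ℝ} (hR : 0 < R) (x : S) : (cst R x).len = 0 :=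
  len_eq_of_fn hR (Geo.const R x)

lemma eval_continuous {S : Type} [MetricSpace S] {R : ℝ} (t : ℝ) :
    Continuous (fun c : GeoPath S R => c.fn t) :=
  (continuous_eval_const _).comp continuous_subtype_val

lemma ev_continuous {S : Type} [MetricSpace S] {R : ℝ} :
    Continuous (ev : GeoPath S R → S × S) :=
  (eval_continuous 0).prodMk (eval_continuous 1)

end GeoPath

open GeoPath

/-- A continuous choice of geodesics between points of the universal cover. -/
theorem exists_kappa {S X : Type} [MetricSpace S] [MetricSpace X] (hS : ESCS S)
    (cov : UnivCover S X) {R : ℝ} (hR : LocConv S R) :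
    ∃ (K : C(X × X, GeoPath S R)) (k : C(unitInterval × (X × X), X)),
      (∀ q, ev (K q) = (cov.p q.1, cov.p q.2)) ∧ (∀ x, K (x, x) = cst R (cov.p x)) ∧
      (∀ t q, cov.p (k (t, q)) = (K q).1 t) ∧ (∀ q, k (0, q) = q.1) ∧ (∀ q, k (1, q) = q.2) := by
  have := hS.compact
  have := cov.simplyConnected
  have := cov.locallyPathConnected hS
  have : SimplyConnectedSpace (X × X) := simplyConnected_prod
  have hcov := ev_isCoveringMap hR
  have hpc : Continuous cov.p := cov.covering.continuous
  obtain ⟨x0⟩ : Nonempty X := inferInstance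
  let F : C(X × X, S × S) := ⟨fun q => (cov.p q.1, cov.p q.2), by fun_prop⟩
  obtain ⟨K, ⟨hK0, hK⟩, -⟩ := hcov.existsUnique_continuousMap_lifts F (x0, x0) (cst R (cov.p x0)) rfl
  have hK' : ∀ q, ev (K q) = (cov.p q.1, cov.p q.2) := fun q => congrFun hK q
  have hdiag : ∀ x, K (x, x) = cst R (cov.p x) := by
    have := hcov.eq_of_comp_eq (g₁ := fun x : X => K (x, x)) (g₂ := fun x => cst R (cov.p x))
      (by fun_prop) ((cst_continuous R).comp hpc) (by
        funext x
        exact hK' (x, x)) x0 hK0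
    exact fun x => congrFun this x
  let H : C(unitInterval × (X × X), S) := ⟨fun z => (K z.2).1 z.1, by fun_prop⟩
  have hH0 : ∀ q, H (0, q) = cov.p ((⟨Prod.fst, continuous_fst⟩ : C(X × X, X)) q) := by
    intro q
    have := congrArg Prod.fst (hK' q)
    simp only [ev] at this
    change (K q).1 0 = cov.p q.1
    rw [← this, ← fn_coe]; rfl
  set k := cov.covering.liftHomotopy H ⟨Prod.fst, continuous_fst⟩ hH0 with hk
  have kp : ∀ t q, cov.p (k (t, q)) = (K q).1 t := fun t q =>
    congrFun (cov.covering.liftHomotopy_lifts H ⟨Prod.fst, continuous_fst⟩ hH0) (t, q)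
  have k0 : ∀ q, k (0, q) = q.1 := fun q =>
    cov.covering.liftHomotopy_zero H ⟨Prod.fst, continuous_fst⟩ hH0 q
  have k00 : ∀ t, k (t, (x0, x0)) = x0 := by
    have := cov.covering.eq_of_comp_eq (g₁ := fun t => k (t, (x0, x0))) (g₂ := fun _ => x0)
      (by fun_prop) continuous_const (by
        funext t
        change cov.p (k (t, (x0, x0))) = cov.p x0
        rw [kp, hK0]; rfl) 0 (k0 _)
    exact fun t => congrFun this t
  have k1 : ∀ q, k (1, q) = q.2 := by
    have := cov.covering.eq_of_comp_eq (g₁ := fun q => k (1, q)) (g₂ := Prod.snd)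
      (by fun_prop) continuous_snd (by
        funext q
        change cov.p (k (1, q)) = cov.p q.2
        have := congrArg Prod.snd (hK' q)
        simp only [ev] at this
        rw [kp, ← this, ← fn_coe]; rfl) (x0, x0) (k00 1)
    exact fun q => congrFun this q
  exact ⟨K, k, hK', hdiag, kp, k0, k1⟩

/-! ### The length metric on the universal cover -/

/-- A continuous choice of geodesics in the universal cover: `K (x, y)` is the projection to
`S` of the geodesic from `x` to `y`, and `k (·, (x, y))` is this geodesic itself. -/
structure KData {S X : Type} [MetricSpace S] [MetricSpace X] (cov : UnivCover S X) (R : ℝ) where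
  K : C(X × X, GeoPath S R)
  k : C(unitInterval × (X × X), X)
  ev_K : ∀ q, ev (K q) = (cov.p q.1, cov.p q.2)
  K_diag : ∀ x, K (x, x) = cst R (cov.p x)
  p_k : ∀ t q, cov.p (k (t, q)) = (K q).1 t
  k_zero : ∀ q, k (0, q) = q.1
  k_one : ∀ q, k (1, q) = q.2

/-- A locally Lipschitz function on `[0, 1]` is Lipschitz. -/
lemma telescope {φ : ℝ → ℝ} {L ε : ℝ} (hε : 0 < ε)
    (h : ∀ s ∈ Icc (0:ℝ) 1, ∀ t ∈ Icc (0:ℝ) 1, |s - t| < ε → φ t ≤ φ s + L * |s - t|) :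
    φ 1 ≤ φ 0 + L := by
  obtain ⟨n, hn⟩ := exists_nat_one_div_lt hε
  have hN : (0:ℝ) < n + 1 := by positivity
  have main : ∀ i : ℕ, i ≤ n + 1 → φ (i / (n + 1)) ≤ φ 0 + L * (i / (n + 1)) := by
    intro i
    induction i with
    | zero => simp
    | succ i ih =>
      intro hi
      have hi' : (i:ℝ) + 1 ≤ n + 1 := by exact_mod_cast hi
      have e : |(i:ℝ) / (n + 1) - ((i + 1 : ℕ) : ℝ) / (n + 1)| = 1 / (n + 1) := by
        rw [← sub_div]; push_cast
        rw [show (i:ℝ) - (i + 1) = -1 by ring, abs_div, abs_neg, abs_one, abs_of_pos hN]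
      have := h (i / (n + 1)) ⟨by positivity, by rw [div_le_one hN]; linarith⟩
        ((i + 1 : ℕ) / (n + 1)) ⟨by positivity, by rw [div_le_one hN]; push_cast; linarith⟩
        (by rw [e]; exact hn)
      rw [e] at this
      have h2 := ih (by omega)
      refine this.trans ?_
      have e2 : L * (((i + 1 : ℕ) : ℝ) / (n + 1)) = L * (i / (n + 1)) + L * (1 / (n + 1)) := by
        push_cast; ring
      rw [e2]; linarith
  have := main (n + 1) le_rfl
  push_cast at this
  rwa [div_self hN.ne', mul_one] at this

namespace KData

variable {S X : Type} [MetricSpace S] [MetricSpace X] {cov : UnivCover S X} {R : ℝ}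
  (Q : KData cov R)

/-- The geodesic from `x` to `y`, extended by constants. -/
def kk (x y : X) (t : ℝ) : X := Q.k (projIcc 0 1 zero_le_one t, (x, y))

/-- The length of the geodesic from `x` to `y`. -/
def D (x y : X) : ℝ := (Q.K (x, y)).len

lemma kk_zero (x y : X) : Q.kk x y 0 = x := by
  rw [kk, projIcc_left]; exact Q.k_zero _

lemma kk_one (x y : X) : Q.kk x y 1 = y := by
  rw [kk, projIcc_right]; exact Q.k_one _

lemma p_kk (x y : X) (t : ℝ) : cov.p (Q.kk x y t) = (Q.K (x, y)).fn t := by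
  rw [kk, Q.p_k]; rfl

lemma kk_continuous {A : Type} [TopologicalSpace A] {a b : A → X} {t : A → ℝ} (ha : Continuous a)
    (hb : Continuous b) (ht : Continuous t) : Continuous (fun z => Q.kk (a z) (b z) (t z)) := by
  unfold kk
  exact Q.k.continuous.comp ((continuous_projIcc.comp ht).prodMk (ha.prodMk hb))

lemma geo_kk (x y : X) : Geo R (Q.D x y) (fun t => cov.p (Q.kk x y t)) :=
  (Q.K (x, y)).geo.congr (fun t _ => (Q.p_kk x y t).symm)

lemma D_nonneg (x y : X) : 0 ≤ Q.D x y := (Q.geo_kk x y).1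

lemma D_self (hR : LocConv S R) (x : X) : Q.D x x = 0 := by
  rw [D, Q.K_diag, cst_len hR.pos]

lemma D_eq_dist (_hR : LocConv S R) {x y : X} (h : Q.D x y ≤ R / 8) :
    Q.D x y = dist (cov.p x) (cov.p y) := by
  have := (Q.geo_kk x y).2 0 (by simp) 1 (by simp) (by simpa using h)
  beta_reduce at this
  rw [Q.kk_zero, Q.kk_one] at this
  simpa using this.symm

lemma D_continuous [CompactSpace S] (hR : LocConv S R) {A : Type} [TopologicalSpace A] {a b : A → X}
    (ha : Continuous a) (hb : Continuous b) : Continuous (fun z => Q.D (a z) (b z)) :=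
  (len_continuous hR).comp (Q.K.continuous.comp (ha.prodMk hb))

/-- Uniqueness of geodesics in the universal cover. -/
lemma eq_kk [CompactSpace S] (hR : LocConv S R) {v : ℝ} {c : ℝ → X} (hc : ContinuousOn c (Icc 0 1))
    (hg : Geo R v (fun t => cov.p (c t))) :
    Q.D (c 0) (c 1) = v ∧ ∀ t ∈ Icc (0:ℝ) 1, Q.kk (c 0) (c 1) t = c t := by
  have hcI : Continuous (fun t : unitInterval => c t) := by
    rw [continuousOn_iff_continuous_domRestrict] at hc; exact hc
  have hpc : Continuous cov.p := cov.covering.continuous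
  have hgu : ∀ u : unitInterval, Geo R (v * |(u:ℝ) - 0|) (fun t => cov.p (c (0 + t * (u - 0)))) :=
    fun u => hg.sub (by simp) u.2
  let G2 : unitInterval → GeoPath S R := fun u => mk' hR.pos (hgu u)
  have hG2 : Continuous G2 := by
    refine Continuous.subtype_mk ?_ _
    let M : C(unitInterval × unitInterval, S) :=
      ⟨fun z => cov.p (c (z.2 * z.1 : unitInterval)),
        hpc.comp (hcI.comp (continuous_snd.mul continuous_fst))⟩
    have : Continuous (fun u => M.curry u) := M.curry.continuous
    convert this using 2 with u
    ext t
    change cov.p (c (0 + (t:ℝ) * (u - 0))) = cov.p (c ((t * u : unitInterval) : ℝ))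
    congr 2
    push_cast
    ring
  have m0 : (0:ℝ) ∈ Icc (0:ℝ) 1 := by simp
  have m1 : (1:ℝ) ∈ Icc (0:ℝ) 1 := by simp
  have key := (ev_isCoveringMap hR).eq_of_comp_eq
    (g₁ := fun u : unitInterval => Q.K (c 0, c u)) (g₂ := G2)
    (Q.K.continuous.comp (continuous_const.prodMk hcI)) hG2 (by
      funext u
      change ev (Q.K (c 0, c u)) = ev (G2 u)
      rw [Q.ev_K, ev, mk'_fn hR.pos (hgu u) m0, mk'_fn hR.pos (hgu u) m1]
      simp) 0 (by
      apply ext_fn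
      intro t ht
      change (Q.K (c 0, c 0)).fn t = (G2 0).fn t
      rw [Q.K_diag, cst_fn, mk'_fn hR.pos (hgu 0) ht]
      simp)
  have key1 : Q.K (c 0, c 1) = G2 1 := congrFun key 1
  have hfn : ∀ t ∈ Icc (0:ℝ) 1, (Q.K (c 0, c 1)).fn t = cov.p (c t) := by
    intro t ht
    rw [key1, mk'_fn hR.pos (hgu 1) ht]
    simp
  refine ⟨len_eq_of_fn hR.pos (hg.congr (fun t ht => (hfn t ht).symm)), ?_⟩
  have e := cov.covering.eq_of_comp_eq (g₁ := fun t : unitInterval => Q.k (t, (c 0, c 1)))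
    (g₂ := fun t : unitInterval => c t) (by fun_prop) hcI (by
      funext t
      change cov.p (Q.k (t, (c 0, c 1))) = cov.p (c t)
      rw [Q.p_k, ← fn_coe, hfn t t.2]) 0 (Q.k_zero _)
  intro t ht
  rw [kk, projIcc_of_mem _ ht]
  exact congrFun e ⟨t, ht⟩

lemma D_kk [CompactSpace S] (hR : LocConv S R) (x y : X) {s t : ℝ} (hs : s ∈ Icc (0:ℝ) 1)
    (ht : t ∈ Icc (0:ℝ) 1) : Q.D (Q.kk x y s) (Q.kk x y t) = |s - t| * Q.D x y := by
  have := (Q.eq_kk hR (c := fun u => Q.kk x y (s + u * (t - s)))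
    (Q.kk_continuous continuous_const continuous_const (by fun_prop)).continuousOn
    ((Q.geo_kk x y).sub hs ht)).1
  simp only [zero_mul, add_zero, one_mul, add_sub_cancel] at this
  rw [this, abs_sub_comm, mul_comm]

lemma D_comm [CompactSpace S] (hR : LocConv S R) (x y : X) : Q.D x y = Q.D y x := by
  have := Q.D_kk hR x y (s := 1) (t := 0) (by simp) (by simp)
  rw [Q.kk_zero, Q.kk_one] at this
  simpa using this.symm

lemma exists_uniform {Z : Type} [PseudoMetricSpace Z] {F : ℝ → Z} (hF : Continuous F) {r : ℝ}
    (hr : 0 < r) : ∃ ε > 0, ∀ s ∈ Icc (0:ℝ) 1, ∀ t ∈ Icc (0:ℝ) 1, |s - t| < ε →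
      dist (F s) (F t) < r := by
  have := (isCompact_Icc (a := (0:ℝ)) (b := 1)).uniformContinuousOn_of_continuous hF.continuousOn
  rw [Metric.uniformContinuousOn_iff] at this
  obtain ⟨ε, hε, h⟩ := this r hr
  exact ⟨ε, hε, fun s hs t ht hst => h s hs t ht hst⟩

lemma D_triangle [CompactSpace S] (hR : LocConv S R) (x y z : X) :
    Q.D x z ≤ Q.D x y + Q.D y z := by
  have hp := hR.pos
  have hc : Continuous (fun s => Q.kk y z s) :=
    Q.kk_continuous continuous_const continuous_const continuous_id
  obtain ⟨ε, hε, h1⟩ := exists_uniform (F := fun s => Q.K (x, Q.kk y z s))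
    (Q.K.continuous.comp (continuous_const.prodMk hc)) (r := R / 2) (by positivity)
  have hD := Q.D_nonneg y z
  have := telescope (φ := fun s => Q.D x (Q.kk y z s)) (L := Q.D y z)
    (ε := min ε (R / 8 / (Q.D y z + 1))) (by positivity) (fun s hs t ht hst => ?_)
  · simpa only [Q.kk_zero, Q.kk_one] using this
  · have hst1 := hst.trans_le (min_le_left _ _)
    have hst2 := hst.trans_le (min_le_right _ _)
    rw [lt_div_iff₀ (by positivity)] at hst2
    have h2 := h1 t ht s hs (by rwa [abs_sub_comm])
    have h3 := (Q.geo_kk x (Q.kk y z t)).speed_le_of_start' hR (Q.geo_kk x (Q.kk y z s))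
      (by simp only [Q.kk_zero]) (fun u _ => by
        rw [Q.p_kk, Q.p_kk]
        exact (dist_fn_le _ _ u).trans_lt h2)
    simp only [Q.kk_one] at h3
    have h4 := Q.D_kk hR y z ht hs
    rw [← Q.D_eq_dist hR (by rw [h4, abs_sub_comm]; nlinarith [abs_nonneg (s - t)]), h4,
      abs_sub_comm, mul_comm] at h3
    exact h3

/-- Geodesics issued from a common point `x` diverge convexly. The triangle is cut into thin
triangles, for which the local convexity of `S` applies. -/
lemma D_conv [CompactSpace S] (hR : LocConv S R) (x y z : X) {t : ℝ} (ht : t ∈ Icc (0:ℝ) 1) :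
    Q.D (Q.kk x y t) (Q.kk x z t) ≤ t * Q.D y z := by
  have hp := hR.pos
  have hc : Continuous (fun s => Q.kk y z s) :=
    Q.kk_continuous continuous_const continuous_const continuous_id
  obtain ⟨ε, hε, h1⟩ := exists_uniform (F := fun s => Q.K (x, Q.kk y z s))
    (Q.K.continuous.comp (continuous_const.prodMk hc)) (r := R / 2) (by positivity)
  have hcc : Continuous (fun s => Q.kk x (Q.kk y z s) t) :=
    Q.kk_continuous continuous_const hc continuous_const
  obtain ⟨ε', hε', h1'⟩ : ∃ ε' > 0, ∀ s ∈ Icc (0:ℝ) 1, ∀ s' ∈ Icc (0:ℝ) 1, |s - s'| < ε' →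
      Q.D (Q.kk x (Q.kk y z s) t) (Q.kk x (Q.kk y z s') t) ≤ R / 8 := by
    have hu : UniformContinuousOn (fun q : ℝ × ℝ => Q.D (Q.kk x (Q.kk y z q.1) t)
        (Q.kk x (Q.kk y z q.2) t)) (Icc 0 1 ×ˢ Icc 0 1) :=
      (isCompact_Icc.prod isCompact_Icc).uniformContinuousOn_of_continuous
        (Q.D_continuous hR (hcc.comp continuous_fst) (hcc.comp continuous_snd)).continuousOn
    rw [Metric.uniformContinuousOn_iff] at hu
    obtain ⟨e, he, hu⟩ := hu (R / 8) (by positivity)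
    refine ⟨e, he, fun s hs s' hs' hss => ?_⟩
    have := hu (s, s') ⟨hs, hs'⟩ (s, s) ⟨hs, hs⟩ (by
      rw [Prod.dist_eq, dist_self, Real.dist_eq, abs_sub_comm]; exact max_lt he hss)
    simp only [Q.D_self hR] at this
    rw [Real.dist_eq, sub_zero] at this
    exact (le_abs_self _).trans this.le
  have hD := Q.D_nonneg y z
  have := telescope (φ := fun s => Q.D (Q.kk x y t) (Q.kk x (Q.kk y z s) t)) (L := t * Q.D y z)
    (ε := min ε' (min ε (R / 8 / (Q.D y z + 1)))) (by positivity) (fun s hs s' hs' hst => ?_)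
  · simpa only [Q.kk_zero, Q.kk_one, Q.D_self hR, zero_add] using this
  · have hst0 := hst.trans_le (min_le_left _ _)
    have hst1 := (hst.trans_le (min_le_right _ _)).trans_le (min_le_left _ _)
    have hst2 := (hst.trans_le (min_le_right _ _)).trans_le (min_le_right _ _)
    rw [lt_div_iff₀ (by positivity)] at hst2
    have h2 := h1 s hs s' hs' hst1
    have h3 := Geo.dist_le hR (Q.geo_kk x (Q.kk y z s)) (Q.geo_kk x (Q.kk y z s'))
      (fun u _ => by
        rw [Q.p_kk, Q.p_kk]
        exact (dist_fn_le _ _ u).trans_lt h2) ht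
    simp only [Q.kk_one, Q.kk_zero, dist_self, mul_zero, zero_add] at h3
    have h4 := Q.D_kk hR y z hs hs'
    have h5 : Q.D (Q.kk y z s) (Q.kk y z s') ≤ R / 8 := by
      rw [h4]; nlinarith [abs_nonneg (s - s')]
    rw [← Q.D_eq_dist hR h5, h4, ← Q.D_eq_dist hR (h1' s hs s' hs' hst0)] at h3
    have h6 := Q.D_triangle hR (Q.kk x y t) (Q.kk x (Q.kk y z s) t) (Q.kk x (Q.kk y z s') t)
    refine h6.trans ?_
    linarith

lemma eq_of_D [CompactSpace S] (hR : LocConv S R) {x y : X} (h : Q.D x y = 0) : x = y := by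
  have hg := Q.geo_kk x y
  rw [h] at hg
  have hp := hR.pos
  have := (cov.covering).eq_of_comp_eq (g₁ := fun t : unitInterval => Q.kk x y t)
    (g₂ := fun _ => x) (Q.kk_continuous continuous_const continuous_const continuous_subtype_val)
    continuous_const (by
      funext t
      have := hg.2 t t.2 0 (by simp) (by simp; positivity)
      beta_reduce at this
      rw [zero_mul, Q.kk_zero, dist_eq_zero] at this
      exact this) 0 (Q.kk_zero x y)
  have h1 := congrFun this 1
  simpa [Q.kk_one] using h1.symm

/-- The length metric induces a topology at least as fine as the original one. -/
lemma exists_D_ball (hR : LocConv S R) (a : X) {U : Set X} (hU : U ∈ 𝓝 a) :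
    ∃ r > 0, ∀ b, Q.D a b < r → b ∈ U := by
  obtain ⟨e, ha, he⟩ := cov.covering.isLocalHomeomorph a
  have hpe : ∀ x, cov.p x = e x := fun x => by rw [he]
  have hW : e.symm ⁻¹' U ∩ e.target ∈ 𝓝 (e a) := by
    refine inter_mem ?_ (e.open_target.mem_nhds (e.map_source ha))
    refine (e.symm.continuousAt (e.map_source ha)).preimage_mem_nhds ?_
    rwa [e.left_inv ha]
  obtain ⟨r, hr, hball⟩ := Metric.mem_nhds_iff.1 hW
  have hp := hR.pos
  refine ⟨min r (R / 8), by positivity, fun b hb' => ?_⟩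
  have hb := hb'.trans_le (min_le_left _ _)
  have hbR := hb'.trans_le (min_le_right _ _)
  have hin : ∀ t ∈ Icc (0:ℝ) 1, cov.p (Q.kk a b t) ∈ ball (e a) r := by
    intro t ht
    have h2 : Q.D a b * |t - 0| ≤ Q.D a b := by
      rw [sub_zero, abs_of_nonneg ht.1]
      exact mul_le_of_le_one_right (Q.D_nonneg _ _) ht.2
    have := (Q.geo_kk a b).2 t ht 0 (by simp) (by linarith)
    beta_reduce at this
    rw [Q.kk_zero, hpe a] at this
    rw [mem_ball, this]
    linarith
  have := (cov.covering).eq_of_comp_eq (g₁ := fun t : unitInterval => Q.kk a b t)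
    (g₂ := fun t : unitInterval => e.symm (cov.p (Q.kk a b t)))
    (Q.kk_continuous continuous_const continuous_const continuous_subtype_val)
    (e.continuousOn_symm.comp_continuous (cov.covering.continuous.comp
      (Q.kk_continuous continuous_const continuous_const continuous_subtype_val))
      (fun t => (hball (hin t t.2)).2)) (by
      funext t
      change cov.p _ = cov.p (e.symm _)
      rw [hpe (e.symm _), e.right_inv (hball (hin t t.2)).2]) 0 (by
      change Q.kk a b 0 = e.symm (cov.p (Q.kk a b 0))
      rw [Q.kk_zero, hpe, e.left_inv ha])
  have h1 : Q.kk a b 1 = e.symm (cov.p (Q.kk a b 1)) := congrFun this 1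
  rw [Q.kk_one] at h1
  rw [h1]
  have := (hball (hin 1 (by simp))).1
  rwa [Q.kk_one] at this

/-- A local geodesic of `S` lifts to a geodesic of the cover with any given initial point. -/
lemma lift_geo [CompactSpace S] (hR : LocConv S R) {v : ℝ} {c : ℝ → S} (hg : Geo R v c) {y : X}
    (hy : cov.p y = c 0) :
    ∃ z, Q.D y z = v ∧ ∀ t ∈ Icc (0:ℝ) 1, cov.p (Q.kk y z t) = c t := by
  let γ : C(unitInterval, S) := ⟨fun t => c t, by
    have := hg.continuousOn hR.pos
    rw [continuousOn_iff_continuous_domRestrict] at this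
    exact this⟩
  have h0 : γ 0 = cov.p y := hy.symm
  set Γ := cov.covering.liftPath γ y h0
  have hΓ : ∀ t : unitInterval, cov.p (Γ t) = c t := fun t =>
    congrFun (cov.covering.liftPath_lifts γ y h0) t
  have hΓ0 : Γ 0 = y := cov.covering.liftPath_zero γ y h0
  have hgeo : Geo R v (fun t => cov.p (IccExtend (zero_le_one' ℝ) Γ t)) :=
    hg.congr (fun t ht => by rw [IccExtend_of_mem _ _ ht, hΓ])
  have := Q.eq_kk hR (c := IccExtend (zero_le_one' ℝ) Γ) Γ.continuous.Icc_extend'.continuousOn hgeo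
  rw [IccExtend_left, show (Γ ⟨0, _⟩) = y from hΓ0] at this
  refine ⟨_, this.1, fun t ht => ?_⟩
  rw [this.2 t ht, IccExtend_of_mem _ _ ht, hΓ]

/-- A point `s` close to the projection of `x` lifts to a point at the same distance from `x`. -/
lemma lift_point [CompactSpace S] (hR : LocConv S R) {x : X} {s : S}
    (h : dist (cov.p x) s < R / 64) : ∃ y, cov.p y = s ∧ Q.D x y = dist (cov.p x) s := by
  have hp := hR.pos
  obtain ⟨v, c, hc, c0, c1, hd⟩ := (Geo.const R (cov.p x)).exists_near hR (cov.p x) s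
    (by rw [dist_self]; positivity) (by rw [dist_comm]; exact h.le)
  have hv := hc.speed_le_of_start hp (Geo.const R (cov.p x)) c0 (d := dist s (cov.p x))
    (fun t ht => by simpa using hd t ht)
  rw [dist_comm] at hv
  obtain ⟨y, hy, hy'⟩ := Q.lift_geo hR hc c0.symm
  have h1 := hy' 1 (by simp)
  rw [Q.kk_one, c1] at h1
  refine ⟨y, h1, ?_⟩
  rw [Q.D_eq_dist hR (by rw [hy]; linarith), h1]

end KData

/-! ### The universal cover as a uniquely geodesic space -/

/-- A curve on `[0, 1]` which is locally isometric up to scaling by `v`. -/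
def LocGeo {Z : Type} [MetricSpace Z] (v : ℝ) (c : ℝ → Z) : Prop :=
  0 ≤ v ∧ ∃ ε > 0, ∀ s ∈ Icc (0:ℝ) 1, ∀ t ∈ Icc (0:ℝ) 1, |s - t| < ε →
    dist (c s) (c t) = v * |s - t|

/-- The universal cover with its length metric: a uniquely geodesic space `Y` with convex
metric, covering `S` by a map which is isometric at a uniform scale. The curve `κ x y` is the
geodesic from `x` to `y`, parametrized proportionally to arc length by `[0, 1]`. -/
structure GeoCover (S Y : Type) [MetricSpace S] [MetricSpace Y] where
  p : Y → S
  κ : Y → Y → ℝ → Y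
  δ : ℝ
  δ_pos : 0 < δ
  surj : Function.Surjective p
  κ_zero : ∀ x y, κ x y 0 = x
  κ_one : ∀ x y, κ x y 1 = y
  κ_dist : ∀ x y, ∀ s ∈ Icc (0:ℝ) 1, ∀ t ∈ Icc (0:ℝ) 1,
    dist (κ x y s) (κ x y t) = |s - t| * dist x y
  conv : ∀ x y z, ∀ t ∈ Icc (0:ℝ) 1, dist (κ x y t) (κ x z t) ≤ t * dist y z
  uniq : ∀ (v : ℝ) (c : ℝ → Y), LocGeo v c → ∀ t ∈ Icc (0:ℝ) 1, κ (c 0) (c 1) t = c t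
  isom : ∀ x y z, dist x y < δ → dist x z < δ → dist (p y) (p z) = dist y z
  lift_pt : ∀ x s, dist (p x) s < δ → ∃ y, p y = s ∧ dist x y = dist (p x) s
  lift : ∀ (v : ℝ) (c : ℝ → S), LocGeo v c → ∀ y, p y = c 0 →
    ∃ z, dist y z = v ∧ ∀ t ∈ Icc (0:ℝ) 1, p (κ y z t) = c t

/-- Builds a `GeoCover` from a distance function `D` with the required properties. -/
theorem mkGeoCover {S Y : Type} [MetricSpace S] (D : Y → Y → ℝ) (κ : Y → Y → ℝ → Y) (p : Y → S)
    (δ : ℝ) (hδ : 0 < δ) (h0 : ∀ x, D x x = 0) (hc : ∀ x y, D x y = D y x)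
    (ht : ∀ x y z, D x z ≤ D x y + D y z) (he : ∀ x y, D x y = 0 → x = y)
    (surj : Function.Surjective p)
    (κ_zero : ∀ x y, κ x y 0 = x) (κ_one : ∀ x y, κ x y 1 = y)
    (κ_dist : ∀ x y, ∀ s ∈ Icc (0:ℝ) 1, ∀ t ∈ Icc (0:ℝ) 1,
      D (κ x y s) (κ x y t) = |s - t| * D x y)
    (conv : ∀ x y z, ∀ t ∈ Icc (0:ℝ) 1, D (κ x y t) (κ x z t) ≤ t * D y z)
    (uniq : ∀ (v : ℝ) (c : ℝ → Y), (0 ≤ v ∧ ∃ ε > 0, ∀ s ∈ Icc (0:ℝ) 1, ∀ t ∈ Icc (0:ℝ) 1,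
      |s - t| < ε → D (c s) (c t) = v * |s - t|) →
      ∀ t ∈ Icc (0:ℝ) 1, κ (c 0) (c 1) t = c t)
    (isom : ∀ x y z, D x y < δ → D x z < δ → dist (p y) (p z) = D y z)
    (lift_pt : ∀ x s, dist (p x) s < δ → ∃ y, p y = s ∧ D x y = dist (p x) s)
    (lift : ∀ (v : ℝ) (c : ℝ → S), LocGeo v c → ∀ y, p y = c 0 →
      ∃ z, D y z = v ∧ ∀ t ∈ Icc (0:ℝ) 1, p (κ y z t) = c t) :
    ∃ (Y : Type) (_ : MetricSpace Y), Nonempty (GeoCover S Y) := by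
  let M : MetricSpace Y :=
    { dist := D
      dist_self := h0
      dist_comm := hc
      dist_triangle := ht
      eq_of_dist_eq_zero := fun {x y} h => he x y h }
  exact ⟨Y, M, ⟨⟨p, κ, δ, hδ, surj, κ_zero, κ_one, κ_dist, conv, uniq, isom, lift_pt, lift⟩⟩⟩

/-- The universal cover, with its length metric, is uniquely geodesic with convex divergence. -/
theorem exists_geoCover {S X : Type} [MetricSpace S] [MetricSpace X] (hS : ESCS S)
    (cov : UnivCover S X) : ∃ (Y : Type) (_ : MetricSpace Y), Nonempty (GeoCover S Y) := by
  have := hS.compact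
  have := cov.simplyConnected
  obtain ⟨R, hR⟩ := exists_locConv hS
  have hp := hR.pos
  obtain ⟨K, k, h1, h2, h3, h4, h5⟩ := exists_kappa hS cov hR
  let Q : KData cov R := ⟨K, k, h1, h2, h3, h4, h5⟩
  have hsurj : Function.Surjective cov.p := by
    intro s
    obtain ⟨x0⟩ : Nonempty X := inferInstance
    obtain ⟨γ, hγ, g0, g1, -⟩ := hS.length_metric (cov.p x0) s 1 one_pos
    let γ' : C(unitInterval, S) := ⟨fun t => γ t, by fun_prop⟩
    have h0 : γ' 0 = cov.p x0 := g0
    refine ⟨cov.covering.liftPath γ' x0 h0 1, ?_⟩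
    have := congrFun (cov.covering.liftPath_lifts γ' x0 h0) 1
    exact this.trans g1
  have huniq : ∀ (v : ℝ) (c : ℝ → X), (0 ≤ v ∧ ∃ ε > 0, ∀ s ∈ Icc (0:ℝ) 1, ∀ t ∈ Icc (0:ℝ) 1,
      |s - t| < ε → Q.D (c s) (c t) = v * |s - t|) →
      ∀ t ∈ Icc (0:ℝ) 1, Q.kk (c 0) (c 1) t = c t := by
    rintro v c ⟨hv, ε, hε, h⟩
    refine (Q.eq_kk hR (v := v) ?_ ?_).2
    · intro t ht U hU
      obtain ⟨r, hr, hrU⟩ := Q.exists_D_ball hR (c t) hU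
      rw [mem_map, Metric.mem_nhdsWithin_iff]
      refine ⟨min ε (r / (v + 1)), by positivity, fun s hs => hrU _ ?_⟩
      have h1 : |t - s| < min ε (r / (v + 1)) := by
        have := hs.1; rwa [mem_ball, dist_comm, Real.dist_eq] at this
      rw [h t ht s hs.2 (h1.trans_le (min_le_left _ _))]
      have h2 := h1.trans_le (min_le_right _ _)
      rw [lt_div_iff₀ (by positivity)] at h2
      nlinarith [abs_nonneg (t - s)]
    · refine geo_of_local hR hv (ε := min ε (R / 8 / (v + 1))) (by positivity) ?_
      intro s hs t ht hst
      have e := h s hs t ht (hst.trans_le (min_le_left _ _))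
      rw [← Q.D_eq_dist hR, e]
      have h2 := hst.trans_le (min_le_right _ _)
      rw [lt_div_iff₀ (by positivity)] at h2
      rw [e]
      nlinarith [abs_nonneg (s - t)]
  refine mkGeoCover Q.D Q.kk cov.p (R / 64) (by positivity) (Q.D_self hR) (Q.D_comm hR)
    (Q.D_triangle hR) (fun x y => Q.eq_of_D hR) hsurj Q.kk_zero Q.kk_one
    (fun x y s hs t ht => Q.D_kk hR x y hs ht) (fun x y z t ht => Q.D_conv hR x y z ht) huniq
    ?_ (fun x s h => Q.lift_point hR h) ?_
  · intro x y z h1 h2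
    have h3 := Q.D_triangle hR y x z
    rw [Q.D_comm hR y x] at h3
    exact (Q.D_eq_dist hR (by linarith)).symm
  · rintro v c ⟨hv, ε, hε, h⟩ y hy
    exact Q.lift_geo hR (geo_of_local hR hv hε h) hy

/-! ### Betweenness and concatenation of geodesics in the cover -/

/-- The point `a` lies on a shortest path from `x` to `y`. -/
def Btw {Y : Type} [MetricSpace Y] (x a y : Y) : Prop := dist x a + dist a y = dist x y

theorem Btw.symm {Y : Type} [MetricSpace Y] {x a y : Y} (h : Btw x a y) : Btw y a x := by
  unfold Btw at *
  rw [dist_comm y a, dist_comm a x, dist_comm y x]; linarith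

/-- If `b` is between `a` and `y`, and `a` between `x` and `y`, the four points are aligned. -/
theorem Btw.trans_right {Y : Type} [MetricSpace Y] {x a b y : Y} (h : Btw x a y)
    (h' : Btw a b y) : Btw x b y ∧ Btw x a b := by
  unfold Btw at *
  have h1 := dist_triangle x a b
  have h2 := dist_triangle x b y
  constructor <;> linarith

theorem Btw.trans_left {Y : Type} [MetricSpace Y] {x a b y : Y} (h : Btw x b y)
    (h' : Btw x a b) : Btw x a y ∧ Btw a b y := by
  obtain ⟨h1, h2⟩ := h.symm.trans_right h'.symm
  exact ⟨h1.symm, h2.symm⟩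

namespace GeoCover

variable {S Y : Type} [MetricSpace S] [MetricSpace Y] (G : GeoCover S Y)

theorem dist_left (x y : Y) {t : ℝ} (ht : t ∈ Icc (0:ℝ) 1) : dist x (G.κ x y t) = t * dist x y := by
  have := G.κ_dist x y 0 (by simp) t ht
  rwa [G.κ_zero, zero_sub, abs_neg, abs_of_nonneg ht.1] at this

theorem dist_right (x y : Y) {t : ℝ} (ht : t ∈ Icc (0:ℝ) 1) :
    dist (G.κ x y t) y = (1 - t) * dist x y := by
  have := G.κ_dist x y t ht 1 (by simp)
  rwa [G.κ_one, abs_sub_comm, abs_of_nonneg (by linarith [ht.2])] at this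

theorem btw_κ (x y : Y) {t : ℝ} (ht : t ∈ Icc (0:ℝ) 1) : Btw x (G.κ x y t) y := by
  unfold Btw
  rw [G.dist_left x y ht, G.dist_right x y ht]; ring

theorem κ_sub (x y : Y) {a b t : ℝ} (ha : a ∈ Icc (0:ℝ) 1) (hb : b ∈ Icc (0:ℝ) 1)
    (ht : t ∈ Icc (0:ℝ) 1) :
    G.κ (G.κ x y a) (G.κ x y b) t = G.κ x y (a + t * (b - a)) := by
  have hm : ∀ s ∈ Icc (0:ℝ) 1, a + s * (b - a) ∈ Icc (0:ℝ) 1 := by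
    rintro s ⟨h0, h1⟩
    have : a + s * (b - a) = (1 - s) * a + s * b := by ring
    rw [this]
    constructor
    · have := ha.1; have := hb.1; have : 0 ≤ 1 - s := by linarith
      positivity
    · nlinarith [ha.2, hb.2]
  have := G.uniq (|b - a| * dist x y) (fun s => G.κ x y (a + s * (b - a)))
    ⟨by positivity, 1, one_pos, fun s hs t ht _ => by
      rw [G.κ_dist x y _ (hm s hs) _ (hm t ht),
        show a + s * (b - a) - (a + t * (b - a)) = (s - t) * (b - a) by ring, abs_mul]
      ring⟩ t ht
  simpa using this

theorem κ_symm (x y : Y) {t : ℝ} (ht : t ∈ Icc (0:ℝ) 1) : G.κ y x t = G.κ x y (1 - t) := by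
  have := G.κ_sub x y (a := 1) (b := 0) (by simp) (by simp) ht
  rw [G.κ_zero, G.κ_one] at this
  rw [this]; congr 1; ring

theorem κ_init (x y : Y) {b t : ℝ} (hb : b ∈ Icc (0:ℝ) 1) (ht : t ∈ Icc (0:ℝ) 1) :
    G.κ x (G.κ x y b) t = G.κ x y (t * b) := by
  have := G.κ_sub x y (a := 0) (by simp) hb ht
  rw [G.κ_zero] at this
  rw [this]; congr 1; ring

theorem uniq' {v : ℝ} {c : ℝ → Y} (hv : dist (c 0) (c 1) = v)
    (h : ∀ s ∈ Icc (0:ℝ) 1, ∀ t ∈ Icc (0:ℝ) 1, s ≤ t → dist (c s) (c t) ≤ v * (t - s)) :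
    ∀ t ∈ Icc (0:ℝ) 1, G.κ (c 0) (c 1) t = c t := by
  have key : ∀ s ∈ Icc (0:ℝ) 1, ∀ t ∈ Icc (0:ℝ) 1, s ≤ t → dist (c s) (c t) = v * (t - s) := by
    intro s hs t ht hst
    have h1 := h 0 (by simp) s hs hs.1
    have h2 := h s hs t ht hst
    have h3 := h t ht 1 (by simp) ht.2
    have h4 := dist_triangle4 (c 0) (c s) (c t) (c 1)
    linarith
  refine G.uniq v c ⟨hv ▸ dist_nonneg, 1, one_pos, fun s hs t ht _ => ?_⟩
  rcases le_total s t with hst | hst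
  · rw [key s hs t ht hst, abs_sub_comm, abs_of_nonneg (by linarith)]
  · rw [dist_comm, key t ht s hs hst, abs_of_nonneg (by linarith)]

/-- Geodesics are unique: a point between `x` and `y` lies on the curve `κ x y`. -/
theorem btw_eq {x a y : Y} (h : Btw x a y) (hxy : x ≠ y) :
    dist x a / dist x y ∈ Icc (0:ℝ) 1 ∧ G.κ x y (dist x a / dist x y) = a := by
  have hD : 0 < dist x y := dist_pos.2 hxy
  unfold Btw at h
  set s := dist x a / dist x y with hs
  have hs1 : dist x a = s * dist x y := by rw [hs]; field_simp
  have hs2 : dist a y = (1 - s) * dist x y := by rw [sub_mul, ← hs1]; linarith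
  have hs0 : 0 ≤ s := by positivity
  have hsle : s ≤ 1 := by
    rw [hs, div_le_one hD]; linarith [dist_nonneg (x := a) (y := y)]
  refine ⟨⟨hs0, hsle⟩, ?_⟩
  rcases hs0.eq_or_lt with h0 | h0
  · rw [← h0, zero_mul] at hs1
    rw [← h0, G.κ_zero]; exact dist_eq_zero.1 hs1
  rcases hsle.eq_or_lt with h1 | h1
  · rw [h1, sub_self, zero_mul] at hs2
    rw [h1, G.κ_one]; exact (dist_eq_zero.1 hs2).symm
  have h1' : 0 < 1 - s := by linarith
  let c : ℝ → Y := fun t => if t ≤ s then G.κ x a (t / s) else G.κ a y ((t - s) / (1 - s))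
  have c0 : c 0 = x := by simp only [c]; rw [if_pos h0.le, zero_div, G.κ_zero]
  have c1 : c 1 = y := by
    simp only [c]; rw [if_neg (by linarith), div_self h1'.ne', G.κ_one]
  have cs : c s = a := by simp only [c]; rw [if_pos le_rfl, div_self h0.ne', G.κ_one]
  have cl : ∀ t ∈ Icc (0:ℝ) s, c t = G.κ x a (t / s) ∧ t / s ∈ Icc (0:ℝ) 1 := by
    intro t ht
    refine ⟨if_pos ht.2, div_nonneg ht.1 h0.le, (div_le_one h0).2 ht.2⟩
  have cr : ∀ t ∈ Icc s 1, c t = G.κ a y ((t - s) / (1 - s)) ∧ (t - s) / (1 - s) ∈ Icc (0:ℝ) 1 := by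
    intro t ht
    refine ⟨?_, div_nonneg (by linarith [ht.1]) h1'.le, (div_le_one h1').2 (by linarith [ht.2])⟩
    rcases ht.1.eq_or_lt with h | h
    · rw [← h, cs, sub_self, zero_div, G.κ_zero]
    · exact if_neg (not_le.2 h)
  have e1 : ∀ t ∈ Icc (0:ℝ) s, ∀ t' ∈ Icc (0:ℝ) s, t ≤ t' →
      dist (c t) (c t') = dist x y * (t' - t) := by
    intro t ht t' ht' htt
    rw [(cl t ht).1, (cl t' ht').1, G.κ_dist x a _ (cl t ht).2 _ (cl t' ht').2, hs1, ← sub_div,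
      abs_div, abs_of_pos h0, abs_sub_comm, abs_of_nonneg (by linarith)]
    field_simp
  have e2 : ∀ t ∈ Icc s 1, ∀ t' ∈ Icc s 1, t ≤ t' →
      dist (c t) (c t') = dist x y * (t' - t) := by
    intro t ht t' ht' htt
    rw [(cr t ht).1, (cr t' ht').1, G.κ_dist a y _ (cr t ht).2 _ (cr t' ht').2, hs2, ← sub_div,
      abs_div, abs_of_pos h1', abs_sub_comm, show t' - s - (t - s) = t' - t by ring,
      abs_of_nonneg (by linarith)]
    field_simp
  have := G.uniq' (v := dist x y) (c := c) (by rw [c0, c1]) (fun t ht t' ht' htt => by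
    rcases le_total t' s with h | h
    · exact (e1 t ⟨ht.1, htt.trans h⟩ t' ⟨ht'.1, h⟩ htt).le
    rcases le_total s t with h' | h'
    · exact (e2 t ⟨h', ht.2⟩ t' ⟨h, ht'.2⟩ htt).le
    · have a1 := e1 t ⟨ht.1, h'⟩ s ⟨h0.le, le_rfl⟩ h'
      have a2 := e2 s ⟨le_rfl, h1.le⟩ t' ⟨h, ht'.2⟩ h
      have := dist_triangle (c t) (c s) (c t')
      nlinarith) s ⟨h0.le, h1.le⟩
  rw [c0, c1, cs] at this
  exact this

/-- Local geodesics are geodesics: if `a` precedes `y` on a geodesic from `x`, and `y` is between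
`a` and `z`, then `y` is between `x` and `z`. -/
theorem btw_concat (G : GeoCover S Y) {x a y z : Y} (h : Btw x a y) (h' : Btw a y z) (hay : a ≠ y) : Btw x y z := by
  rcases eq_or_ne x y with rfl | hxy
  · unfold Btw; simp
  have hD : 0 < dist y x := dist_pos.2 hxy.symm
  obtain ⟨hs, hk⟩ := G.btw_eq h.symm hxy.symm
  set s := dist y a / dist y x with hsd
  have hs0 : 0 < s := div_pos (dist_pos.2 hay.symm) hD
  have hya : dist y a = s * dist y x := by rw [hsd]; field_simp
  have c := G.conv y x z s hs
  rw [hk] at c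
  have hb := (h'.trans_right (G.btw_κ y z hs)).2
  unfold Btw at *
  rw [G.dist_left y z hs] at hb
  have t1 := dist_triangle x y z
  rw [dist_comm a y] at hb
  rw [dist_comm x y] at t1 ⊢
  have : s * (dist y x + dist y z) ≤ s * dist x z := by nlinarith
  have := le_of_mul_le_mul_left this hs0
  linarith

theorem κ_of_btw {x a y : Y} (h : Btw x a y) (hxy : x ≠ y) {t : ℝ} (ht : t ∈ Icc (0:ℝ) 1) :
    G.κ x a t = G.κ x y (t * (dist x a / dist x y)) := by
  obtain ⟨hs, hk⟩ := G.btw_eq h hxy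
  conv_lhs => rw [← hk]
  exact G.κ_init x y hs ht

end GeoCover

namespace GeoCover

variable {S Y : Type} [MetricSpace S] [MetricSpace Y] (G : GeoCover S Y)

/-! ### Properness, extension and transport of geodesics -/

theorem locGeo_p (x y : Y) : LocGeo (dist x y) (fun t => G.p (G.κ x y t)) := by
  have hδ := G.δ_pos
  have hd : 0 ≤ dist x y := dist_nonneg
  refine ⟨dist_nonneg, G.δ / (dist x y + 1), by positivity, fun s hs t ht hst => ?_⟩
  rw [lt_div_iff₀ (by positivity)] at hst
  have h := G.κ_dist x y s hs t ht
  rw [G.isom (G.κ x y s) _ _ (by rwa [dist_self]) (by rw [h]; nlinarith [abs_nonneg (s - t)]), h,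
    mul_comm]

/-- A geodesic from `x` can be moved to any other point over `G.p x`, keeping its projection. -/
theorem transport {x y' : Y} (h : G.p y' = G.p x) (z : Y) :
    ∃ z', dist y' z' = dist x z ∧ ∀ t ∈ Icc (0:ℝ) 1, G.p (G.κ y' z' t) = G.p (G.κ x z t) :=
  G.lift _ _ (G.locGeo_p x z) y' (by rw [G.κ_zero, h])

theorem complete [CompactSpace S] (G : GeoCover S Y) : CompleteSpace Y := by
  have hδ := G.δ_pos
  refine Metric.complete_of_cauchySeq_tendsto fun u hu => ?_
  obtain ⟨N, hN⟩ := Metric.cauchySeq_iff'.1 hu (G.δ / 2) (by positivity)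
  have hN' : ∀ n ≥ N, dist (u N) (u n) < G.δ := fun n hn => by
    rw [dist_comm]; linarith [hN n hn]
  have hc : CauchySeq (fun n => G.p (u n)) := by
    rw [Metric.cauchySeq_iff]
    intro ε hε
    obtain ⟨M, hM⟩ := Metric.cauchySeq_iff.1 hu ε hε
    refine ⟨max M N, fun m hm n hn => ?_⟩
    rw [G.isom (u N) _ _ (hN' m (le_of_max_le_right hm)) (hN' n (le_of_max_le_right hn))]
    exact hM m (le_of_max_le_left hm) n (le_of_max_le_left hn)
  obtain ⟨s, hs⟩ := cauchySeq_tendsto_of_complete hc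
  have hle : dist (G.p (u N)) s ≤ G.δ / 2 := by
    refine le_of_tendsto (tendsto_const_nhds.dist hs) ?_
    filter_upwards [eventually_ge_atTop N] with n hn
    rw [G.isom (u N) _ _ (by rwa [dist_self]) (hN' n hn), dist_comm]
    exact (hN n hn).le
  obtain ⟨y, hy, hd⟩ := G.lift_pt (u N) s (by linarith)
  refine ⟨y, ?_⟩
  rw [tendsto_iff_dist_tendsto_zero] at hs ⊢
  refine hs.congr' ?_
  filter_upwards [eventually_ge_atTop N] with n hn
  rw [← hy, G.isom (u N) _ _ (hN' n hn) (by rw [hd]; linarith)]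

theorem totallyBounded_small [CompactSpace S] (x : Y) :
    TotallyBounded (closedBall x (G.δ / 2)) := by
  have hδ := G.δ_pos
  let q : closedBall x (G.δ / 2) → S := fun y => G.p y
  have hq : Isometry q := by
    refine Isometry.of_dist_eq fun a b => ?_
    have h1 := a.2; have h2 := b.2
    rw [mem_closedBall, dist_comm] at h1 h2
    exact G.isom x _ _ (by linarith) (by linarith)
  have h1 : TotallyBounded (q ⁻¹' univ) :=
    totallyBounded_preimage hq.isUniformInducing isCompact_univ.totallyBounded
  have h2 := h1.image (f := Subtype.val) uniformContinuous_subtype_val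
  rwa [preimage_univ, image_univ, Subtype.range_coe] at h2

theorem totallyBounded_ball [CompactSpace S] (x : Y) (n : ℕ) :
    TotallyBounded (closedBall x (n * (G.δ / 4))) := by
  have hδ := G.δ_pos
  induction n with
  | zero => exact (G.totallyBounded_small x).subset (closedBall_subset_closedBall (by simp; positivity))
  | succ n ih =>
    obtain ⟨t, ht, hcov⟩ := Metric.totallyBounded_iff.1 ih (G.δ / 4) (by positivity)
    refine TotallyBounded.subset (s₂ := ⋃ z ∈ t, closedBall z (G.δ / 2)) ?_ ?_
    · intro y hy
      rw [mem_closedBall, dist_comm] at hy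
      push_cast at hy
      -- step back from `y` towards `x` by at most `δ / 4`
      obtain ⟨w, hw1, hw2⟩ : ∃ w, dist x w ≤ n * (G.δ / 4) ∧ dist w y ≤ G.δ / 4 := by
        by_cases h : dist x y ≤ n * (G.δ / 4)
        · exact ⟨y, h, by rw [dist_self]; positivity⟩
        push Not at h
        have hn : (0:ℝ) ≤ n * (G.δ / 4) := by positivity
        have hD : 0 < dist x y := by linarith
        have hm : n * (G.δ / 4) / dist x y ∈ Icc (0:ℝ) 1 :=
          ⟨by positivity, (div_le_one hD).2 h.le⟩
        refine ⟨G.κ x y (n * (G.δ / 4) / dist x y), ?_, ?_⟩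
        · rw [G.dist_left x y hm, div_mul_cancel₀ _ hD.ne']
        · rw [G.dist_right x y hm, sub_mul, div_mul_cancel₀ _ hD.ne']; linarith
      have := hcov (mem_closedBall'.2 hw1)
      simp only [mem_iUnion, exists_prop] at this ⊢
      obtain ⟨z, hz, hzw⟩ := this
      refine ⟨z, hz, ?_⟩
      rw [mem_ball] at hzw
      rw [mem_closedBall, dist_comm]
      linarith [dist_triangle z w y, dist_comm w z]
    · exact (totallyBounded_biUnion ht).2 fun z _ => G.totallyBounded_small z

theorem proper [CompactSpace S] (G : GeoCover S Y) : ProperSpace Y := by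
  have hδ := G.δ_pos
  have := G.complete
  refine ⟨fun x r => ?_⟩
  obtain ⟨n, hn⟩ := exists_nat_ge (r / (G.δ / 4))
  rw [div_le_iff₀ (by positivity)] at hn
  exact TotallyBounded.isCompact_of_isComplete
    ((G.totallyBounded_ball x n).subset (closedBall_subset_closedBall hn))
    isClosed_closedBall.isComplete

/-- A geodesic segment extends a little beyond its end. -/
theorem extend_small (hS : ESCS S) (G : GeoCover S Y) {x y : Y} (hxy : x ≠ y) {η : ℝ}
    (hη : 0 < η) : ∃ z, Btw x y z ∧ 0 < dist y z ∧ dist y z ≤ η := by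
  have hδ := G.δ_pos
  obtain ⟨ε, hε, H⟩ := local_ext hS (G.p y)
  have hD : 0 < dist x y := dist_pos.2 hxy
  set m := min ε (min G.δ η) with hm
  have hm0 : 0 < m := by positivity
  have hmε : m ≤ ε := min_le_left _ _
  have hmδ : m ≤ G.δ := (min_le_right _ _).trans (min_le_left _ _)
  have hmη : m ≤ η := (min_le_right _ _).trans (min_le_right _ _)
  obtain ⟨t, ht, ht1⟩ : ∃ t ∈ Icc (0:ℝ) 1, 0 < (1 - t) * dist x y ∧ (1 - t) * dist x y < m := by
    refine ⟨1 - min 1 (m / 2 / dist x y), ⟨by simp, by simp; positivity⟩, ?_, ?_⟩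
    · rw [sub_sub_cancel]; positivity
    · rw [sub_sub_cancel]
      have : min 1 (m / 2 / dist x y) * dist x y ≤ m / 2 / dist x y * dist x y := by
        gcongr; exact min_le_right _ _
      rw [div_mul_cancel₀ _ hD.ne'] at this
      linarith
  set a := G.κ x y t with ha
  rw [← G.dist_right x y ht, ← ha] at ht1
  have hpa : dist (G.p a) (G.p y) = dist a y :=
    G.isom y _ _ (by rw [dist_comm]; linarith) (by rwa [dist_self])
  obtain ⟨b, hb1, hb2⟩ := H (G.p a) (by rw [mem_ball, hpa]; linarith)
    (fun h => by rw [h, dist_self] at hpa; linarith) (m / 2) (by linarith) (by linarith)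
  obtain ⟨z, hz, hyz⟩ := G.lift_pt y b (by linarith)
  rw [hb1] at hyz
  have haz : dist (G.p a) (G.p z) = dist a z :=
    G.isom y _ _ (by rw [dist_comm]; linarith) (by linarith)
  refine ⟨z, G.btw_concat (G.btw_κ x y ht) (?_ : Btw a y z) ?_, by linarith, by linarith⟩
  · unfold Btw; rw [← haz, hz, hb2, hpa, hyz]
  · rw [← dist_pos]; exact ht1.1

/-- Geodesic segments extend to any length. -/
theorem extend (hS : ESCS S) (G : GeoCover S Y) {x y : Y} (hxy : x ≠ y) {L : ℝ}
    (hL : dist x y ≤ L) : ∃ z, Btw x y z ∧ dist x z = L := by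
  have := hS.compact
  have := G.proper
  -- a longest extension of length at most `L` exists by compactness
  have hK : IsCompact (closedBall x L ∩ {z | Btw x y z}) := by
    refine (isCompact_closedBall x L).inter_right ?_
    unfold Btw
    exact isClosed_eq (by fun_prop) (by fun_prop)
  obtain ⟨z, ⟨hz1, hz2⟩, hmax⟩ := hK.exists_isMaxOn (f := fun z => dist x z)
    ⟨y, mem_closedBall'.2 hL, by rw [mem_ofPred_eq]; unfold Btw; simp⟩ (by fun_prop)
  refine ⟨z, hz2, le_antisymm (mem_closedBall'.1 hz1) ?_⟩
  by_contra hlt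
  push Not at hlt
  have hxz : x ≠ z := by
    rintro rfl
    have h : dist x y + dist y x = dist x x := hz2
    rw [dist_self, dist_comm y x] at h
    have := dist_pos.2 hxy
    linarith
  obtain ⟨w, hw, hw0, hwle⟩ := G.extend_small hS hxz (η := L - dist x z) (by linarith)
  have hxw : dist x w = dist x z + dist z w := Eq.symm hw
  have := hmax (a := w) ⟨mem_closedBall'.2 (by linarith), (hw.trans_left hz2).1⟩
  simp only [mem_ofPred_eq] at this
  linarith

/-- The fibre of a point is coarsely dense. -/
theorem fibre_dense [CompactSpace S] (P : S) : ∃ Δ : ℝ, ∀ y, ∃ v, G.p v = P ∧ dist y v ≤ Δ := by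
  have hδ := G.δ_pos
  obtain ⟨v0, hv0⟩ := G.surj P
  obtain ⟨t, -, ht, hcov⟩ := finite_cover_balls_of_compact (isCompact_univ (X := S)) hδ
  choose q hq using G.surj
  obtain ⟨M, hM⟩ := (ht.image fun s => dist (q s) v0).bddAbove
  refine ⟨G.δ + M, fun y => ?_⟩
  have := hcov (mem_univ (G.p y))
  simp only [mem_iUnion, exists_prop, mem_ball] at this
  obtain ⟨s, hs, hd⟩ := this
  obtain ⟨y', hy', hd'⟩ := G.lift_pt y s hd
  obtain ⟨v, hv, hv'⟩ := G.transport (x := q s) (y' := y') (by rw [hy', hq]) v0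
  refine ⟨v, ?_, ?_⟩
  · have := hv' 1 (by simp); rwa [G.κ_one, G.κ_one, hv0] at this
  · have := hM (mem_image_of_mem _ hs)
    linarith [dist_triangle y y' v]

/-- A fibre meets every ball in a finite set. -/
theorem fibre_finite [CompactSpace S] (P : S) (x : Y) (r : ℝ) :
    {v | G.p v = P ∧ dist x v ≤ r}.Finite := by
  have hδ := G.δ_pos
  have := G.proper
  obtain ⟨t, -, ht, hcov⟩ := finite_cover_balls_of_compact (isCompact_closedBall x r)
    (half_pos hδ)
  refine (ht.biUnion (t := fun z => {v | G.p v = P ∧ dist z v < G.δ / 2}) fun z _ => ?_).subset ?_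
  · refine Set.Subsingleton.finite fun v hv w hw => ?_
    have := G.isom z v w (by linarith [hv.2]) (by linarith [hw.2])
    rw [hv.1, hw.1, dist_self] at this
    exact dist_eq_zero.1 this.symm
  · rintro v ⟨h1, h2⟩
    have := hcov (mem_closedBall'.2 h2)
    simp only [mem_iUnion, exists_prop, mem_ball] at this ⊢
    obtain ⟨z, hz, hd⟩ := this
    exact ⟨z, hz, h1, by rwa [dist_comm]⟩

end GeoCover

/-! ### Directions at the lifts of a conical point -/

theorem eq_zero_of_tcos {a : ℝ} (ha : 0 ≤ a) (h : 1 ≤ tcos a) : a = 0 := by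
  by_contra h0
  have hp := Real.pi_pos
  have hpos : 0 < a := lt_of_le_of_ne ha (Ne.symm h0)
  have := Real.cos_lt_cos_of_nonneg_of_le_pi (x := 0) (y := min a Real.pi) le_rfl
    (min_le_right _ _) (lt_min hpos hp)
  rw [Real.cos_zero] at this
  unfold tcos at h
  linarith

theorem pi_le_of_tcos {a : ℝ} (ha : 0 ≤ a) (h : tcos a ≤ -1) : Real.pi ≤ a := by
  by_contra h0
  push Not at h0
  have := Real.cos_lt_cos_of_nonneg_of_le_pi ha le_rfl h0
  rw [Real.cos_pi] at this
  unfold tcos at h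
  rw [min_eq_left h0.le] at h
  linarith

/-- Directions at the lifts of a conical point `P` of cone angle `θ`: the direction at `v` of the
geodesic from `v` to `y` is an angle `dir v y ∈ [0, θ)`. -/
structure Apex {S Y : Type} [MetricSpace S] [MetricSpace Y] (G : GeoCover S Y) (P : S) where
  θ : ℝ
  two_pi_lt : 2 * Real.pi < θ
  dir : Y → Y → ℝ
  dir_mem : ∀ v y, G.p v = P → v ≠ y → dir v y ∈ Ico 0 θ
  /-- comparison with the Euclidean law of cosines -/
  law : ∀ v y z, G.p v = P → v ≠ y → v ≠ z → dist v y ^ 2 + dist v z ^ 2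
    - 2 * dist v y * dist v z * tcos (angDist θ (dir v y) (dir v z)) ≤ dist y z ^ 2
  pi_le : ∀ v y z, G.p v = P → v ≠ y → v ≠ z → Btw y v z →
    Real.pi ≤ angDist θ (dir v y) (dir v z)
  dir_btw : ∀ v w z, G.p v = P → v ≠ w → Btw v w z → dir v w = dir v z
  exists_dir : ∀ v a, G.p v = P → a ∈ Ico 0 θ → ∃ y, v ≠ y ∧ dir v y = a
  dir_transport : ∀ v w v' w', dist v w = dist v' w' →
    (∀ t ∈ Icc (0:ℝ) 1, G.p (G.κ v w t) = G.p (G.κ v' w' t)) → dir v w = dir v' w'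

theorem exists_apex {S Y : Type} [MetricSpace S] [MetricSpace Y] (hS : ESCS S) (G : GeoCover S Y)
    {P : S} (hP : P ∈ hS.conical) : Nonempty (Apex G P) := by
  have hδ := G.δ_pos
  obtain ⟨ε, hε, f, hf0, hf1, hf2, hf3⟩ := cone_chart hS hP
  have hgt := hS.angle_gt P hP
  set θ := hS.angle P with hθdef
  have hθ : 0 < θ := by have := Real.pi_pos; linarith
  set r := min ε G.δ / 2 with hr
  have hr0 : 0 < r := by positivity
  have hrε : r < ε := by
    have := min_le_left ε G.δ; rw [hr]; linarith
  have hrδ : r < G.δ := by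
    have := min_le_right ε G.δ; rw [hr]; linarith
  let dir : Y → Y → ℝ := fun v y => (f (G.p (G.κ v y (min 1 (r / dist v y))))).2
  -- points on `κ v y` at distance at most `r` from `v` lie in the cone chart
  have near : ∀ v y, G.p v = P → ∀ t ∈ Icc (0:ℝ) 1, t * dist v y ≤ r →
      G.p (G.κ v y t) ∈ ball P ε ∧ dist v (G.κ v y t) < G.δ ∧
      dist P (G.p (G.κ v y t)) = t * dist v y := by
    intro v y hv t ht h
    have h1 := G.dist_left v y ht
    have h2 : dist P (G.p (G.κ v y t)) = t * dist v y := by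
      rw [← hv, G.isom v v _ (by rwa [dist_self]) (by linarith), h1]
    refine ⟨?_, by linarith, h2⟩
    rw [mem_ball, dist_comm, h2]; linarith
  have t0 : ∀ v y : Y, v ≠ y → min 1 (r / dist v y) ∈ Icc (0:ℝ) 1 ∧ 0 < min 1 (r / dist v y) ∧
      min 1 (r / dist v y) * dist v y ≤ r := by
    intro v y h
    have hD : 0 < dist v y := dist_pos.2 h
    have h0 : 0 < min 1 (r / dist v y) := by positivity
    refine ⟨⟨h0.le, min_le_left _ _⟩, h0, ?_⟩
    have := min_le_right 1 (r / dist v y)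
    rwa [le_div_iff₀ hD] at this
  have key : ∀ v y, G.p v = P → v ≠ y → ∀ t ∈ Icc (0:ℝ) 1, 0 < t → t * dist v y ≤ r →
      f (G.p (G.κ v y t)) = (t * dist v y, dir v y) := by
    intro v y hv hvy t ht ht0 h
    have hD : 0 < dist v y := dist_pos.2 hvy
    obtain ⟨s1, s2, s3⟩ := t0 v y hvy
    set s := min 1 (r / dist v y) with hs
    obtain ⟨a1, a2, a3⟩ := near v y hv t ht h
    obtain ⟨b1, b2, b3⟩ := near v y hv s s1 s3
    have e := hf1 _ a1 _ b1
    rw [G.isom v _ _ a2 b2, G.κ_dist v y t ht s s1] at e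
    have e2 := coneDist_sq (θ := θ) (f (G.p (G.κ v y t))) (f (G.p (G.κ v y s)))
    rw [e, mul_pow, sq_abs, (hf2 _ a1).1, (hf2 _ b1).1, a3, b3] at e2
    set c := tcos (angDist θ (f (G.p (G.κ v y t))).2 (f (G.p (G.κ v y s))).2) with hc
    have hc1 : c = 1 := by
      have : (2 * t * s * dist v y ^ 2) * c = (2 * t * s * dist v y ^ 2) * 1 := by linarith
      exact mul_left_cancel₀ (by positivity) this
    have h0 := eq_zero_of_tcos (angDist_nonneg _ _ _) hc1.ge
    have := angDist_eq_zero hθ (hf2 _ a1).2 (hf2 _ b1).2 h0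
    refine Prod.ext ?_ this
    rw [(hf2 _ a1).1, a3]
  -- a common small parameter for two geodesics from `v`
  have small : ∀ v y z : Y, ∃ t ∈ Icc (0:ℝ) 1, 0 < t ∧ t * dist v y ≤ r ∧ t * dist v z ≤ r := by
    intro v y z
    have h1 : 0 ≤ dist v y := dist_nonneg
    have h2 : 0 ≤ dist v z := dist_nonneg
    have h3 : 0 < min 1 (r / (dist v y + dist v z + 1)) := by positivity
    have h4 := min_le_right 1 (r / (dist v y + dist v z + 1))
    rw [le_div_iff₀ (by positivity)] at h4
    refine ⟨_, ⟨h3.le, min_le_left _ _⟩, h3, ?_, ?_⟩ <;> nlinarith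
  have sq : ∀ v y z, G.p v = P → v ≠ y → v ≠ z → ∃ t ∈ Icc (0:ℝ) 1, 0 < t ∧
      dist (G.κ v y t) (G.κ v z t) ^ 2 = t ^ 2 * (dist v y ^ 2 + dist v z ^ 2
    - 2 * dist v y * dist v z * tcos (angDist θ (dir v y) (dir v z))) := by
    intro v y z hv hy hz
    obtain ⟨t, ht, ht0, h1, h2⟩ := small v y z
    refine ⟨t, ht, ht0, ?_⟩
    obtain ⟨a1, a2, a3⟩ := near v y hv t ht h1
    obtain ⟨b1, b2, b3⟩ := near v z hv t ht h2
    have e := hf1 _ a1 _ b1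
    rw [G.isom v _ _ a2 b2, key v y hv hy t ht ht0 h1, key v z hv hz t ht ht0 h2] at e
    have e2 := coneDist_sq (θ := θ) (t * dist v y, dir v y) (t * dist v z, dir v z)
    rw [← e, e2]
    ring
  refine ⟨⟨θ, hgt, dir, ?_, ?_, ?_, ?_, ?_, ?_⟩⟩
  · intro v y hv hy
    obtain ⟨s1, s2, s3⟩ := t0 v y hy
    exact (hf2 _ (near v y hv _ s1 s3).1).2
  · intro v y z hv hy hz
    obtain ⟨t, ht, ht0, h⟩ := sq v y z hv hy hz
    have c := G.conv v y z t ht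
    have : dist (G.κ v y t) (G.κ v z t) ^ 2 ≤ (t * dist y z) ^ 2 := by gcongr
    rw [h, mul_pow] at this
    exact le_of_mul_le_mul_left this (by positivity)
  · intro v y z hv hy hz hb
    obtain ⟨t, ht, ht0, h⟩ := sq v y z hv hy hz
    have h1 := G.dist_right v y ht
    have h2 := G.dist_right v z ht
    have h3 := dist_triangle4 y (G.κ v y t) (G.κ v z t) z
    unfold Btw at hb
    rw [dist_comm y (G.κ v y t), h1, h2, ← hb, dist_comm y v] at h3
    have hD1 : 0 < dist v y := dist_pos.2 hy
    have hD2 : 0 < dist v z := dist_pos.2 hz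
    have h4 : t * (dist v y + dist v z) ≤ dist (G.κ v y t) (G.κ v z t) := by linarith
    have h5 : (t * (dist v y + dist v z)) ^ 2 ≤ dist (G.κ v y t) (G.κ v z t) ^ 2 := by gcongr
    rw [h, mul_pow] at h5
    have h6 := le_of_mul_le_mul_left h5 (by positivity)
    refine pi_le_of_tcos (angDist_nonneg _ _ _) ?_
    have h7 : 2 * dist v y * dist v z * tcos (angDist θ (dir v y) (dir v z)) ≤
      2 * dist v y * dist v z * (-1) := by linarith
    exact le_of_mul_le_mul_left h7 (by positivity)
  · intro v w z hv hw hb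
    have hD1 : 0 < dist v w := dist_pos.2 hw
    have hz : v ≠ z := by
      rintro rfl
      unfold Btw at hb
      rw [dist_self] at hb
      linarith [dist_nonneg (x := w) (y := v)]
    have hD2 : 0 < dist v z := dist_pos.2 hz
    obtain ⟨s1, s2, s3⟩ := t0 v w hw
    set s := min 1 (r / dist v w)
    have e1 := key v w hv hw s s1 s2 s3
    have hq := (G.btw_eq hb hz).1
    have hq0 : 0 < dist v w / dist v z := by positivity
    rw [G.κ_of_btw hb hz s1] at e1
    have e2 := key v z hv hz (s * (dist v w / dist v z))
      ⟨by positivity, by nlinarith [s1.2, hq.2]⟩ (by positivity)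
      (by rw [mul_assoc, div_mul_cancel₀ _ hD2.ne']; exact s3)
    rw [e1] at e2
    exact (Prod.ext_iff.1 e2).2
  · intro v a hv ha
    obtain ⟨q, hq, hfq⟩ := hf3 r a hr0 hrε ha
    have hd : dist P q = r := by rw [← (hf2 q hq).1, hfq]
    obtain ⟨y, hy, hvy⟩ := G.lift_pt v q (by rw [hv, hd]; exact hrδ)
    rw [hv, hd] at hvy
    refine ⟨y, dist_pos.1 (by linarith), ?_⟩
    simp only [dir]
    rw [hvy, div_self hr0.ne', min_self, G.κ_one, hy, hfq]
  · intro v w v' w' hd h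
    simp only [dir]
    rw [hd]
    have hn : 0 ≤ dist v' w' := dist_nonneg
    rw [h _ ⟨by positivity, min_le_left _ _⟩]

namespace Apex

variable {S Y : Type} [MetricSpace S] [MetricSpace Y] {G : GeoCover S Y} {P : S} (A : Apex G P)

theorem θ_pos : 0 < A.θ := by
  have := A.two_pi_lt; have := Real.pi_pos; linarith

theorem half_θ : Real.pi < A.θ / 2 := by
  have := A.two_pi_lt; linarith

/-- Geodesics meeting at a vertex at an angle at least `π` form a geodesic. -/
theorem btw_of_pi_le {v y z : Y} (hv : G.p v = P) (hy : v ≠ y) (hz : v ≠ z)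
    (h : Real.pi ≤ angDist A.θ (A.dir v y) (A.dir v z)) : Btw y v z := by
  have l := A.law v y z hv hy hz
  rw [tcos_of_ge h] at l
  have h1 := dist_triangle y v z
  rw [dist_comm y v] at h1
  have : (dist v y + dist v z) ^ 2 ≤ dist y z ^ 2 := by nlinarith
  have := abs_le_of_sq_le_sq this dist_nonneg
  unfold Btw
  rw [dist_comm y v]
  linarith [this, le_abs_self (dist v y + dist v z)]

/-- Points at bounded distance, seen from far away, have nearly the same direction. -/
theorem angle_small (ε : ℝ) (hε : 0 < ε) (C : ℝ) : ∃ M, ∀ v y z, G.p v = P → v ≠ y → v ≠ z →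
    dist y z ≤ C → M ≤ dist v y → angDist A.θ (A.dir v y) (A.dir v z) < ε := by
  have hc : tcos ε < 1 := by
    by_contra h
    push Not at h
    exact hε.ne' (eq_zero_of_tcos hε.le h)
  set c := tcos ε
  refine ⟨|C| + 1 + C ^ 2 / (1 - c), fun v y z hv hy hz hd hM => ?_⟩
  by_contra hcon
  push Not at hcon
  have l := A.law v y z hv hy hz
  have hl := tcos_anti hε.le hcon
  have h1c : 0 < 1 - c := by linarith
  have hC : 0 ≤ C := dist_nonneg.trans hd
  rw [abs_of_nonneg hC] at hM
  have hq : 0 ≤ C ^ 2 / (1 - c) := by positivity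
  have htri := dist_triangle v z y
  rw [dist_comm z y] at htri
  have e1 : C ^ 2 + (1 - c) ≤ dist v y * (1 - c) := by
    have : C ^ 2 / (1 - c) + 1 ≤ dist v y := by linarith
    have := mul_le_mul_of_nonneg_right this h1c.le
    rwa [add_mul, div_mul_cancel₀ _ h1c.ne', one_mul] at this
  have e2 : 1 ≤ dist v z := by linarith
  have e3 : dist v y * dist v z * tcos (angDist A.θ (A.dir v y) (A.dir v z)) ≤
      dist v y * dist v z * c := by gcongr
  have e4 : dist y z ^ 2 ≤ C ^ 2 := by gcongr
  have e5 : (C ^ 2 + (1 - c)) * 1 ≤ dist v y * (1 - c) * dist v z := by gcongr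
  nlinarith [sq_nonneg (dist v y - dist v z), sq_nonneg C]

/-- Two angles of a geodesic triangle add up to at most `π`. -/
theorem angle_sum {v w w' : Y} (hw : G.p w = P) (hw' : G.p w' = P) (h : w ≠ v) (h' : w' ≠ v)
    (hww : w ≠ w') (hα : angDist A.θ (A.dir w v) (A.dir w w') < Real.pi)
    (hβ : angDist A.θ (A.dir w' v) (A.dir w' w) < Real.pi) :
    angDist A.θ (A.dir w v) (A.dir w w') + angDist A.θ (A.dir w' v) (A.dir w' w) ≤ Real.pi := by
  have l1 := A.law w v w' hw h hww
  have l2 := A.law w' v w hw' h' hww.symm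
  have hα0 := angDist_nonneg A.θ (A.dir w v) (A.dir w w')
  have hβ0 := angDist_nonneg A.θ (A.dir w' v) (A.dir w' w)
  set α := angDist A.θ (A.dir w v) (A.dir w w')
  set β := angDist A.θ (A.dir w' v) (A.dir w' w)
  rw [tcos_of_le hα.le] at l1
  rw [tcos_of_le hβ.le] at l2
  by_contra hcon
  push Not at hcon
  have hc : Real.cos β < - Real.cos α := by
    rw [← Real.cos_pi_sub]
    exact Real.cos_lt_cos_of_nonneg_of_le_pi (by linarith) hβ.le (by linarith)
  have hT : 0 < dist w w' := dist_pos.2 hww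
  have hℓ : 0 < dist w' v := dist_pos.2 h'
  rw [dist_comm w' w] at l2
  rw [dist_comm v w'] at l1
  rw [dist_comm v w] at l2
  have t1 := dist_triangle w w' v
  have t2 := dist_triangle w' w v
  rw [dist_comm w' w] at t2
  have e : dist w w' ≤ dist w v * Real.cos α + dist w' v * Real.cos β := by
    have : dist w w' * dist w w' ≤
      dist w w' * (dist w v * Real.cos α + dist w' v * Real.cos β) := by nlinarith
    exact le_of_mul_le_mul_left this hT
  have e2 : dist w' v * Real.cos β < dist w' v * (- Real.cos α) := by gcongr
  have c1 := Real.cos_le_one α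
  have c2 := Real.neg_one_le_cos α
  have e3 : dist w w' < (dist w v - dist w' v) * Real.cos α := by linarith
  have e4 : (dist w v - dist w' v) * Real.cos α ≤ |dist w v - dist w' v| * |Real.cos α| := by
    rw [← abs_mul]; exact le_abs_self _
  have e5 : |dist w v - dist w' v| ≤ dist w w' := abs_le.2 ⟨by linarith, by linarith⟩
  have e6 : |Real.cos α| ≤ 1 := abs_le.2 ⟨c2, c1⟩
  nlinarith [abs_nonneg (dist w v - dist w' v), abs_nonneg (Real.cos α)]

/-! ### Loops at the conical point -/

/-- A geodesic loop at `P` of length `ℓ`, leaving in direction `a`; the direction at its end,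
pointing back along the loop, is `b`. Encoded by a lift joining two points of the fibre. -/
def Loop (ℓ a b : ℝ) : Prop :=
  ∃ v w, G.p v = P ∧ G.p w = P ∧ v ≠ w ∧ dist v w = ℓ ∧ A.dir v w = a ∧ A.dir w v = b

variable {A}

theorem transport_vertex {v w v' : Y} (hv : G.p v = P) (hw : G.p w = P) (hvw : v ≠ w)
    (hv' : G.p v' = P) : ∃ w', G.p w' = P ∧ v' ≠ w' ∧ dist v' w' = dist v w ∧
      A.dir v' w' = A.dir v w ∧ A.dir w' v' = A.dir w v ∧
      ∀ t ∈ Icc (0:ℝ) 1, G.p (G.κ v' w' t) = G.p (G.κ v w t) := by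
  obtain ⟨w', hd, h⟩ := G.transport (x := v) (y' := v') (by rw [hv, hv']) w
  refine ⟨w', ?_, ?_, hd, A.dir_transport _ _ _ _ hd h,
    A.dir_transport _ _ _ _ (by rw [dist_comm, hd, dist_comm]) fun t ht => ?_, h⟩
  · have := h 1 (by simp); rwa [G.κ_one, G.κ_one, hw] at this
  · rw [← dist_pos, hd]; exact dist_pos.2 hvw
  · rw [G.κ_symm v' w' ht, G.κ_symm v w ht, h _ ⟨by linarith [ht.2], by linarith [ht.1]⟩]

theorem Loop.start {ℓ a b : ℝ} (h : A.Loop ℓ a b) {v : Y} (hv : G.p v = P) :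
    ∃ w, G.p w = P ∧ v ≠ w ∧ dist v w = ℓ ∧ A.dir v w = a ∧ A.dir w v = b := by
  obtain ⟨v0, w0, h1, h2, h3, h4, h5, h6⟩ := h
  obtain ⟨w, a1, a2, a3, a4, a5, -⟩ := A.transport_vertex h1 h2 h3 hv
  exact ⟨w, a1, a2, a3.trans h4, a4.trans h5, a5.trans h6⟩

theorem Loop.symm {ℓ a b : ℝ} (h : A.Loop ℓ a b) : A.Loop ℓ b a := by
  obtain ⟨v, w, h1, h2, h3, h4, h5, h6⟩ := h
  exact ⟨w, v, h2, h1, h3.symm, by rw [dist_comm, h4], h6, h5⟩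

theorem Loop.pos {ℓ a b : ℝ} (h : A.Loop ℓ a b) : 0 < ℓ := by
  obtain ⟨v, w, h1, h2, h3, h4, h5, h6⟩ := h
  rw [← h4]; exact dist_pos.2 h3

theorem Loop.mem {ℓ a b : ℝ} (h : A.Loop ℓ a b) : a ∈ Ico 0 A.θ ∧ b ∈ Ico 0 A.θ := by
  obtain ⟨v, w, h1, h2, h3, h4, h5, h6⟩ := h
  exact ⟨h5 ▸ A.dir_mem v w h1 h3, h6 ▸ A.dir_mem w v h2 h3.symm⟩

/-- Concatenation of geodesics meeting at a vertex with angle at least `π`. -/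
theorem concat {x v y : Y} (hv : G.p v = P) (hx : v ≠ x) (hy : v ≠ y)
    (h : Real.pi ≤ angDist A.θ (A.dir v x) (A.dir v y)) :
    Btw x v y ∧ dist x y = dist x v + dist v y ∧ x ≠ y := by
  have hb := A.btw_of_pi_le hv hx hy h
  have hd : dist x y = dist x v + dist v y := Eq.symm hb
  refine ⟨hb, hd, ?_⟩
  rw [← dist_pos, hd]
  have := dist_pos.2 hx.symm
  positivity

theorem Loop.trans {ℓ a b ℓ' a' b' : ℝ} (h : A.Loop ℓ a b) (h' : A.Loop ℓ' a' b')
    (hba : Real.pi ≤ angDist A.θ b a') : A.Loop (ℓ + ℓ') a b' := by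
  obtain ⟨u, v, h1, h2, h3, h4, h5, h6⟩ := h
  obtain ⟨w, k2, k3, k4, k5, k6⟩ := h'.start h2
  obtain ⟨hb, hd, hne⟩ := A.concat h2 h3.symm k3 (by rw [h6, k5]; exact hba)
  exact ⟨u, w, h1, k2, hne, by rw [hd, h4, k4],
    by rw [← A.dir_btw u v w h1 h3 hb, h5], by rw [← A.dir_btw w v u k2 k3.symm hb.symm, k6]⟩

theorem angDist_half (b : ℝ) : angDist A.θ b (b + A.θ / 2) = A.θ / 2 := by
  have := A.θ_pos
  rw [angDist_of_abs_le A.θ_pos] <;>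
    rw [show b - (b + A.θ / 2) = -(A.θ / 2) by ring, abs_neg, abs_of_pos (by positivity)]

/-- Directions close to the one opposite to `b` make an angle of at least `π` with `b`. -/
theorem pi_le_of_near {a b η : ℝ} (h : angDist A.θ (b + A.θ / 2) a ≤ η)
    (hη : η ≤ A.θ / 2 - Real.pi) : Real.pi ≤ angDist A.θ b a := by
  have h1 := angDist_triangle A.θ_pos b a (b + A.θ / 2)
  rw [A.angDist_half, angDist_comm a] at h1
  linarith

/-- Vertices can be found far away in any approximate direction. -/
theorem steer (hS : ESCS S) (A : Apex G P) {v : Y} (hv : G.p v = P) (u : ℝ) {ε : ℝ} (hε : 0 < ε)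
    (L : ℝ) : ∃ w, G.p w = P ∧ v ≠ w ∧ L ≤ dist v w ∧ angDist A.θ u (A.dir v w) < ε := by
  have := hS.compact
  obtain ⟨Δ, hΔ⟩ := G.fibre_dense P
  obtain ⟨M, hM⟩ := A.angle_small ε hε Δ
  obtain ⟨y0, hy0, hd0⟩ := A.exists_dir v _ hv (angMod_mem A.θ_pos u)
  set K := max (max M (|L| + |Δ| + 1)) (dist v y0) with hK
  obtain ⟨y, hb, hy⟩ := G.extend hS hy0 (L := K) (le_max_right _ _)
  have hKM : M ≤ K := (le_max_left _ _).trans (le_max_left _ _)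
  have hKL : |L| + |Δ| + 1 ≤ K := (le_max_right _ _).trans (le_max_left _ _)
  obtain ⟨w, hw, hwy⟩ := hΔ y
  have htri := dist_triangle v w y
  rw [dist_comm w y] at htri
  have a1 := le_abs_self L
  have a2 := le_abs_self Δ
  have hL : |L| + 1 ≤ dist v w := by linarith
  have hvw : v ≠ w := dist_pos.1 (by linarith [abs_nonneg L])
  have hvy : v ≠ y := dist_pos.1 (by linarith [abs_nonneg L, abs_nonneg Δ])
  refine ⟨w, hw, hvw, by linarith, ?_⟩
  have := hM v y w hv hvy hvw hwy (by linarith)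
  rwa [← A.dir_btw v y0 y hv hy0 hb, hd0, angDist_comm, angDist_angMod_right, angDist_comm] at this

end Apex

namespace Apex

variable {S Y : Type} [MetricSpace S] [MetricSpace Y] {G : GeoCover S Y} {P : S} {A : Apex G P}

/-! ### Loops with prescribed initial and final directions -/

theorem exists_loop_near (hS : ESCS S) (A : Apex G P) (u : ℝ) {ε : ℝ} (hε : 0 < ε) :
    ∃ ℓ a b, A.Loop ℓ a b ∧ angDist A.θ u a < ε := by
  obtain ⟨v, hv⟩ := G.surj P
  obtain ⟨w, h1, h2, -, h4⟩ := A.steer hS hv u hε 0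
  exact ⟨_, _, _, ⟨v, w, hv, h1, h2, rfl, rfl, rfl⟩, h4⟩

/-- A loop whose powers are geodesic with an angle strictly larger than `π` at the vertex. Such a
loop is found among the subwords of an infinite chain of loops, each starting nearly opposite to
the end of the previous one, by pigeonhole on the final directions. -/
theorem exists_strict_loop (hS : ESCS S) (A : Apex G P) : ∃ T x y c, A.Loop T x y ∧ 0 < c ∧
    Real.pi + c ≤ angDist A.θ x y := by
  have hhalf := A.half_θ
  set η := (A.θ / 2 - Real.pi) / 4 with hη
  have hη0 : 0 < η := by rw [hη]; linarith
  have step : ∀ b : ℝ, ∃ ℓ a b', A.Loop ℓ a b' ∧ angDist A.θ (b + A.θ / 2) a < η :=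
    fun b => A.exists_loop_near hS _ hη0
  choose ℓ a nx hL hnear using step
  let b : ℕ → ℝ := fun n => nx^[n] (nx 0)
  have bsucc : ∀ n, b (n + 1) = nx (b n) := fun n => Function.iterate_succ_apply' nx n _
  have bmem : ∀ n, b n ∈ Icc 0 A.θ := by
    intro n
    have : ∀ x, nx x ∈ Icc 0 A.θ := fun x => Ico_subset_Icc_self (hL x).mem.2
    cases n with
    | zero => exact this _
    | succ n => rw [bsucc]; exact this _
  obtain ⟨i, j, hij, hd⟩ : ∃ i j, i < j ∧ |b i - b j| < η := by
    obtain ⟨z, -, φ, hφ, hz⟩ := isCompact_Icc.tendsto_subseq bmem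
    obtain ⟨N, hN⟩ := Metric.cauchySeq_iff.1 hz.cauchySeq η hη0
    exact ⟨φ N, φ (N + 1), hφ N.lt_succ_self, hN N le_rfl (N + 1) (by omega)⟩
  have word : ∀ k, ∃ L, A.Loop L (a (b i)) (b (i + k + 1)) := by
    intro k
    induction k with
    | zero => exact ⟨_, by rw [bsucc]; exact hL _⟩
    | succ k ih =>
      obtain ⟨L, ih⟩ := ih
      refine ⟨L + ℓ (b (i + k + 1)), ?_⟩
      rw [show i + (k + 1) + 1 = (i + k + 1) + 1 by ring, bsucc (i + k + 1)]
      exact ih.trans (hL _) (A.pi_le_of_near (hnear _).le (by linarith))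
  obtain ⟨k, rfl⟩ : ∃ k, j = i + k + 1 := ⟨j - i - 1, by omega⟩
  obtain ⟨L, hw⟩ := word k
  refine ⟨L, _, _, 2 * η, hw, by linarith, ?_⟩
  set c := b (i + k + 1)
  have h1 := angDist_triangle A.θ_pos (b i) c (b i + A.θ / 2)
  have h2 := angDist_triangle A.θ_pos c (a (b i)) (b i + A.θ / 2)
  have h3 := angDist_le A.θ (b i) c 0
  have h4 := hnear (b i)
  rw [A.angDist_half] at h1
  have e1 := angDist_comm (θ := A.θ) c (a (b i))
  have e2 := angDist_comm (θ := A.θ) (a (b i)) (b i + A.θ / 2)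
  simp only [Int.cast_zero, mul_zero, add_zero] at h3
  linarith

theorem exists_pos_le {F : Set ℝ} (hF : F.Finite) {φ : ℝ → ℝ} (h : ∀ x ∈ F, 0 < φ x) :
    ∃ ε > 0, ∀ x ∈ F, ε ≤ φ x := by
  rcases F.eq_empty_or_nonempty with rfl | hne
  · exact ⟨1, one_pos, by simp⟩
  · obtain ⟨m, hm, hmin⟩ := exists_min_image F φ hF hne
    exact ⟨φ m, h m hm, hmin⟩

/-- Loops may start in any given arc of directions and end exactly like a given strict loop `τ`.
Starting with a vertex `w` seen from `v` in the given arc, one follows the chain of lifts of `τ`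
from `w`: either the chain runs back towards `v`, which happens for a bounded time only because
the initial direction avoids those of all short loops, or the angle at the chain between `v` and
the chain increases by a definite amount at each step until it exceeds `π`. -/
theorem exists_loop_end (hS : ESCS S) {T x y c : ℝ} (τ : A.Loop T x y) (hc : 0 < c)
    (hxy : Real.pi + c ≤ angDist A.θ x y) (u : ℝ) {ε : ℝ} (hε : 0 < ε) :
    ∃ ℓ a, A.Loop ℓ a y ∧ angDist A.θ u a < ε := by
  have := hS.compact
  have hT := τ.pos
  have hπ := Real.pi_pos
  have hθ := A.θ_pos
  obtain ⟨v, hv⟩ := G.surj P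
  obtain ⟨m, hm⟩ := exists_nat_ge (Real.pi / c)
  rw [div_le_iff₀ hc] at hm
  obtain ⟨M, hM⟩ := A.angle_small (ε / 2) (by positivity) ((m + 2) * T)
  set M0 := max M 0 + (m + 2) * T with hM0
  have hmT : 0 ≤ (m + 2) * T := by positivity
  have hM00 : 0 ≤ M0 := by have := le_max_right M 0; positivity
  have hMM : M ≤ M0 := by have := le_max_left M 0; linarith
  -- directions of short loops
  set F := {d | ∃ w, G.p w = P ∧ v ≠ w ∧ dist v w ≤ M0 + T ∧ A.dir v w = d} with hFdef
  have hF : F.Finite := by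
    refine ((G.fibre_finite P v (M0 + T)).image (A.dir v)).subset ?_
    rintro d ⟨w, h1, h2, h3, rfl⟩
    exact ⟨w, ⟨h1, h3⟩, rfl⟩
  have hFm : ∀ d ∈ F, d ∈ Ico 0 A.θ := by
    rintro d ⟨w, h1, h2, h3, rfl⟩
    exact A.dir_mem v w hv h2
  have hu0 := angMod_mem hθ u
  obtain ⟨u', hu', hu'F⟩ : ∃ u' ∈ Ioo (angMod A.θ u) (min A.θ (angMod A.θ u + ε / 4)), u' ∉ F := by
    have := (Ioo_infinite (a := angMod A.θ u) (b := min A.θ (angMod A.θ u + ε / 4))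
      (lt_min hu0.2 (by linarith))).sdiff hF
    obtain ⟨z, hz⟩ := this.nonempty
    exact ⟨z, hz.1, hz.2⟩
  have hu'm : u' ∈ Ico 0 A.θ := ⟨hu0.1.trans hu'.1.le, hu'.2.trans_le (min_le_left _ _)⟩
  have huu : angDist A.θ u u' ≤ ε / 4 := by
    have h := angDist_le A.θ u' (angMod A.θ u) 0
    rw [angDist_angMod_right, angDist_comm] at h
    simp only [Int.cast_zero, mul_zero, add_zero] at h
    rw [abs_of_pos (by linarith [hu'.1])] at h
    linarith [hu'.2.trans_le (min_le_right A.θ (angMod A.θ u + ε / 4))]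
  obtain ⟨ε', hε', hεF⟩ := exists_pos_le hF (φ := fun d => angDist A.θ u' d) (by
    intro d hd
    refine lt_of_le_of_ne (angDist_nonneg _ _ _) fun h => hu'F ?_
    rwa [angDist_eq_zero hθ hu'm (hFm d hd) h.symm])
  obtain ⟨w0, hw0, hvw0, -, hdir0⟩ := A.steer hS hv u' (ε := min ε' (ε / 4)) (by positivity) 0
  set d0 := A.dir v w0 with hd0
  have hd0F : d0 ∉ F := fun h => by
    have := hεF d0 h
    linarith [hdir0.trans_le (min_le_left _ _)]
  have hud0 : angDist A.θ u d0 < ε / 2 := by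
    have := angDist_triangle hθ u u' d0
    linarith [hdir0.trans_le (min_le_right _ _)]
  -- one step along the chain of lifts of `τ`
  choose! nx n1 n2 n3 n4 n5 using fun w (hw : G.p w = P) => τ.start hw
  have hsum : ∀ w, Real.pi + c ≤ angDist A.θ (A.dir w v) x + angDist A.θ (A.dir w v) y := by
    intro w
    have := angDist_triangle hθ x (A.dir w v) y
    linarith [angDist_comm (θ := A.θ) x (A.dir w v)]
  have s1 : ∀ w, G.p w = P → w ≠ v → nx w ≠ v →
      Btw w (nx w) v ∨ c ≤ angDist A.θ (A.dir (nx w) v) x := by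
    intro w hw h h'
    by_cases hβ : angDist A.θ (A.dir (nx w) v) y < Real.pi
    · right; linarith [hsum (nx w)]
    · left
      push Not at hβ
      rw [← n5 w hw] at hβ
      exact (A.btw_of_pi_le (n1 w hw) h' (n2 w hw).symm hβ).symm
  have s2 : ∀ w, G.p w = P → w ≠ v → nx w ≠ v → 0 < angDist A.θ (A.dir w v) x →
      angDist A.θ (A.dir w v) x < Real.pi →
      angDist A.θ (A.dir w v) x + c ≤ angDist A.θ (A.dir (nx w) v) x := by
    intro w hw h h' h0 hlt
    by_cases hβ : angDist A.θ (A.dir (nx w) v) y < Real.pi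
    · have := A.angle_sum hw (n1 w hw) h h' (n2 w hw) (by rwa [n4 w hw]) (by rwa [n5 w hw])
      rw [n4 w hw, n5 w hw] at this
      linarith [hsum (nx w)]
    · push Not at hβ
      rw [← n5 w hw] at hβ
      have hb := (A.btw_of_pi_le (n1 w hw) h' (n2 w hw).symm hβ).symm
      rw [← A.dir_btw w (nx w) v hw (n2 w hw) hb, n4 w hw, angDist_self] at h0
      exact absurd h0 (lt_irrefl _)
  have long : ∀ w, G.p w = P → v ≠ w → A.dir v w = d0 → M0 + T < dist v w := by
    intro w hw h hd
    by_contra hcon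
    push Not at hcon
    exact hd0F ⟨w, hw, h, hcon, hd⟩
  -- running back towards `v`
  have back : ∀ n : ℕ, ∀ w, G.p w = P → v ≠ w → A.dir v w = d0 → dist v w ≤ n * T →
      ∃ w, G.p w = P ∧ v ≠ w ∧ A.dir v w = d0 ∧ c ≤ angDist A.θ (A.dir (nx w) v) x := by
    intro n
    induction n with
    | zero =>
      intro w hw h hd hle
      have := long w hw h hd
      simp only [Nat.cast_zero, zero_mul] at hle
      linarith
    | succ n ih =>
      intro w hw h hd hle
      have hl := long w hw h hd
      have ht := dist_triangle v (nx w) w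
      rw [dist_comm (nx w) w, n3 w hw] at ht
      have hne : v ≠ nx w := dist_pos.1 (by linarith)
      rcases s1 w hw h.symm hne.symm with hb | hb
      · have hbd : dist w (nx w) + dist (nx w) v = dist w v := hb
        rw [n3 w hw, dist_comm (nx w), dist_comm w] at hbd
        push_cast at hle
        exact ih (nx w) (n1 w hw) hne ((A.dir_btw v (nx w) w hv hne hb.symm).trans hd)
          (by linarith)
      · exact ⟨w, hw, h, hd, hb⟩
  obtain ⟨N, hN⟩ := exists_nat_ge (dist v w0 / T)
  rw [div_le_iff₀ hT] at hN
  obtain ⟨w, hw, hvw, hdw, hcw⟩ := back N w0 hw0 hvw0 rfl hN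
  have hl := long w hw hvw hdw
  have far : ∀ z, dist w z ≤ (m + 2) * T → z ≠ v := by
    rintro z hz rfl
    rw [dist_comm] at hz
    have := le_max_right M 0
    linarith
  -- running away from `v`
  have grow : ∀ k : ℕ, k ≤ m → ∃ z, G.p z = P ∧ dist w z ≤ (k + 1) * T ∧
      (Real.pi ≤ angDist A.θ (A.dir z v) x ∨ (k + 1) * c ≤ angDist A.θ (A.dir z v) x) := by
    intro k
    induction k with
    | zero => exact fun _ => ⟨nx w, n1 w hw, by rw [n3 w hw]; simp, Or.inr (by simpa using hcw)⟩
    | succ k ih =>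
      intro hk
      obtain ⟨z, hz, hwz, hα⟩ := ih (by omega)
      by_cases hpi : Real.pi ≤ angDist A.θ (A.dir z v) x
      · exact ⟨z, hz, hwz.trans (by push_cast; nlinarith), Or.inl hpi⟩
      have hα' := hα.resolve_left hpi
      push Not at hpi
      have hkm : (k:ℝ) + 1 ≤ m := by exact_mod_cast hk
      have hd : dist w (nx z) ≤ (k + 1 + 1) * T := by
        have := dist_triangle w z (nx z)
        rw [n3 z hz] at this
        linarith
      have hα0 : 0 < angDist A.θ (A.dir z v) x := lt_of_lt_of_le (by positivity) hα'
      have := s2 z hz (far z (by nlinarith)) (far _ (by nlinarith)) hα0 hpi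
      exact ⟨nx z, n1 z hz, by push_cast; exact hd, Or.inr (by push_cast; linarith)⟩
  obtain ⟨z, hz, hwz, hα⟩ := grow m le_rfl
  have hα' : Real.pi ≤ angDist A.θ (A.dir z v) x := by
    rcases hα with h | h
    · exact h
    · linarith
  have hzv : z ≠ v := far z (by linarith)
  rw [← n4 z hz] at hα'
  obtain ⟨hb, hd, hne⟩ := A.concat hz hzv (n2 z hz) hα'
  have hwn : dist w (nx z) ≤ (m + 2) * T := by
    have := dist_triangle w z (nx z)
    rw [n3 z hz] at this
    linarith
  refine ⟨dist v (nx z), A.dir v (nx z), ⟨v, nx z, hv, n1 z hz, hne, rfl, rfl, ?_⟩, ?_⟩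
  · rw [← A.dir_btw (nx z) z v (n1 z hz) (n2 z hz).symm hb.symm, n5 z hz]
  · have h1 := hM v w (nx z) hv hvw hne hwn (by linarith)
    have h2 := angDist_triangle hθ u d0 (A.dir v (nx z))
    rw [hdw] at h1
    linarith

/-- Loops may start and end in any given arcs of directions. -/
theorem exists_loop_conn (hS : ESCS S) (A : Apex G P) (u u' : ℝ) {ε : ℝ} (hε : 0 < ε) :
    ∃ ℓ a b, A.Loop ℓ a b ∧ angDist A.θ u a < ε ∧ angDist A.θ u' b < ε := by
  obtain ⟨T, x, y, c, τ, hc, hxy⟩ := A.exists_strict_loop hS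
  obtain ⟨ℓ, a, h1, h2⟩ := exists_loop_end hS τ hc hxy u hε
  obtain ⟨ℓ', b, h3, h4⟩ := exists_loop_end hS τ.symm hc (by rwa [angDist_comm]) u' hε
  exact ⟨_, a, b, h1.trans h3.symm (by rw [angDist_comm]; linarith), h2, h4⟩

end Apex

/-! ### Lengths of loops -/

/-- An additive set of positive numbers which has two distinct elements at distance less than `δ`
is `δ`-dense far out. -/
theorem eventually_dense {Λ : Set ℝ} (hpos : ∀ x ∈ Λ, 0 < x)
    (hadd : ∀ x ∈ Λ, ∀ y ∈ Λ, x + y ∈ Λ) {δ : ℝ}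
    (hna : ∃ x ∈ Λ, ∃ y ∈ Λ, x < y ∧ y < x + δ) :
    ∃ T, ∀ t ≥ T, ∃ ℓ ∈ Λ, |ℓ - t| ≤ δ := by
  obtain ⟨x, hx, y, hy, hxy, hyd⟩ := hna
  have hx0 := hpos x hx
  have hnx : ∀ z ∈ Λ, ∀ n : ℕ, ((n + 1 : ℕ) : ℝ) * z ∈ Λ := by
    intro z hz n
    induction n with
    | zero => simpa using hz
    | succ n ih =>
      have := hadd _ ih _ hz
      have e : ((n + 1 + 1 : ℕ) : ℝ) * z = ((n + 1 : ℕ) : ℝ) * z + z := by push_cast; ring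
      rwa [e]
  have hcomb : ∀ i j : ℕ, 0 < i + j → (i : ℝ) * x + j * y ∈ Λ := by
    intro i j hij
    rcases i with _ | i
    · obtain ⟨j, rfl⟩ : ∃ k, j = k + 1 := ⟨j - 1, by omega⟩
      simpa using hnx y hy j
    · rcases j with _ | j
      · simpa using hnx x hx i
      · exact hadd _ (hnx x hx i) _ (hnx y hy j)
  set d := y - x with hd
  have hd0 : 0 < d := by linarith
  obtain ⟨N, hN⟩ := exists_nat_ge (x / d)
  refine ⟨(N + 1) * x, fun t ht => ?_⟩
  have ht0 : 0 ≤ t := le_trans (by positivity) ht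
  set n := ⌊t / x⌋₊ with hn
  have hn1 : (n : ℝ) * x ≤ t := by
    rw [← le_div_iff₀ hx0]; exact Nat.floor_le (by positivity)
  have hn2 : t < (n + 1) * x := by
    rw [← div_lt_iff₀ hx0]; exact Nat.lt_floor_add_one _
  have hNn : N + 1 ≤ n := by
    rw [hn]; apply Nat.le_floor; rw [le_div_iff₀ hx0]; push_cast; exact ht
  have hr0 : 0 ≤ (t - n * x) / d := div_nonneg (by linarith) hd0.le
  set k := ⌊(t - n * x) / d⌋₊ with hk
  have hk1 : (k : ℝ) * d ≤ t - n * x := by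
    rw [← le_div_iff₀ hd0]; exact Nat.floor_le hr0
  have hk2 : t - n * x < (k + 1) * d := by
    rw [← div_lt_iff₀ hd0]; exact Nat.lt_floor_add_one _
  have hkn : k ≤ n := by
    have : (k : ℝ) ≤ N := by
      refine le_trans ?_ hN
      rw [le_div_iff₀ hd0]; linarith
    have : k ≤ N := by exact_mod_cast this
    omega
  refine ⟨_, hcomb (n - k) k (by omega), ?_⟩
  rw [Nat.cast_sub hkn, abs_le]
  have e : ((n : ℝ) - k) * x + k * y = n * x + k * d := by rw [hd]; ring
  rw [e]
  constructor <;> linarith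

/-- Bound for the defect `T + X - Z` of a triangle whose angle between the sides `T` and `X` is
nearly `π`. -/
theorem defect_le {T X Z κ q : ℝ} (hT : 0 < T) (hX : 0 < X) (hZ : 0 ≤ Z)
    (he : 0 ≤ T + X - Z) (hq : q ≤ -1 + κ) (l : T ^ 2 + X ^ 2 - 2 * T * X * q ≤ Z ^ 2) :
    T + X - Z ≤ 2 * T * κ := by
  have h1 : T * X * q ≤ T * X * (-1 + κ) := by gcongr
  have h3 : (T + X - Z) * (T + X + Z) ≤ 2 * T * κ * X := by nlinarith
  have h4 : (T + X - Z) * X ≤ (T + X - Z) * (T + X + Z) := by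
    apply mul_le_mul_of_nonneg_left _ he; linarith
  exact le_of_mul_le_mul_right (h4.trans h3) hX

theorem defect_angle {T X Z e κ q : ℝ} (hT : 0 < T) (hZ : T ≤ Z) (he : 0 < e) (hκ : κ < 1 / 2)
    (heκ : e ≤ 2 * T * κ) (hX : X = Z - T + e) (l : T ^ 2 + Z ^ 2 - 2 * T * Z * q ≤ X ^ 2) :
    1 - q ≤ 4 * κ := by
  rw [hX] at l
  have hTe : 0 ≤ T * e := by positivity
  have h1 : 2 * T * Z * (1 - q) ≤ 2 * Z * e + e ^ 2 := by linarith
  have h2 : e * e ≤ 2 * Z * e := by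
    have : T * κ ≤ T * (1 / 2) := by gcongr
    exact mul_le_mul_of_nonneg_right (by linarith) he.le
  have h5 : Z * e ≤ Z * (2 * T * κ) := mul_le_mul_of_nonneg_left heκ (by linarith)
  have h3 : T * Z * (1 - q) ≤ T * Z * (4 * κ) := by linarith
  exact le_of_mul_le_mul_left h3 (mul_pos hT (by linarith))

namespace Apex

variable {S Y : Type} [MetricSpace S] [MetricSpace Y] {G : GeoCover S Y} {P : S} {A : Apex G P}

theorem pi_le_of_near_near {b d d' η₁ η₂ : ℝ} (h : angDist A.θ (d + A.θ / 2) b ≤ η₁)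
    (h' : angDist A.θ d d' ≤ η₂) (hη : η₁ + η₂ ≤ A.θ / 2 - Real.pi) :
    Real.pi ≤ angDist A.θ b d' := by
  have h1 := angDist_triangle A.θ_pos d b (d + A.θ / 2)
  have h2 := angDist_triangle A.θ_pos d d' b
  rw [A.angDist_half, angDist_comm b (d + _)] at h1
  rw [angDist_comm d' b] at h2
  linarith

theorem pi_le_of_near_zero {a b : ℝ} (ha : angDist A.θ (A.θ / 2) a < (A.θ / 2 - Real.pi) / 2)
    (hb : angDist A.θ 0 b < (A.θ / 2 - Real.pi) / 2) : Real.pi ≤ angDist A.θ b a := by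
  rw [angDist_comm]
  refine A.pi_le_of_near_near (d := 0) (η₁ := (A.θ / 2 - Real.pi) / 2) (by rw [zero_add]; exact ha.le) hb.le (by linarith)

/-- Lengths of loops starting near the direction `θ / 2` and ending near the direction `0`; such
loops can be concatenated. -/
def lengths (A : Apex G P) : Set ℝ :=
  {ℓ | ∃ a b, A.Loop ℓ a b ∧ angDist A.θ (A.θ / 2) a < (A.θ / 2 - Real.pi) / 2 ∧
    angDist A.θ 0 b < (A.θ / 2 - Real.pi) / 2}

/-- Lengths of loops are non-arithmetic. Two vertices `v₁`, `v₂` and two vertices `w₀`, `w₁` are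
chosen such that `v₂, v₁, w₀` are aligned while the angle at `v₁` between `v₂` and `w₁` is slightly
smaller than `π`. The alternating sum of the lengths of the four loops `vᵢ → wⱼ` (with common
beginnings and ends) is then nonzero but small. -/
theorem nonarith (hS : ESCS S) (A : Apex G P) {δ : ℝ} (hδ : 0 < δ) :
    ∃ x ∈ A.lengths, ∃ y ∈ A.lengths, x < y ∧ y < x + δ := by
  have hhalf := A.half_θ
  have hθ := A.θ_pos
  have hπ := Real.pi_pos
  set η := A.θ / 2 - Real.pi with hη
  have hη0 : 0 < η := by rw [hη]; linarith
  have hcomb : ∀ x ∈ A.lengths, ∀ y ∈ A.lengths, x + y ∈ A.lengths := by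
    rintro x ⟨a, b, h, ha, hb⟩ y ⟨a', b', h', ha', hb'⟩
    exact ⟨a, b', h.trans h' (A.pi_le_of_near_zero ha' hb), ha, hb'⟩
  obtain ⟨T, -, -, ⟨v1, v2, hv1, hv2, h12, hT, -, -⟩, -⟩ := A.exists_loop_near hS 0 hη0
  have hT0 : 0 < T := by rw [← hT]; exact dist_pos.2 h12
  set a := A.dir v1 v2 with ha
  -- directions whose truncated cosine is within `σ` of `1` are at angle less than `η / 4`
  obtain ⟨σ, hσ0, hσ⟩ : ∃ σ > 0, ∀ φ, 0 ≤ φ → 1 - tcos φ ≤ σ → φ < η / 4 := by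
    have h1 : tcos (η / 4) < 1 := by
      by_contra h
      push Not at h
      linarith [eq_zero_of_tcos (by positivity) h]
    refine ⟨(1 - tcos (η / 4)) / 2, by linarith, fun φ hφ h => ?_⟩
    by_contra hcon
    push Not at hcon
    linarith [tcos_anti (by positivity) hcon]
  obtain ⟨κ, hκ0, hκδ, hκ1, hκσ⟩ : ∃ κ > 0, 2 * T * κ < δ ∧ κ < 1 / 2 ∧ 4 * κ < σ := by
    refine ⟨min (δ / (4 * T)) (min (1 / 4) (σ / 8)), by positivity, ?_, ?_, ?_⟩
    · have := min_le_left (δ / (4 * T)) (min (1 / 4) (σ / 8))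
      rw [le_div_iff₀ (by positivity)] at this
      nlinarith
    · exact lt_of_le_of_lt ((min_le_right _ _).trans (min_le_left _ _)) (by norm_num)
    · have := (min_le_right (δ / (4 * T)) (min (1 / 4) (σ / 8))).trans (min_le_right _ _)
      linarith
  obtain ⟨η2, hη20, hη2, hη2π, htc⟩ : ∃ η2 > 0, η2 ≤ η / 8 ∧ η2 < Real.pi ∧
      tcos (Real.pi - η2) ≤ -1 + κ := by
    have hc : Tendsto (fun s => tcos (Real.pi - s)) (𝓝 0) (𝓝 (-1)) := by
      have h1 : Continuous fun s => tcos (Real.pi - s) := by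
        have := tcos_continuous
        fun_prop
      have := h1.tendsto 0
      simpa [tcos_of_ge] using this
    obtain ⟨r, hr, hball⟩ := Metric.eventually_nhds_iff.1
      (hc.eventually (gt_mem_nhds (show (-1:ℝ) < -1 + κ by linarith)))
    refine ⟨min (r / 2) (min (η / 8) (Real.pi / 2)), by positivity,
      (min_le_right _ _).trans (min_le_left _ _),
      lt_of_le_of_lt ((min_le_right _ _).trans (min_le_right _ _)) (by linarith), le_of_lt ?_⟩
    apply hball
    rw [Real.dist_eq, sub_zero, abs_of_pos (by positivity)]
    exact lt_of_le_of_lt (min_le_left _ _) (by linarith)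
  obtain ⟨M, hM⟩ := A.angle_small (η / 4) (by positivity) T
  obtain ⟨w0, hw0, hvw0, -, hd0⟩ := A.steer hS hv1 (a + (Real.pi + η2 / 2)) (ε := η2 / 2)
    (by positivity) 0
  obtain ⟨w1, hw1, hvw1, hL1, hd1⟩ := A.steer hS hv1 (a + (Real.pi - η2 / 2)) (ε := η2 / 2)
    (by positivity) (max M (2 * T))
  have ang0 : Real.pi < angDist A.θ a (A.dir v1 w0) := by
    have h1 := angDist_triangle hθ a (A.dir v1 w0) (a + (Real.pi + η2 / 2))
    rw [angDist_of_abs_le (b := a + _) hθ (by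
      rw [show a - (a + (Real.pi + η2 / 2)) = -(Real.pi + η2 / 2) by ring, abs_neg,
        abs_of_pos (by positivity)]; linarith),
      show a - (a + (Real.pi + η2 / 2)) = -(Real.pi + η2 / 2) by ring, abs_neg,
        abs_of_pos (by positivity), angDist_comm (A.dir v1 w0)] at h1
    linarith
  have e1 : angDist A.θ a (a + (Real.pi - η2 / 2)) = Real.pi - η2 / 2 := by
    have h0 : |a - (a + (Real.pi - η2 / 2))| = Real.pi - η2 / 2 := by
      rw [show a - (a + (Real.pi - η2 / 2)) = -(Real.pi - η2 / 2) by ring, abs_neg,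
        abs_of_pos (by linarith)]
    rw [angDist_of_abs_le (b := a + _) hθ (by rw [h0]; linarith), h0]
  have ang1 : angDist A.θ a (A.dir v1 w1) < Real.pi := by
    have h1 := angDist_triangle hθ a (a + (Real.pi - η2 / 2)) (A.dir v1 w1)
    linarith
  have ang1' : Real.pi - η2 ≤ angDist A.θ a (A.dir v1 w1) := by
    have h1 := angDist_triangle hθ a (A.dir v1 w1) (a + (Real.pi - η2 / 2))
    rw [angDist_comm (A.dir v1 w1)] at h1
    linarith
  have ang01 : angDist A.θ (A.dir v1 w0) (A.dir v1 w1) ≤ η / 4 := by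
    have h1 := angDist_triangle hθ (A.dir v1 w0) (a + (Real.pi + η2 / 2)) (A.dir v1 w1)
    have h2 := angDist_triangle hθ (a + (Real.pi + η2 / 2)) (a + (Real.pi - η2 / 2)) (A.dir v1 w1)
    have h3 := angDist_le A.θ (a + (Real.pi + η2 / 2)) (a + (Real.pi - η2 / 2)) 0
    rw [show a + (Real.pi + η2 / 2) - (a + (Real.pi - η2 / 2)) + A.θ * ((0:ℤ):ℝ) = η2 by
      push_cast; ring, abs_of_pos hη20] at h3
    rw [angDist_comm (A.dir v1 w0) (a + _)] at h1
    linarith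
  -- `v2, v1, w0` are aligned, so that the triangle inequality has no defect here
  obtain ⟨hb0, hD0, hne0⟩ := A.concat hv1 h12 hvw0 ang0.le
  have hdir20 : A.dir v2 v1 = A.dir v2 w0 := A.dir_btw _ _ _ hv2 h12.symm hb0
  have hdirw0 : A.dir w0 v1 = A.dir w0 v2 := A.dir_btw _ _ _ hw0 hvw0.symm hb0.symm
  -- `e` is the defect of the triangle inequality for `v2, v1, w1`: positive and small
  have hX : 2 * T ≤ dist v1 w1 := (le_max_right _ _).trans hL1
  have hne1 : v2 ≠ w1 := by
    rintro rfl
    rw [hT] at hX; linarith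
  set X := dist v1 w1 with hXdef
  set Z := dist v2 w1 with hZdef
  set e := T + X - Z with he
  have htri : X ≤ T + Z := by
    have := dist_triangle v1 v2 w1
    rwa [hT] at this
  have he0 : 0 < e := by
    by_contra hcon
    have h1 := dist_triangle v2 v1 w1
    rw [dist_comm v2 v1, hT] at h1
    have hb : Btw v2 v1 w1 := by
      show dist v2 v1 + dist v1 w1 = dist v2 w1
      rw [dist_comm v2 v1, hT]
      linarith
    linarith [A.pi_le v1 v2 w1 hv1 h12 hvw1 hb]
  have heκ : e ≤ 2 * T * κ := by
    have l := A.law v1 v2 w1 hv1 h12 hvw1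
    rw [hT] at l
    exact defect_le hT0 (by linarith) dist_nonneg (by linarith)
      ((tcos_anti (by linarith) ang1').trans htc) l
  have ang2 : angDist A.θ (A.dir v2 v1) (A.dir v2 w1) < η / 4 := by
    apply hσ _ (angDist_nonneg _ _ _)
    have l := A.law v2 v1 w1 hv2 h12.symm hne1
    rw [dist_comm v2 v1, hT, ← hXdef, ← hZdef] at l
    refine (defect_angle hT0 (by linarith) he0 (by linarith) heκ ?_ l).trans hκσ.le
    rw [he]
    ring
  have angw : angDist A.θ (A.dir w1 v1) (A.dir w1 v2) < η / 4 :=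
    hM w1 v1 v2 hw1 hvw1.symm hne1.symm hT.le
      (by rw [dist_comm]; exact (le_max_left _ _).trans hL1)
  -- loops to be put before `v1`, `v2` and after `w0`, `w1`, so that all four lengths are admissible
  obtain ⟨l1, s1, t1, A1, hs1, ht1⟩ := A.exists_loop_conn hS (A.θ / 2) (A.dir v1 w0 + A.θ / 2)
    (ε := η / 4) (by positivity)
  obtain ⟨l2, s2, t2, A2, hs2, ht2⟩ := A.exists_loop_conn hS (A.θ / 2) (A.dir v2 w0 + A.θ / 2)
    (ε := η / 4) (by positivity)
  obtain ⟨m0, q0, r0, B0, hq0, hr0⟩ := A.exists_loop_conn hS (A.dir w0 v1 + A.θ / 2) 0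
    (ε := η / 4) (by positivity)
  obtain ⟨m1, q1, r1, B1, hq1, hr1⟩ := A.exists_loop_conn hS (A.dir w1 v1 + A.θ / 2) 0
    (ε := η / 4) (by positivity)
  have mk : ∀ {v w : Y} {l s t m q r : ℝ}, G.p v = P → G.p w = P → v ≠ w → A.Loop l s t →
      A.Loop m q r → angDist A.θ (A.θ / 2) s < η / 4 → angDist A.θ 0 r < η / 4 →
      Real.pi ≤ angDist A.θ t (A.dir v w) → Real.pi ≤ angDist A.θ q (A.dir w v) →
      l + dist v w + m ∈ A.lengths := by
    intro v w l s t m q r hv hw hvw hA hB hs hr ht hq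
    exact ⟨s, r, (hA.trans ⟨v, w, hv, hw, hvw, rfl, rfl, rfl⟩ ht).trans hB
      (by rwa [angDist_comm]), by linarith, by linarith⟩
  have self : ∀ x : ℝ, angDist A.θ x x ≤ η / 4 := fun x => by rw [angDist_self]; positivity
  have L10 := mk hv1 hw0 hvw0 A1 B0 hs1 hr0
    (A.pi_le_of_near_near ht1.le (self _) (by linarith))
    (A.pi_le_of_near_near hq0.le (self _) (by linarith))
  have L11 := mk hv1 hw1 hvw1 A1 B1 hs1 hr1
    (A.pi_le_of_near_near ht1.le ang01 (by linarith))
    (A.pi_le_of_near_near hq1.le (self _) (by linarith))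
  have L20 := mk hv2 hw0 hne0 A2 B0 hs2 hr0
    (A.pi_le_of_near_near ht2.le (self _) (by linarith))
    (A.pi_le_of_near_near hq0.le (η₂ := η / 4) (by rw [hdirw0]; exact self _) (by linarith))
  have L21 := mk hv2 hw1 hne1 A2 B1 hs2 hr1
    (A.pi_le_of_near_near ht2.le (η₂ := η / 4) (by rw [← hdir20]; exact ang2.le) (by linarith))
    (A.pi_le_of_near_near hq1.le angw.le (by linarith))
  rw [dist_comm v2 v1, hT] at hD0
  refine ⟨_, hcomb _ L10 _ L21, _, hcomb _ L11 _ L20, ?_, ?_⟩ <;> rw [← hXdef, ← hZdef, hD0] <;>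
    linarith

/-- Loops that can be inserted between two given directions exist with all sufficiently large
lengths, up to `δ`. -/
theorem exists_loop_length (hS : ESCS S) (A : Apex G P) (u u' : ℝ) {δ : ℝ} (hδ : 0 < δ) :
    ∃ T, ∀ t ≥ T, ∃ ℓ a b, A.Loop ℓ a b ∧ Real.pi ≤ angDist A.θ u a ∧
      Real.pi ≤ angDist A.θ u' b ∧ |ℓ - t| ≤ δ := by
  have hhalf := A.half_θ
  have hη : 0 < (A.θ / 2 - Real.pi) / 2 := by linarith
  obtain ⟨T, hT⟩ := eventually_dense (Λ := A.lengths) (δ := δ)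
    (fun x ⟨a, b, h, _⟩ => h.pos) (by
      rintro x ⟨a, b, h, ha, hb⟩ y ⟨a', b', h', ha', hb'⟩
      exact ⟨a, b', h.trans h' (A.pi_le_of_near_zero ha' hb), ha, hb'⟩) (A.nonarith hS hδ)
  obtain ⟨l, s, t, hA, hs, ht⟩ := A.exists_loop_conn hS (u + A.θ / 2) 0 hη
  obtain ⟨m, q, r, hB, hq, hr⟩ := A.exists_loop_conn hS (A.θ / 2) (u' + A.θ / 2) hη
  refine ⟨T + l + m, fun τ hτ => ?_⟩
  obtain ⟨ℓ, ⟨a, b, h, ha, hb⟩, hℓ⟩ := hT (τ - l - m) (by linarith)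
  refine ⟨l + ℓ + m, s, r, (hA.trans h (A.pi_le_of_near_zero ha ht)).trans hB
    (A.pi_le_of_near_zero hq hb), A.pi_le_of_near hs.le (by linarith),
    A.pi_le_of_near hr.le (by linarith), ?_⟩
  convert hℓ using 2
  ring

end Apex

/-! ### Geodesic lines in the cover -/

/-- `c` restricts to an isometric embedding of `s`. -/
def IsomOn {Y : Type} [MetricSpace Y] (s : Set ℝ) (c : ℝ → Y) : Prop :=
  ∀ a ∈ s, ∀ b ∈ s, dist (c a) (c b) = |a - b|

namespace GeoCover

variable {S Y : Type} [MetricSpace S] [MetricSpace Y] {G : GeoCover S Y}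

theorem isomOn_eq {c : ℝ → Y} {a b : ℝ} (hc : IsomOn (Icc a b) c) (hab : a < b) {s : ℝ}
    (hs : s ∈ Icc a b) : c s = G.κ (c a) (c b) ((s - a) / (b - a)) := by
  have h0 : 0 < b - a := by linarith
  have hm : ∀ t ∈ Icc (0:ℝ) 1, a + t * (b - a) ∈ Icc a b := by
    rintro t ⟨h1, h2⟩
    constructor <;> nlinarith
  have := G.uniq' (c := fun t => c (a + t * (b - a))) (v := b - a) (by
      simp only [zero_mul, add_zero, one_mul, add_sub_cancel]
      rw [hc a (by simp [hab.le]) b (by simp [hab.le]), abs_sub_comm, abs_of_pos h0]) (by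
      intro s hs t ht hst
      rw [hc _ (hm s hs) _ (hm t ht), show a + s * (b - a) - (a + t * (b - a)) =
        -((b - a) * (t - s)) by ring, abs_neg, abs_of_nonneg (by
          apply mul_nonneg h0.le; linarith)]) ((s - a) / (b - a))
      ⟨div_nonneg (by linarith [hs.1]) h0.le, by rw [div_le_one h0]; linarith [hs.2]⟩
  simp only [zero_mul, add_zero, one_mul, add_sub_cancel] at this
  rw [this]
  congr 1
  field_simp
  ring

theorem isomOn_κ {x y : Y} (hxy : x ≠ y) (a : ℝ) :
    IsomOn (Icc a (a + dist x y)) (fun t => G.κ x y ((t - a) / dist x y)) := by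
  have hD : 0 < dist x y := dist_pos.2 hxy
  have hm : ∀ t ∈ Icc a (a + dist x y), (t - a) / dist x y ∈ Icc (0:ℝ) 1 := by
    rintro t ⟨h1, h2⟩
    exact ⟨div_nonneg (by linarith) hD.le, by rw [div_le_one hD]; linarith⟩
  intro s hs t ht
  simp only
  rw [G.κ_dist _ _ _ (hm s hs) _ (hm t ht), ← sub_div, abs_div, abs_of_pos hD]
  field_simp
  congr 1
  ring

theorem extend_right (hS : ESCS S) (G : GeoCover S Y) {c : ℝ → Y} {a b : ℝ}
    (hc : IsomOn (Icc a b) c) (hab : a < b) : ∃ c', IsomOn (Icc a (b + 1)) c' ∧ EqOn c' c (Icc a b) := by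
  have hd : dist (c a) (c b) = b - a := by
    rw [hc a (by simp [hab.le]) b (by simp [hab.le]), abs_sub_comm, abs_of_pos (by linarith)]
  have hne : c a ≠ c b := dist_pos.1 (by linarith)
  obtain ⟨z, hz, hL⟩ := G.extend hS hne (L := b + 1 - a) (by linarith)
  have hne' : c a ≠ z := dist_pos.1 (by linarith)
  have hi := G.isomOn_κ hne' a
  rw [hL] at hi
  refine ⟨_, by simpa using hi, fun s hs => ?_⟩
  have h0 : 0 < b - a := by linarith
  rw [G.isomOn_eq hc hab hs, G.κ_of_btw hz hne'
    ⟨div_nonneg (by linarith [hs.1]) h0.le, by rw [div_le_one h0]; linarith [hs.2]⟩, hd, hL]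
  congr 1
  field_simp

theorem extend_both (hS : ESCS S) (G : GeoCover S Y) {c : ℝ → Y} {a b : ℝ}
    (hc : IsomOn (Icc a b) c) (hab : a < b) :
    ∃ c', IsomOn (Icc (a - 1) (b + 1)) c' ∧ EqOn c' c (Icc a b) := by
  obtain ⟨c1, h1, e1⟩ := extend_right hS G hc hab
  obtain ⟨c2, h2, e2⟩ := extend_right hS G (c := fun t => c1 (-t)) (a := -(b + 1)) (b := -a) (by
    intro s hs t ht
    simp only
    rw [h1 (-s) ⟨by linarith [hs.2], by linarith [hs.1]⟩ (-t) ⟨by linarith [ht.2], by linarith [ht.1]⟩,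
      show -s - -t = -(s - t) by ring, abs_neg]) (by linarith)
  refine ⟨fun t => c2 (-t), ?_, ?_⟩
  · intro s hs t ht
    simp only
    rw [h2 (-s) ⟨by linarith [hs.2], by linarith [hs.1]⟩ (-t) ⟨by linarith [ht.2], by linarith [ht.1]⟩,
      show -s - -t = -(s - t) by ring, abs_neg]
  · intro s hs
    have := e2 (x := -s) ⟨by linarith [hs.2], by linarith [hs.1]⟩
    simp only [neg_neg] at this
    simp only
    rw [this, e1 hs]

/-- Geodesic segments extend to geodesic lines. -/
theorem exists_line (hS : ESCS S) (G : GeoCover S Y) {x y : Y} (hxy : x ≠ y) :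
    ∃ c : ℝ → Y, Isometry c ∧ c 0 = x ∧ c (dist x y) = y := by
  have hD : 0 < dist x y := dist_pos.2 hxy
  set D := dist x y with hDdef
  let Good := {q : ℕ × (ℝ → Y) // IsomOn (Icc (-q.1 : ℝ) (D + q.1)) q.2}
  have step : ∀ q : Good, ∃ q' : Good, q'.1.1 = q.1.1 + 1 ∧
      EqOn q'.1.2 q.1.2 (Icc (-q.1.1 : ℝ) (D + q.1.1)) := by
    rintro ⟨⟨n, c⟩, hc⟩
    have hn : (0:ℝ) ≤ n := n.cast_nonneg
    obtain ⟨c', h1, h2⟩ := extend_both hS G hc (by simp only; linarith)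
    refine ⟨⟨⟨n + 1, c'⟩, ?_⟩, rfl, h2⟩
    simp only at h1 ⊢
    push_cast
    rw [show -((n:ℝ) + 1) = -n - 1 by ring, ← add_assoc]
    exact h1
  choose nx hn1 hn2 using step
  have h0 := G.isomOn_κ hxy 0
  let q0 : Good := ⟨⟨0, fun t => G.κ x y ((t - 0) / dist x y)⟩, by simpa using h0⟩
  let q : ℕ → Good := fun n => nx^[n] q0
  have qs : ∀ n, q (n + 1) = nx (q n) := fun n => Function.iterate_succ_apply' nx n _
  have qn : ∀ n, (q n).1.1 = n := by
    intro n
    induction n with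
    | zero => rfl
    | succ n ih => rw [qs, hn1, ih]
  have qi : ∀ n : ℕ, IsomOn (Icc (-n : ℝ) (D + n)) (q n).1.2 := fun n => by
    have := (q n).2
    rwa [qn] at this
  have qe : ∀ n k : ℕ, EqOn (q (n + k)).1.2 (q n).1.2 (Icc (-n : ℝ) (D + n)) := by
    intro n k
    induction k with
    | zero => intro s _; rfl
    | succ k ih =>
      intro s hs
      rw [← ih hs, ← add_assoc, qs]
      apply hn2
      rw [qn]
      push_cast
      exact ⟨by linarith [hs.1, (k.cast_nonneg : (0:ℝ) ≤ k)], by linarith [hs.2, (k.cast_nonneg : (0:ℝ) ≤ k)]⟩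
  let c : ℝ → Y := fun t => (q ⌈|t|⌉₊).1.2 t
  have ce : ∀ (n : ℕ) (t : ℝ), |t| ≤ n → c t = (q n).1.2 t := by
    intro n t ht
    obtain ⟨k, hk⟩ := Nat.exists_eq_add_of_le (Nat.ceil_le.2 ht)
    have hle := Nat.le_ceil |t|
    rw [hk]
    refine (qe _ k ⟨?_, ?_⟩).symm
    · linarith [neg_abs_le t]
    · linarith [le_abs_self t]
  refine ⟨c, Isometry.of_dist_eq fun s t => ?_, ?_, ?_⟩
  · obtain ⟨n, hn⟩ := exists_nat_ge (max |s| |t|)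
    have hs := (le_max_left _ _).trans hn
    have ht := (le_max_right _ _).trans hn
    rw [ce n s hs, ce n t ht, Real.dist_eq, qi n s ⟨?_, ?_⟩ t ⟨?_, ?_⟩]
    · linarith [neg_abs_le s]
    · linarith [le_abs_self s]
    · linarith [neg_abs_le t]
    · linarith [le_abs_self t]
  · rw [ce 0 0 (by simp)]
    show G.κ x y _ = x
    simp [G.κ_zero]
  · show (q ⌈|D|⌉₊).1.2 D = y
    have h1 := qe 0 ⌈|D|⌉₊ (x := D) (by simp [hD.le])
    rw [zero_add] at h1
    rw [h1]
    show G.κ x y ((D - 0) / D) = y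
    rw [sub_zero, div_self hD.ne', G.κ_one]

theorem isomOn_of_isometry {c : ℝ → Y} (hc : Isometry c) (s : Set ℝ) : IsomOn s c :=
  fun a _ b _ => by rw [hc.dist_eq, Real.dist_eq]

/-- Points between two points of a line lie on the line. -/
theorem line_btw (G : GeoCover S Y) {c : ℝ → Y} (hc : Isometry c) {a b : ℝ} (hab : a < b) {z : Y}
    (hz : Btw (c a) z (c b)) : c (a + dist (c a) z) = z := by
  have hd : dist (c a) (c b) = b - a := by
    rw [hc.dist_eq, dist_comm, Real.dist_eq, abs_of_pos (by linarith)]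
  have hne : c a ≠ c b := dist_pos.1 (by linarith)
  obtain ⟨h1, h2⟩ := G.btw_eq hz hne
  have h0 : 0 < b - a := by linarith
  rw [hd] at h1 h2
  have h3 := h1.2
  rw [div_le_one h0] at h3
  rw [G.isomOn_eq (isomOn_of_isometry hc _) hab (s := a + dist (c a) z)
    ⟨by linarith [dist_nonneg (x := c a) (y := z)], by linarith⟩, add_sub_cancel_left, h2]

theorem isLocalGeodesic_p {c : ℝ → Y} (hc : Isometry c) : IsLocalGeodesic (fun t => G.p (c t)) := by
  intro t
  refine ⟨G.δ, G.δ_pos, fun s u hs hu => ?_⟩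
  rw [G.isom (c t) (c s) (c u) (by rwa [hc.dist_eq, dist_comm, Real.dist_eq])
    (by rwa [hc.dist_eq, dist_comm, Real.dist_eq]), hc.dist_eq, Real.dist_eq]

end GeoCover

/-! ### Topological mixing of the geodesic flow -/

namespace GeoCover

variable {S Y : Type} [MetricSpace S] [MetricSpace Y] {G : GeoCover S Y}

/-- Moving the far end of a geodesic segment hardly moves its initial part. -/
theorem dist_shift_end (G : GeoCover S Y) {x z w : Y} {s Δ : ℝ} (hz : 0 < dist x z) (hw : 0 < dist x w)
    (hs0 : 0 ≤ s) (hsz : s ≤ dist x z) (hsw : s ≤ dist x w) (hΔ : dist z w ≤ Δ) :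
    dist (G.κ x z (s / dist x z)) (G.κ x w (s / dist x w)) ≤ 2 * s * Δ / dist x z := by
  set D := dist x z with hD
  set D' := dist x w with hD'
  have m1 : s / D ∈ Icc (0:ℝ) 1 := ⟨by positivity, by rwa [div_le_one hz]⟩
  have m2 : s / D' ∈ Icc (0:ℝ) 1 := ⟨by positivity, by rwa [div_le_one hw]⟩
  have h1 := G.conv x z w _ m1
  have h2 := G.κ_dist x w _ m1 _ m2
  rw [← hD'] at h2
  have h3 : |s / D - s / D'| * D' = s / D * |D' - D| := by
    rw [show s / D - s / D' = s / D * ((D' - D) / D') by field_simp, abs_mul,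
      abs_of_nonneg m1.1, abs_div, abs_of_pos hw]
    field_simp
  have h4 : |D' - D| ≤ Δ := by
    refine le_trans ?_ hΔ
    rw [hD, hD', dist_comm x w, dist_comm x z, dist_comm z w]
    exact abs_dist_sub_le w z x
  have h5 := dist_triangle (G.κ x z (s / D)) (G.κ x w (s / D)) (G.κ x w (s / D'))
  have h6 : s / D * dist z w ≤ s / D * Δ := mul_le_mul_of_nonneg_left hΔ m1.1
  have h7 : s / D * |D' - D| ≤ s / D * Δ := mul_le_mul_of_nonneg_left h4 m1.1
  have h8 : 2 * s * Δ / D = s / D * Δ + s / D * Δ := by ring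
  linarith

/-- Every compact piece of a geodesic of `S` is approximated by a piece of a geodesic segment
between two points of the cover over `P`. -/
theorem approx (hS : ESCS S) (G : GeoCover S Y) (P : S) {f : ℝ → S} (hf : IsLocalGeodesic f)
    {N ε : ℝ} (hN : 0 < N) (hε : 0 < ε) : ∃ v w o, G.p v = P ∧ G.p w = P ∧ v ≠ w ∧ N ≤ o ∧
      o + N ≤ dist v w ∧
      ∀ t, |t| ≤ N → dist (G.p (G.κ v w ((o + t) / dist v w))) (f t) ≤ ε := by
  have := hS.compact
  obtain ⟨R, hR⟩ := exists_locConv hS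
  have hR0 := hR.pos
  have hδ := G.δ_pos
  obtain ⟨Δ, hΔ⟩ := G.fibre_dense P
  obtain ⟨x, hx⟩ := G.surj (f (-N))
  have hΔ0 : 0 ≤ Δ := by
    obtain ⟨v, -, hv⟩ := hΔ x
    exact dist_nonneg.trans hv
  obtain ⟨ε', hε'0, hε'ε, hε'δ⟩ : ∃ ε' > 0, ε' ≤ ε ∧ ε' < G.δ :=
    ⟨min ε (G.δ / 2), by positivity, min_le_left _ _, (min_le_right _ _).trans_lt (by linarith)⟩
  obtain ⟨D, hD1, hD2⟩ : ∃ D, 2 * N + Δ + 1 ≤ D ∧ 8 * N * Δ / ε' ≤ D :=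
    ⟨max _ _, le_max_left _ _, le_max_right _ _⟩
  have hD0 : 0 < D := by linarith
  rw [div_le_iff₀ hε'0] at hD2
  obtain ⟨z, hxz, hz⟩ := G.lift D (fun τ => f (-N + τ * D)) ⟨hD0.le, R / (2 * D), by positivity, by
    intro s _ t _ hst
    rw [lt_div_iff₀ (by positivity)] at hst
    have e : |-N + s * D - (-N + t * D)| = D * |s - t| := by
      rw [show -N + s * D - (-N + t * D) = D * (s - t) by ring, abs_mul, abs_of_pos hD0]
    rw [hf.dist_eq hR (by rw [e]; linarith), e]⟩ x (by simpa using hx)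
  obtain ⟨w, hw, hzw⟩ := hΔ z
  set D' := dist x w with hD'
  have hD'1 : 2 * N + 1 ≤ D' := by
    have := dist_triangle x w z
    rw [dist_comm w z, hxz] at this
    linarith
  obtain ⟨M, hM1, hM2⟩ : ∃ M, D' + Δ + 1 ≤ M ∧ 4 * D' * Δ / ε' ≤ M :=
    ⟨max _ _, le_max_left _ _, le_max_right _ _⟩
  have hM0 : 0 < M := by linarith
  rw [div_le_iff₀ hε'0] at hM2
  have hwx : w ≠ x := dist_pos.1 (by rw [dist_comm]; linarith)
  obtain ⟨z', hz', hwz'⟩ := G.extend hS hwx (L := M) (by rw [dist_comm]; linarith)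
  obtain ⟨v, hv, hzv⟩ := hΔ z'
  set D'' := dist v w with hD''
  have hD''1 : D' + 1 ≤ D'' := by
    have := dist_triangle w v z'
    rw [dist_comm v z', dist_comm w v, hwz'] at this
    linarith
  refine ⟨v, w, D'' - D' + N, hv, hw, dist_pos.1 (by linarith), by linarith, by linarith,
    fun t ht => ?_⟩
  obtain ⟨ht1, ht2⟩ := abs_le.1 ht
  have e1 := G.dist_shift_end (x := x) (z := z) (w := w) (s := N + t) (by linarith) (by linarith)
    (by linarith) (by linarith) (by linarith) hzw
  have e2 := G.dist_shift_end (x := w) (z := z') (w := v) (s := D' - (N + t)) (by linarith)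
    (by rw [dist_comm]; linarith)
    (by linarith) (by linarith) (by rw [dist_comm]; linarith) hzv
  rw [hxz, ← hD'] at e1
  rw [hwz', dist_comm w v, ← hD''] at e2
  have b1 : 2 * (N + t) * Δ / D ≤ ε' / 2 := by
    rw [div_le_iff₀ hD0]
    have : (N + t) * Δ ≤ 2 * N * Δ := by gcongr; linarith
    linarith
  have b2 : 2 * (D' - (N + t)) * Δ / M ≤ ε' / 2 := by
    rw [div_le_iff₀ hM0]
    have : (D' - (N + t)) * Δ ≤ D' * Δ := by gcongr; linarith
    linarith
  have hD'0 : 0 < D' := by linarith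
  have hD''0 : 0 < D'' := by linarith
  have k1 : G.κ w z' ((D' - (N + t)) / M) = G.κ x w ((N + t) / D') := by
    have m : (D' - (N + t)) / D' ∈ Icc (0:ℝ) 1 :=
      ⟨div_nonneg (by linarith) hD'0.le, by rw [div_le_one hD'0]; linarith⟩
    have := G.κ_of_btw hz' (dist_pos.1 (by linarith)) m
    rw [hwz', dist_comm w x, ← hD', div_mul_div_cancel₀ hD'0.ne', G.κ_symm x w m] at this
    rw [← this]
    congr 1
    field_simp
    ring
  have k2 : G.κ w v ((D' - (N + t)) / D'') = G.κ v w ((D'' - D' + N + t) / D'') := by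
    rw [G.κ_symm v w ⟨div_nonneg (by linarith) hD''0.le, by rw [div_le_one hD''0]; linarith⟩]
    congr 1
    field_simp
    ring
  have k3 : G.p (G.κ x z ((N + t) / D)) = f t := by
    rw [hz _ ⟨div_nonneg (by linarith) hD0.le, by rw [div_le_one hD0]; linarith⟩]
    congr 1
    field_simp
    ring
  rw [k1, k2] at e2
  have e3 := dist_triangle (G.κ x z ((N + t) / D)) (G.κ x w ((N + t) / D'))
    (G.κ v w ((D'' - D' + N + t) / D''))
  have e4 : dist (G.κ x z ((N + t) / D)) (G.κ v w ((D'' - D' + N + t) / D'')) ≤ ε' := by linarith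
  rw [← k3, dist_comm, G.isom _ _ _ (by rwa [dist_self]) (e4.trans_lt hε'δ)]
  linarith

end GeoCover

/-- Basic neighbourhoods in the space of geodesics. -/
theorem exists_nhd {S : Type} [MetricSpace S] {O : Set (GeodSp S)} (hO : IsOpen O) {f : GeodSp S}
    (hf : f ∈ O) : ∃ N > 0, ∃ ε > 0, ∀ h : GeodSp S,
      (∀ t, |t| ≤ N → dist (h.1 t) (f.1 t) < ε) → h ∈ O := by
  by_contra hcon
  push Not at hcon
  have hc : ∀ n : ℕ, ∃ h : GeodSp S,
      (∀ t, |t| ≤ (n:ℝ) + 1 → dist (h.1 t) (f.1 t) < 1 / ((n:ℝ) + 1)) ∧ h ∉ O :=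
    fun n => hcon _ (by positivity) _ (by positivity)
  choose h h1 h2 using hc
  have hlim : Tendsto h atTop (𝓝 f) := by
    rw [tendsto_subtype_rng, ContinuousMap.tendsto_iff_forall_isCompact_tendstoUniformlyOn]
    intro K hK
    obtain ⟨r, hr⟩ := hK.isBounded.subset_closedBall 0
    rw [Metric.tendstoUniformlyOn_iff]
    intro ε hε
    obtain ⟨n1, hn1⟩ := exists_nat_ge r
    obtain ⟨n2, hn2⟩ := exists_nat_one_div_lt hε
    filter_upwards [eventually_ge_atTop (max n1 n2)] with n hn t ht
    have ht' := hr ht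
    rw [mem_closedBall, Real.dist_eq, sub_zero] at ht'
    have c1 : (n1:ℝ) ≤ n := by exact_mod_cast (le_max_left _ _).trans hn
    have c2 : (n2:ℝ) ≤ n := by exact_mod_cast (le_max_right _ _).trans hn
    rw [dist_comm]
    refine (h1 n t (by linarith)).trans_le (le_trans ?_ hn2.le)
    apply one_div_le_one_div_of_le <;> linarith [(n2.cast_nonneg : (0:ℝ) ≤ n2)]
  obtain ⟨n, hn⟩ := (hlim.eventually (hO.mem_nhds hf)).exists
  exact h2 n hn

theorem IsLocalGeodesic.continuous {S : Type} [MetricSpace S] {g : ℝ → S} (hg : IsLocalGeodesic g) :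
    Continuous g := by
  refine Metric.continuous_iff.2 fun t ε hε => ?_
  obtain ⟨r, hr, h⟩ := hg t
  refine ⟨min r ε, by positivity, fun s hs => ?_⟩
  rw [Real.dist_eq] at hs
  rw [h s t (hs.trans_le (min_le_left _ _)) (by simpa using hr)]
  exact hs.trans_le (min_le_right _ _)

/-- The geodesic flow is topologically mixing as soon as there is a conical point. -/
theorem topological_mixing {S Y : Type} [MetricSpace S] [MetricSpace Y] (hS : ESCS S)
    (G : GeoCover S Y) {P : S} (hP : P ∈ hS.conical) {O U : Set (GeodSp S)} (hO : IsOpen O)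
    (hU : IsOpen U) {f g : GeodSp S} (hf : f ∈ O) (hg : g ∈ U) :
    ∃ T, ∀ τ ≥ T, ∃ h ∈ O, geodFlow τ h ∈ U := by
  obtain ⟨A⟩ := exists_apex hS G hP
  have hδ := G.δ_pos
  obtain ⟨N1, hN1, ε1, hε1, H1⟩ := exists_nhd hO hf
  obtain ⟨N2, hN2, ε2, hε2, H2⟩ := exists_nhd hU hg
  obtain ⟨v1, v2, o1, hv1, hv2, h12, hNo1, hoN1, ap1⟩ :=
    G.approx hS P f.2 hN1 (half_pos hε1)
  obtain ⟨w3, w4, o2, hw3, hw4, h34, hNo2, hoN2, ap2⟩ :=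
    G.approx hS P g.2 hN2 (half_pos hε2)
  obtain ⟨r, hr0, hrε, hrδ⟩ : ∃ r > 0, r < ε2 / 2 ∧ r < G.δ :=
    ⟨min (ε2 / 4) (G.δ / 2), by positivity, (min_le_left _ _).trans_lt (by linarith),
      (min_le_right _ _).trans_lt (by linarith)⟩
  obtain ⟨T, hT⟩ := A.exists_loop_length hS (A.dir v2 v1) (A.dir w3 w4) hr0
  refine ⟨T - o1 + dist v1 v2 + o2, fun τ hτ => ?_⟩
  obtain ⟨ℓ, a, b, hloop, ha, hb, hℓ⟩ := hT (τ + o1 - dist v1 v2 - o2) (by linarith)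
  obtain ⟨v3, hv3, h23, hd23, hdir23, hdir32⟩ := hloop.start hv2
  obtain ⟨v4, hv4, h34', hd34, hdir34, -, hp34⟩ := A.transport_vertex hw3 hw4 h34 hv3
  obtain ⟨b13, d13, n13⟩ := A.concat hv2 h12.symm h23 (by rwa [hdir23])
  have hdir31 : A.dir v3 v1 = b := by
    rw [← A.dir_btw v3 v2 v1 hv3 h23.symm b13.symm, hdir32]
  obtain ⟨b14, d14, n14⟩ := A.concat hv3 n13.symm h34' (by rwa [hdir31, hdir34, angDist_comm])
  obtain ⟨c, hc, hc0, hc4⟩ := G.exists_line hS n14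
  have p12 := dist_pos.2 h12
  have p34 := dist_pos.2 h34'
  have p14 := dist_pos.2 n14
  have p13 := dist_pos.2 n13
  have c3 : c (dist v1 v3) = v3 := by
    have := G.line_btw hc p14 (z := v3) (by rwa [hc0, hc4])
    rwa [hc0, zero_add] at this
  have c2 : c (dist v1 v2) = v2 := by
    have := G.line_btw hc p14 (z := v2) (by rw [hc0, hc4]; exact (b14.trans_left b13).1)
    rwa [hc0, zero_add] at this
  have hgeo : IsLocalGeodesic (fun t => G.p (c (t + o1))) :=
    G.isLocalGeodesic_p (c := fun t => c (t + o1)) (Isometry.of_dist_eq fun s t => by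
      rw [hc.dist_eq, dist_add_right])
  let h : GeodSp S := ⟨⟨fun t => G.p (c (t + o1)), hgeo.continuous⟩, hgeo⟩
  refine ⟨h, H1 h fun t ht => ?_, H2 _ fun t ht => ?_⟩
  · obtain ⟨ht1, ht2⟩ := abs_le.1 ht
    have e := G.isomOn_eq (GeoCover.isomOn_of_isometry hc (Icc 0 (dist v1 v2))) p12 (s := t + o1)
      ⟨by linarith, by linarith⟩
    rw [hc0, c2, sub_zero, sub_zero, add_comm t] at e
    have := ap1 t ht
    rw [← e, add_comm] at this
    exact this.trans_lt (by linarith)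
  · obtain ⟨ht1, ht2⟩ := abs_le.1 ht
    have e := G.isomOn_eq (GeoCover.isomOn_of_isometry hc (Icc (dist v1 v3) (dist v1 v4)))
      (by linarith) (s := dist v1 v3 + (o2 + t)) ⟨by linarith, by linarith⟩
    rw [c3, hc4, add_sub_cancel_left, d14, add_sub_cancel_left] at e
    have a2 := ap2 t ht
    rw [← hd34] at a2
    rw [← hp34 _ ⟨div_nonneg (by linarith) p34.le, by rw [div_le_one p34]; linarith⟩, ← e] at a2
    have hcd : dist (c (t + τ + o1)) (c (dist v1 v3 + (o2 + t))) ≤ r := by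
      rw [hc.dist_eq, Real.dist_eq, d13, hd23, abs_sub_comm]
      convert hℓ using 2
      ring
    have hpd : dist (G.p (c (t + τ + o1))) (G.p (c (dist v1 v3 + (o2 + t)))) ≤ r := by
      rwa [G.isom _ _ _ (by rwa [dist_self]) (hcd.trans_lt hrδ)]
    have htr := dist_triangle (G.p (c (t + τ + o1))) (G.p (c (dist v1 v3 + (o2 + t)))) (g.1 t)
    exact lt_of_le_of_lt htr (by linarith)

/-! ### Flat surfaces: closed geodesics come in strips -/

open ComplexConjugate

/-- Without conical points, Euclidean charts of a uniform radius exist around all points. -/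
theorem exists_flat_chart {S : Type} [MetricSpace S] (hS : ESCS S) (h0 : hS.conical = ∅) :
    ∃ ρ > 0, ∀ x : S, ∃ ψ : ℂ → S, ψ 0 = x ∧
      (∀ z w, ‖z‖ < ρ → ‖w‖ < ρ → dist (ψ z) (ψ w) = ‖z - w‖) ∧
      ∀ y, dist x y < ρ → ∃ z, ‖z‖ < ρ ∧ ψ z = y := by
  have := hS.compact
  suffices h : ∃ ρ > 0, ∀ x ∈ (univ : Set S), ∃ ψ : ℂ → S, ψ 0 = x ∧
      (∀ z w, ‖z‖ < ρ → ‖w‖ < ρ → dist (ψ z) (ψ w) = ‖z - w‖) ∧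
      ∀ y, dist x y < ρ → ∃ z, ‖z‖ < ρ ∧ ψ z = y by
    obtain ⟨ρ, hρ, h⟩ := h
    exact ⟨ρ, hρ, fun x => h x (mem_univ x)⟩
  have mono : ∀ {ρ ρ' : ℝ} {x : S} {ψ : ℂ → S}, ρ' ≤ ρ → ψ 0 = x → 0 < ρ' →
      (∀ z w, ‖z‖ < ρ → ‖w‖ < ρ → dist (ψ z) (ψ w) = ‖z - w‖) →
      (∀ y, dist x y < ρ → ∃ z, ‖z‖ < ρ ∧ ψ z = y) → 
      (∀ z w, ‖z‖ < ρ' → ‖w‖ < ρ' → dist (ψ z) (ψ w) = ‖z - w‖) ∧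
      ∀ y, dist x y < ρ' → ∃ z, ‖z‖ < ρ' ∧ ψ z = y := by
    intro ρ ρ' x ψ hρ hx hρ' h1 h2
    refine ⟨fun z w hz hw => h1 z w (hz.trans_le hρ) (hw.trans_le hρ), fun y hy => ?_⟩
    obtain ⟨z, hz, rfl⟩ := h2 y (hy.trans_le hρ)
    refine ⟨z, ?_, rfl⟩
    rw [← hx, h1 0 z (by rw [norm_zero]; linarith) hz, zero_sub, norm_neg] at hy
    exact hy
  refine isCompact_univ.induction_on (p := fun s => ∃ ρ > 0, ∀ x ∈ s, ∃ ψ : ℂ → S, ψ 0 = x ∧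
      (∀ z w, ‖z‖ < ρ → ‖w‖ < ρ → dist (ψ z) (ψ w) = ‖z - w‖) ∧
      ∀ y, dist x y < ρ → ∃ z, ‖z‖ < ρ ∧ ψ z = y) ⟨1, one_pos, by simp⟩ ?_ ?_ ?_
  · rintro s t hst ⟨ρ, hρ, h⟩
    exact ⟨ρ, hρ, fun x hx => h x (hst hx)⟩
  · rintro s t ⟨ρ, hρ, h⟩ ⟨ρ', hρ', h'⟩
    refine ⟨min ρ ρ', lt_min hρ hρ', fun x hx => ?_⟩
    rcases hx with hx | hx
    · obtain ⟨ψ, a1, a2, a3⟩ := h x hx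
      exact ⟨ψ, a1, mono (min_le_left _ _) a1 (lt_min hρ hρ') a2 a3⟩
    · obtain ⟨ψ, a1, a2, a3⟩ := h' x hx
      exact ⟨ψ, a1, mono (min_le_right _ _) a1 (lt_min hρ hρ') a2 a3⟩
  · intro x _
    obtain ⟨ε, hε, f, hf, himg⟩ := hS.euclidean_at x (by rw [h0]; simp)
    refine ⟨ball x (ε / 2), mem_nhdsWithin_of_mem_nhds (ball_mem_nhds _ (by positivity)), ε / 2,
      by positivity, fun x' hx' => ?_⟩
    have hx'ε : x' ∈ ball x ε := ball_subset_ball (by linarith) hx'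
    let ι := Complex.orthonormalBasisOneI.repr
    have hsurj : ∀ q : EuclideanSpace ℝ (Fin 2), dist q (f x') < ε / 2 → ∃ y ∈ ball x ε, f y = q := by
      intro q hq
      have : q ∈ ball (f x) ε := by
        have h1 := dist_triangle q (f x') (f x)
        have h2 := hf x' hx'ε x (mem_ball_self hε)
        rw [mem_ball] at hx' ⊢
        linarith
      rw [← himg] at this
      exact this
    have key : ∀ z : ℂ, ∃ y, ‖z‖ < ε / 2 → y ∈ ball x ε ∧ f y = f x' + ι z := by
      intro z
      by_cases hz : ‖z‖ < ε / 2
      · obtain ⟨y, h1, h2⟩ := hsurj (f x' + ι z) (by simpa [dist_eq_norm] using hz)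
        exact ⟨y, fun _ => ⟨h1, h2⟩⟩
      · exact ⟨x, fun h => absurd h hz⟩
    choose ψ hψ using key
    have hinj : ∀ y ∈ ball x ε, ∀ y' ∈ ball x ε, f y = f y' → y = y' := by
      intro y hy y' hy' h
      rw [← dist_eq_zero, ← hf y hy y' hy', h, dist_self]
    have hε2 : (0:ℝ) < ε / 2 := by positivity
    refine ⟨ψ, ?_, ?_, ?_⟩
    · obtain ⟨h1, h2⟩ := hψ 0 (by simpa using hε2)
      exact hinj _ h1 _ hx'ε (by simpa using h2)
    · intro z w hz hw
      obtain ⟨h1, h2⟩ := hψ z hz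
      obtain ⟨h3, h4⟩ := hψ w hw
      rw [← hf _ h1 _ h3, h2, h4, dist_add_left, ι.dist_map, dist_eq_norm]
    · intro y hy
      have hyε : y ∈ ball x ε := by
        have := dist_triangle y x' x
        rw [mem_ball] at hx' ⊢
        rw [dist_comm y x'] at this
        linarith
      have hn : ‖ι.symm (f y - f x')‖ < ε / 2 := by
        rw [LinearIsometryEquiv.norm_map, ← dist_eq_norm, hf y hyε x' hx'ε, dist_comm]
        exact hy
      refine ⟨ι.symm (f y - f x'), hn, ?_⟩
      obtain ⟨h1, h2⟩ := hψ _ hn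
      exact hinj _ h1 _ hyε (by rw [h2]; simp)

/-- A Euclidean chart `φ` of radius `ρ` around `g t` in which `g` is the real axis. -/
structure Chart {S : Type} [MetricSpace S] (g : ℝ → S) (ρ t : ℝ) (φ : ℂ → S) : Prop where
  isom : ∀ z w, ‖z‖ < ρ → ‖w‖ < ρ → dist (φ z) (φ w) = ‖z - w‖
  real : ∀ s : ℝ, |s| < ρ → φ s = g (t + s)
  surj : ∀ y, dist (φ 0) y < ρ → ∃ z, ‖z‖ < ρ ∧ φ z = y

/-- A complex number is determined up to conjugation by its distances to two real numbers. -/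
theorem complex_eq_or_conj {z w : ℂ} {s : ℝ} (hs : s ≠ 0) (h0 : ‖w‖ = ‖z‖)
    (h1 : ‖w - s‖ = ‖z - s‖) : w = z ∨ w = conj z := by
  have e0 : w.re ^ 2 + w.im ^ 2 = z.re ^ 2 + z.im ^ 2 := by
    have := congrArg (· ^ 2) h0
    simp only [← Complex.normSq_eq_norm_sq, Complex.normSq_apply] at this
    linarith
  have e1 : (w.re - s) ^ 2 + w.im ^ 2 = (z.re - s) ^ 2 + z.im ^ 2 := by
    have := congrArg (· ^ 2) h1
    simp only [← Complex.normSq_eq_norm_sq, Complex.normSq_apply, Complex.sub_re, Complex.sub_im,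
      Complex.ofReal_re, Complex.ofReal_im, sub_zero] at this
    linarith
  have e2 : w.re = z.re := by
    have : s * (w.re - z.re) = 0 := by linarith
    rcases mul_eq_zero.1 this with h | h
    · exact absurd h hs
    · linarith
  rw [e2] at e0
  rcases sq_eq_sq_iff_eq_or_eq_neg.1 (show w.im ^ 2 = z.im ^ 2 by linarith) with h | h
  · exact Or.inl (Complex.ext e2 h)
  · exact Or.inr (Complex.ext (by simpa using e2) (by simpa using h))

theorem im_mul_im_eq_zero {z w : ℂ} (h : ‖z - w‖ = ‖z - conj w‖) : z.im * w.im = 0 := by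
  have := congrArg (· ^ 2) h
  simp only [← Complex.normSq_eq_norm_sq, Complex.normSq_apply, Complex.sub_re, Complex.sub_im,
    Complex.conj_re, Complex.conj_im] at this
  linarith

/-- Without conical points, a local geodesic is the real axis of charts of uniform radius. -/
theorem exists_chart {S : Type} [MetricSpace S] (hS : ESCS S) (h0 : hS.conical = ∅) {g : ℝ → S}
    (hg : IsLocalGeodesic g) : ∃ ρ > 0, ∀ t, ∃ φ, Chart g ρ t φ := by
  obtain ⟨R, hR⟩ := exists_locConv hS
  have hR0 := hR.pos
  obtain ⟨ρ₀, hρ₀, hψ⟩ := exists_flat_chart hS h0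
  obtain ⟨ρ, hρ, hρρ, hρR⟩ : ∃ ρ > 0, ρ ≤ ρ₀ ∧ 4 * ρ ≤ R :=
    ⟨min ρ₀ (R / 4), by positivity, min_le_left _ _, by linarith [min_le_right ρ₀ (R / 4)]⟩
  refine ⟨ρ, hρ, fun t => ?_⟩
  obtain ⟨ψ, ψ0, ψi, ψs⟩ := hψ (g t)
  have gd : ∀ s s' : ℝ, |s| < ρ → |s'| < ρ → dist (g (t + s)) (g (t + s')) = |s - s'| := by
    intro s s' hs hs'
    have e : t + s - (t + s') = s - s' := by ring
    rw [hg.dist_eq hR (by rw [e]; linarith [abs_sub s s']), e]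
  have key : ∀ s : ℝ, ∃ z, |s| < ρ → ‖z‖ < ρ₀ ∧ ψ z = g (t + s) := by
    intro s
    by_cases hs : |s| < ρ
    · have := gd 0 s (by simpa using hρ) hs
      rw [add_zero, zero_sub, abs_neg] at this
      obtain ⟨z, hz⟩ := ψs (g (t + s)) (by linarith)
      exact ⟨z, fun _ => hz⟩
    · exact ⟨0, fun h => absurd h hs⟩
  choose σ hσ using key
  have σd : ∀ s s' : ℝ, |s| < ρ → |s'| < ρ → ‖σ s - σ s'‖ = |s - s'| := by
    intro s s' hs hs'
    rw [← gd s s' hs hs', ← ψi _ _ (hσ s hs).1 (hσ s' hs').1, (hσ s hs).2, (hσ s' hs').2]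
  have hρ0 : |(0:ℝ)| < ρ := by simpa using hρ
  have σ0 : σ 0 = 0 := by
    have := ψi (σ 0) 0 (hσ 0 hρ0).1 (by simpa using hρ₀)
    rw [(hσ 0 hρ0).2, ψ0, add_zero, dist_self, sub_zero] at this
    exact norm_eq_zero.1 this.symm
  have σn : ∀ s : ℝ, |s| < ρ → ‖σ s‖ = |s| := by
    intro s hs
    have := σd s 0 hs hρ0
    rwa [σ0, sub_zero, sub_zero] at this
  set c := ρ / 2 with hc
  have hc0 : 0 < c := by positivity
  have hcρ : |c| < ρ := by rw [abs_of_pos hc0]; linarith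
  have hcC : (c : ℂ) ≠ 0 := by exact_mod_cast hc0.ne'
  set e : ℂ := σ c / c with he
  have hen : ‖e‖ = 1 := by
    rw [he, norm_div, σn c hcρ, Complex.norm_real, Real.norm_eq_abs, div_self]
    exact abs_ne_zero.2 hc0.ne'
  have he0 : e ≠ 0 := norm_ne_zero_iff.1 (by rw [hen]; norm_num)
  have σe : ∀ s : ℝ, |s| < ρ → σ s = e * s := by
    intro s hs
    have h1 : ‖σ s / e‖ = ‖(s:ℂ)‖ := by
      rw [norm_div, hen, div_one, σn s hs, Complex.norm_real, Real.norm_eq_abs]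
    have h2 : ‖σ s / e - c‖ = ‖(s:ℂ) - c‖ := by
      have : σ s / e - c = (σ s - σ c) / e := by
        rw [sub_div]
        congr 1
        rw [eq_div_iff he0, he]
        field_simp
      rw [this, norm_div, hen, div_one, σd s c hs hcρ, ← Complex.ofReal_sub, Complex.norm_real,
        Real.norm_eq_abs]
    have : σ s / e = s := by
      rcases complex_eq_or_conj hc0.ne' h1 h2 with h | h
      · exact h
      · rw [h, Complex.conj_ofReal]
    rw [← this]
    field_simp
  have hmul : ∀ z, ‖e * z‖ = ‖z‖ := fun z => by rw [norm_mul, hen, one_mul]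
  refine ⟨fun z => ψ (e * z), ?_, ?_, ?_⟩
  · intro z w hz hw
    rw [ψi _ _ (by rw [hmul]; linarith) (by rw [hmul]; linarith), ← mul_sub, hmul]
  · intro s hs
    rw [← σe s hs, (hσ s hs).2]
  · intro y hy
    simp only [mul_zero, ψ0] at hy
    obtain ⟨z, hz, rfl⟩ := ψs y (by linarith)
    refine ⟨z / e, ?_, ?_⟩
    · rw [← ψ0, ψi _ _ (by simpa using hρ₀) hz, zero_sub, norm_neg] at hy
      rwa [norm_div, hen, div_one]
    · congr 1
      field_simp

namespace Chart

variable {S : Type} [MetricSpace S] {g : ℝ → S} {ρ t d : ℝ} {φ φ' : ℂ → S}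

theorem conj_chart (h : Chart g ρ t φ) : Chart g ρ t (fun z => φ (conj z)) := by
  refine ⟨fun z w hz hw => ?_, fun s hs => ?_, fun y hy => ?_⟩
  · rw [h.isom _ _ (by simpa using hz) (by simpa using hw), ← map_sub, Complex.norm_conj]
  · rw [Complex.conj_ofReal, h.real s hs]
  · rw [map_zero] at hy
    obtain ⟨z, hz, rfl⟩ := h.surj y hy
    exact ⟨conj z, by simpa using hz, by simp⟩

theorem inj (h : Chart g ρ t φ) {z w : ℂ} (hz : ‖z‖ < ρ) (hw : ‖w‖ < ρ) (e : φ z = φ w) : z = w := by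
  have := h.isom z w hz hw
  rw [e, dist_self] at this
  exact sub_eq_zero.1 (norm_eq_zero.1 this.symm)

theorem norm_add_lt {z : ℂ} (hz : ‖z‖ + |d| < ρ) : ‖z + d‖ < ρ := by
  have := norm_add_le z (d : ℂ)
  rw [Complex.norm_real, Real.norm_eq_abs] at this
  linarith

/-- Two charts along `g` agree up to a reflection. -/
theorem eq_or_conj (h : Chart g ρ t φ) (h' : Chart g ρ (t + d) φ') (hd : |d| ≤ ρ / 2) {z : ℂ}
    (hz : ‖z‖ + |d| < ρ) : φ' z = φ (z + d) ∨ φ' z = φ (conj z + d) := by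
  have hρ : 0 < ρ := lt_of_le_of_lt (by positivity) hz
  have hz' : ‖z‖ < ρ := by linarith [abs_nonneg d]
  have r0 : φ' 0 = φ d := by
    have h1 := h'.real 0 (by simpa using hρ)
    have h2 := h.real d (by linarith)
    rw [add_zero, Complex.ofReal_zero] at h1
    rw [h1, h2]
  obtain ⟨w, hw, hwz⟩ := h.surj (φ' z) (by
    have h1 := dist_triangle (φ 0) (φ d) (φ' z)
    rw [h.isom 0 d (by simpa using hρ) (by simpa using by linarith), ← r0,
      h'.isom 0 z (by simpa using hρ) hz', zero_sub, zero_sub, norm_neg, norm_neg,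
      Complex.norm_real, Real.norm_eq_abs] at h1
    linarith)
  have hs : ∀ s : ℝ, |s| ≤ ρ / 4 → ‖w - d - s‖ = ‖z - s‖ := by
    intro s hs
    have h1 := h'.isom z s hz' (by simpa using by linarith)
    have h2 := h.isom w ((d + s : ℝ) : ℂ) hw (by
      rw [Complex.norm_real, Real.norm_eq_abs]
      linarith [abs_add_le d s])
    rw [h'.real s (by linarith), ← hwz] at h1
    rw [h.real (d + s) (by linarith [abs_add_le d s]), ← add_assoc, h1] at h2
    rw [h2]
    push_cast
    congr 1
    ring
  have h0 := hs 0 (by rw [abs_zero]; positivity)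
  have h1 := hs (ρ / 4) (by rw [abs_of_pos (by positivity)])
  rw [Complex.ofReal_zero, sub_zero, sub_zero] at h0
  rcases complex_eq_or_conj (by positivity) h0 h1 with h | h
  · left
    rw [show z + (d:ℂ) = w by rw [← h]; ring]
    exact hwz.symm
  · right
    rw [show conj z + (d:ℂ) = w by rw [← h]; ring]
    exact hwz.symm

/-- A single non-real point decides which of the two cases of `eq_or_conj` occurs. -/
theorem rigid (h : Chart g ρ t φ) (h' : Chart g ρ (t + d) φ') (hd : |d| ≤ ρ / 2) {z₀ : ℂ}
    (hz₀ : ‖z₀‖ + |d| < ρ) (him : z₀.im ≠ 0) (h0 : φ' z₀ = φ (z₀ + d)) {z : ℂ}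
    (hz : ‖z‖ + |d| < ρ) : φ' z = φ (z + d) := by
  rcases h.eq_or_conj h' hd hz with e | e
  · exact e
  · have hc : ‖conj z‖ + |d| < ρ := by rwa [Complex.norm_conj]
    have h1 := h'.isom z₀ z (by linarith [abs_nonneg d]) (by linarith [abs_nonneg d])
    rw [h0, e, h.isom _ _ (norm_add_lt hz₀) (norm_add_lt hc), add_sub_add_right_eq_sub] at h1
    have hz0 : z.im = 0 := by
      rcases mul_eq_zero.1 (im_mul_im_eq_zero h1.symm) with h | h
      · exact absurd h him
      · exact h
    rw [e, Complex.conj_eq_iff_im.2 hz0]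

/-- Charts can be continued along `g`. -/
theorem step (ex : ∀ t, ∃ φ, Chart g ρ t φ) (hρ : 0 < ρ) (h : Chart g ρ t φ) (hd : |d| ≤ ρ / 2) :
    ∃ φ', Chart g ρ (t + d) φ' ∧ ∀ z : ℂ, ‖z‖ + |d| < ρ → φ' z = φ (z + d) := by
  obtain ⟨φ', h'⟩ := ex (t + d)
  set z₀ : ℂ := (ρ / 4 : ℝ) * Complex.I with hz₀def
  have hn : ‖z₀‖ = ρ / 4 := by
    rw [hz₀def, norm_mul, Complex.norm_real, Complex.norm_I, mul_one, Real.norm_eq_abs,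
      abs_of_pos (by positivity)]
  have hz₀ : ‖z₀‖ + |d| < ρ := by linarith
  have him : z₀.im ≠ 0 := by
    simp [hz₀def, hρ.ne']
  rcases h.eq_or_conj h' hd hz₀ with e | e
  · exact ⟨φ', h', fun z hz => h.rigid h' hd hz₀ him e hz⟩
  · refine ⟨_, h'.conj_chart, fun z hz => ?_⟩
    refine h.rigid h'.conj_chart hd (z₀ := conj z₀) (by rwa [Complex.norm_conj])
      (by simpa using him) ?_ hz
    rw [Complex.conj_conj, e]

end Chart

/-! ### Flat surfaces have no isolated closed geodesics -/

namespace Chart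

variable {S : Type} [MetricSpace S] {g : ℝ → S} {ρ t d τ T : ℝ} {φ φ' : ℂ → S}

theorem of_periodic (h : Chart g ρ (t + T) φ) (hT : Function.Periodic g T) : Chart g ρ t φ := by
  refine ⟨h.isom, fun s hs => ?_, h.surj⟩
  rw [h.real s hs, show t + T + s = t + s + T by ring, hT]

theorem exists_chain_nat (ex : ∀ t, ∃ φ, Chart g ρ t φ) (hρ : 0 < ρ) (h : Chart g ρ 0 φ)
    (hd : |d| ≤ ρ / 2) : ∃ F : ℕ → ℂ → S, F 0 = φ ∧ (∀ n : ℕ, Chart g ρ (n * d) (F n)) ∧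
      ∀ (n : ℕ) (z : ℂ), ‖z‖ + |d| < ρ → F (n + 1) z = F n (z + d) := by
  choose nx h1 h2 using fun (t : ℝ) (φ : ℂ → S) (h : Chart g ρ t φ) => step ex hρ h hd
  let F : ∀ n : ℕ, {φ : ℂ → S // Chart g ρ (n * d) φ} := fun n =>
    Nat.rec ⟨φ, by simpa using h⟩ (fun n p => ⟨nx _ _ p.2, by
      have := h1 _ _ p.2
      rwa [show (n : ℝ) * d + d = ((n + 1 : ℕ) : ℝ) * d by push_cast; ring] at this⟩) n
  exact ⟨fun n => (F n).1, rfl, fun n => (F n).2, fun n z hz => h2 _ _ (F n).2 z hz⟩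

/-- A sequence of charts along `g`, each continuing the previous one. -/
theorem exists_chain (ex : ∀ t, ∃ φ, Chart g ρ t φ) (hρ : 0 < ρ) (hτ : 0 < τ) (hτρ : τ < ρ / 8) :
    ∃ Φ : ℤ → ℂ → S, (∀ k : ℤ, Chart g ρ (k * τ) (Φ k)) ∧
      ∀ (k : ℤ) (z : ℂ), ‖z‖ < ρ / 4 → Φ (k + 1) z = Φ k (z + τ) := by
  obtain ⟨φ, h⟩ := ex 0
  obtain ⟨F, F0, Fc, Fs⟩ := exists_chain_nat ex hρ h (d := τ) (by rw [abs_of_pos hτ]; linarith)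
  obtain ⟨B, B0, Bc, Bs⟩ := exists_chain_nat ex hρ h (d := -τ)
    (by rw [abs_neg, abs_of_pos hτ]; linarith)
  rw [abs_of_pos hτ] at Fs
  rw [abs_neg, abs_of_pos hτ] at Bs
  have Bs' : ∀ (n : ℕ) (z : ℂ), ‖z‖ < ρ / 4 → B n z = B (n + 1) (z + τ) := by
    intro n z hz
    rw [Bs n]
    · congr 1
      push_cast
      ring
    · have := norm_add_le z (τ : ℂ)
      rw [Complex.norm_real, Real.norm_eq_abs, abs_of_pos hτ] at this
      linarith
  refine ⟨fun k => match k with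
    | Int.ofNat n => F n
    | Int.negSucc n => B (n + 1), ?_, ?_⟩
  · rintro (n | n)
    · have := Fc n
      simpa using this
    · have := Bc (n + 1)
      rw [Int.cast_negSucc]
      rwa [show -((n + 1 : ℕ) : ℝ) * τ = ((n + 1 : ℕ) : ℝ) * -τ by ring]
  · rintro (n | n) z hz
    · exact Fs n z (by linarith)
    · rcases n with _ | n
      · change F 0 z = B 1 (z + τ)
        rw [F0, ← B0]
        exact Bs' 0 z hz
      · exact Bs' (n + 1) z hz

/-- Going twice around the closed geodesic, a chain of charts closes up (once around, it may be
reflected). -/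
theorem chain_periodic {Φ : ℤ → ℂ → S} (hρ : 0 < ρ) (hτ : 0 < τ) (hτρ : τ < ρ / 8)
    (hc : ∀ k : ℤ, Chart g ρ (k * τ) (Φ k))
    (hs : ∀ (k : ℤ) (z : ℂ), ‖z‖ < ρ / 4 → Φ (k + 1) z = Φ k (z + τ))
    (m : ℤ) (hT : Function.Periodic g (m * τ)) (k : ℤ) {z : ℂ} (hz : ‖z‖ < ρ) :
    Φ (k + 2 * m) z = Φ k z := by
  have hcm : ∀ k : ℤ, Chart g ρ (k * τ) (Φ (k + m)) := by
    intro k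
    have := hc (k + m)
    rw [Int.cast_add, add_mul] at this
    exact this.of_periodic hT
  set z₀ : ℂ := (ρ / 8 : ℝ) * Complex.I with hz₀def
  have hn : ‖z₀‖ = ρ / 8 := by
    rw [hz₀def, norm_mul, Complex.norm_real, Complex.norm_I, mul_one, Real.norm_eq_abs,
      abs_of_pos (by positivity)]
  have him : z₀.im ≠ 0 := by
    simp [hz₀def, hρ.ne']
  have hn1 : ‖z₀ + τ‖ < ρ := by
    have := norm_add_le z₀ (τ : ℂ)
    rw [Complex.norm_real, Real.norm_eq_abs, abs_of_pos hτ] at this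
    linarith
  have him1 : (z₀ + τ).im ≠ 0 := by simpa using him
  have rig : ∀ {t : ℝ} {φ φ' : ℂ → S}, Chart g ρ t φ → Chart g ρ t φ' → ∀ {w : ℂ}, ‖w‖ < ρ →
      w.im ≠ 0 → φ' w = φ w → ∀ {z : ℂ}, ‖z‖ < ρ → φ' z = φ z := by
    intro t φ φ' h h' w hw hwi e z hz
    have := h.rigid (d := 0) (z₀ := w) (z := z) (by rwa [add_zero]) (by simpa using by linarith)
      (by simpa using hw) hwi (by simpa using e) (by simpa using hz)
    simpa using this
  have nxt : ∀ k, Φ (k + m) z₀ = Φ k z₀ ↔ Φ (k + 1 + m) z₀ = Φ (k + 1) z₀ := by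
    intro k
    rw [show k + 1 + m = k + m + 1 by ring, hs (k + m) z₀ (by linarith), hs k z₀ (by linarith)]
    constructor
    · intro e
      exact rig (hc k) (hcm k) (by linarith) him e hn1
    · intro e
      exact rig (hc k) (hcm k) hn1 him1 e (by linarith)
  have all : ∀ k, Φ (k + m) z₀ = Φ k z₀ ↔ Φ (0 + m) z₀ = Φ 0 z₀ := by
    intro k
    induction k using Int.induction_on with
    | zero => rfl
    | succ n ih => rw [← nxt, ih]
    | pred n ih =>
      rw [nxt, show -(n : ℤ) - 1 + 1 = -n by ring, ih]
  rw [show k + 2 * m = k + m + m by ring]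
  by_cases h0 : Φ (0 + m) z₀ = Φ 0 z₀
  · have st : ∀ k, Φ (k + m) z = Φ k z := fun k =>
      rig (hc k) (hcm k) (by linarith) him ((all k).2 h0) hz
    rw [st, st]
  · have st : ∀ (k : ℤ) {z : ℂ}, ‖z‖ < ρ → Φ (k + m) z = Φ k (conj z) := by
      intro k z hz
      refine rig (hc k).conj_chart (hcm k) (w := z₀) (by linarith) him ?_ hz
      have := (hc k).eq_or_conj (d := 0) (z := z₀) (by rw [add_zero]; exact hcm k)
        (by simpa using by linarith) (by simpa using by linarith)
      simp only [Complex.ofReal_zero, add_zero] at this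
      exact this.resolve_left fun h => h0 ((all k).1 h)
    rw [st _ hz, st _ (by simpa using hz), Complex.conj_conj]

end Chart

/-- Along a closed geodesic of period `T` of a flat surface there is an immersed flat strip, of
period `2 * T`. -/
theorem exists_strip {S : Type} [MetricSpace S] (hS : ESCS S) (h0 : hS.conical = ∅) {g : ℝ → S}
    (hg : IsLocalGeodesic g) {T : ℝ} (hT : 0 < T) (hgT : Function.Periodic g T) :
    ∃ η > 0, ∃ E : ℝ → ℝ → S, (∀ t, E t 0 = g t) ∧
      (∀ t₀, ∃ ε > 0, ∀ t t' u u', |t - t₀| < ε → |t' - t₀| < ε → |u| < η → |u'| < η →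
        dist (E t u) (E t' u') = ‖((t - t' : ℝ) : ℂ) + (u - u' : ℝ) * Complex.I‖) ∧
      ∀ t u, |u| < η → E (t + 2 * T) u = E t u := by
  obtain ⟨ρ, hρ, ex⟩ := exists_chart hS h0 hg
  obtain ⟨m, hm⟩ := exists_nat_gt (8 * T / ρ)
  have hm0 : (0:ℝ) < m := lt_of_le_of_lt (by positivity) hm
  obtain ⟨τ, hτdef⟩ : ∃ τ, τ = T / m := ⟨_, rfl⟩
  have hτ : 0 < τ := by rw [hτdef]; positivity
  have hmτ : m * τ = T := by rw [hτdef]; field_simp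
  have hτρ : τ < ρ / 8 := by
    rw [div_lt_iff₀ hρ] at hm
    rw [hτdef, div_lt_iff₀ hm0]
    linarith
  obtain ⟨Φ, hc, hs⟩ := Chart.exists_chain ex hρ hτ hτρ
  have per : ∀ (k : ℤ) {z : ℂ}, ‖z‖ < ρ → Φ (k + 2 * m) z = Φ k z := fun k z hz =>
    Chart.chain_periodic hρ hτ hτρ hc hs m (by rw [Int.cast_natCast, hmτ]; exact hgT) k hz
  have nrm : ∀ (a u : ℝ), ‖(a : ℂ) + u * Complex.I‖ ≤ |a| + |u| := by
    intro a u
    have := norm_add_le (a : ℂ) (u * Complex.I)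
    rwa [norm_mul, Complex.norm_I, mul_one, Complex.norm_real, Complex.norm_real,
      Real.norm_eq_abs, Real.norm_eq_abs] at this
  have fl : ∀ t : ℝ, 0 ≤ t - ⌊t / τ⌋ * τ ∧ t - ⌊t / τ⌋ * τ < τ := by
    intro t
    have h1 := Int.floor_le (t / τ)
    have h2 := Int.lt_floor_add_one (t / τ)
    rw [le_div_iff₀ hτ] at h1
    rw [div_lt_iff₀ hτ] at h2
    constructor <;> linarith
  have flu : ∀ (t : ℝ) (k : ℤ), k * τ ≤ t → t < (k + 1) * τ → ⌊t / τ⌋ = k := by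
    intro t k h1 h2
    rw [Int.floor_eq_iff, le_div_iff₀ hτ, div_lt_iff₀ hτ]
    exact ⟨h1, h2⟩
  obtain ⟨E, hE⟩ : ∃ E : ℝ → ℝ → S, ∀ t u, E t u =
    Φ ⌊t / τ⌋ ((t - ⌊t / τ⌋ * τ : ℝ) + u * Complex.I) := ⟨_, fun _ _ => rfl⟩
  have loc : ∀ (k : ℤ) (t u : ℝ), (k - 1) * τ ≤ t → t < (k + 1) * τ → |u| < ρ / 8 →
      E t u = Φ k ((t - k * τ : ℝ) + u * Complex.I) := by
    intro k t u h1 h2 hu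
    rcases le_or_gt (k * τ) t with h | h
    · rw [hE, flu t k h h2]
    · have e : ⌊t / τ⌋ = k - 1 := flu t (k - 1) (by push_cast; linarith) (by push_cast; linarith)
      have h3 := hs (k - 1) ((t - k * τ : ℝ) + u * Complex.I) (by
        refine lt_of_le_of_lt (nrm _ _) ?_
        rw [abs_of_neg (by linarith)]
        linarith)
      rw [sub_add_cancel] at h3
      rw [hE, e, h3]
      congr 1
      push_cast
      ring
  refine ⟨ρ / 8, by positivity, E, ?_, ?_, ?_⟩
  · intro t
    obtain ⟨h1, h2⟩ := fl t
    rw [hE, Complex.ofReal_zero, zero_mul, add_zero, (hc _).real]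
    · congr 1
      ring
    · rw [abs_of_nonneg h1]
      linarith
  · intro t₀
    set k := ⌊t₀ / τ⌋ with hk
    obtain ⟨h1, h2⟩ := fl t₀
    rw [← hk] at h1 h2
    refine ⟨min τ (τ - (t₀ - k * τ)), lt_min hτ (by linarith), ?_⟩
    have key : ∀ t u : ℝ, |t - t₀| < min τ (τ - (t₀ - k * τ)) → |u| < ρ / 8 →
        E t u = Φ k ((t - k * τ : ℝ) + u * Complex.I) ∧
        ‖((t - k * τ : ℝ) : ℂ) + u * Complex.I‖ < ρ := by
      intro t u ht hu
      obtain ⟨a1, a2⟩ := abs_lt.1 (lt_of_lt_of_le ht (min_le_left _ _))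
      obtain ⟨b1, b2⟩ := abs_lt.1 (lt_of_lt_of_le ht (min_le_right _ _))
      refine ⟨loc k t u (by linarith) (by linarith) hu, lt_of_le_of_lt (nrm _ _) ?_⟩
      have : |t - k * τ| ≤ τ := abs_le.2 ⟨by linarith, by linarith⟩
      linarith
    intro t t' u u' ht ht' hu hu'
    obtain ⟨e1, n1⟩ := key t u ht hu
    obtain ⟨e2, n2⟩ := key t' u' ht' hu'
    rw [e1, e2, (hc k).isom _ _ n1 n2]
    congr 1
    push_cast
    ring
  · intro t u hu
    have e : ⌊(t + 2 * T) / τ⌋ = ⌊t / τ⌋ + 2 * m := by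
      rw [← hmτ, show (t + 2 * (m * τ)) / τ = t / τ + ((2 * m : ℤ) : ℝ) by push_cast; field_simp,
        Int.floor_add_intCast]
    obtain ⟨h1, h2⟩ := fl t
    rw [hE, hE, e, show t + 2 * T - ((⌊t / τ⌋ + 2 * m : ℤ) : ℝ) * τ = t - ⌊t / τ⌋ * τ by
      rw [← hmτ]; push_cast; ring]
    refine per _ (lt_of_le_of_lt (nrm _ _) ?_)
    rw [abs_of_nonneg h1]
    linarith

/-- On a flat surface every closed geodesic can be pushed off itself inside a flat strip, so that it
is not unique in its free homotopy class. -/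
theorem conical_nonempty {S : Type} [MetricSpace S] (hS : ESCS S) {g : ℝ → S}
    (hg : UniqueClosedGeodesic g) : hS.conical.Nonempty := by
  by_contra hne
  rw [Finset.not_nonempty_iff_eq_empty] at hne
  obtain ⟨hgl, ⟨T, hT, hgT⟩, huniq⟩ := hg
  obtain ⟨η, hη, E, E0, Eloc, Eper⟩ := exists_strip hS hne hgl hT hgT
  have par : ∀ u : ℝ, 0 ≤ u → u < η → ∃ a ∈ Ico 0 T, ∀ t, E t u = g (t + a) := by
    intro u hu0 hu
    have hua : |u| < η := by rwa [abs_of_nonneg hu0]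
    have clamp : ∀ c : ℝ, |max 0 (min 1 c) * u| < η := by
      intro c
      have h1 : 0 ≤ max 0 (min 1 c) := le_max_left _ _
      have h2 : max 0 (min 1 c) ≤ 1 := max_le zero_le_one (min_le_left _ _)
      rw [abs_of_nonneg (by positivity)]
      nlinarith
    have hloc : IsLocalGeodesic (fun t => E t u) := by
      intro t
      obtain ⟨ε, hε, h⟩ := Eloc t
      refine ⟨ε, hε, fun s s' hs hs' => ?_⟩
      rw [h s s' u u hs hs' hua hua, sub_self, Complex.ofReal_zero, zero_mul, add_zero,
        Complex.norm_real, Real.norm_eq_abs]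
    have hper : Function.Periodic (fun t => E t u) (2 * T) := fun t => Eper t u hua
    have hg2 : Function.Periodic g (2 * T) := by
      intro t
      rw [two_mul, ← add_assoc, hgT, hgT]
    have free : FreelyHomotopic g (fun t => E t u) := by
      refine ⟨2 * T, by positivity, 2 * T, by positivity, hg2, hper,
        fun c s => E (2 * T * s) (max 0 (min 1 c) * u), ?_, ?_, ?_, ?_⟩
      · rw [continuous_iff_continuousAt]
        rintro ⟨c₀, s₀⟩
        obtain ⟨ε, hε, h⟩ := Eloc (2 * T * s₀)
        have hc : Continuous fun p : ℝ × ℝ => ‖((2 * T * p.2 - 2 * T * s₀ : ℝ) : ℂ) +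
            (max 0 (min 1 p.1) * u - max 0 (min 1 c₀) * u : ℝ) * Complex.I‖ := by fun_prop
        have ht := hc.tendsto (c₀, s₀)
        simp only [sub_self, Complex.ofReal_zero, zero_mul, add_zero, norm_zero] at ht
        have hc2 : Continuous fun p : ℝ × ℝ => |2 * T * p.2 - 2 * T * s₀| := by fun_prop
        have hev : ∀ᶠ p : ℝ × ℝ in 𝓝 (c₀, s₀), |2 * T * p.2 - 2 * T * s₀| < ε :=
          (hc2.tendsto (c₀, s₀)).eventually_lt_const (by simpa using hε)
        rw [ContinuousAt, tendsto_iff_dist_tendsto_zero]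
        refine ht.congr' ?_
        filter_upwards [hev] with p hp
        exact (h _ _ _ _ hp (by simpa using hε) (clamp _) (clamp _)).symm
      · intro s
        simp [E0]
      · intro s
        simp
      · intro c s
        change E (2 * T * (s + 1)) _ = E (2 * T * s) _
        rw [mul_add, mul_one, Eper _ _ (clamp c)]
    obtain ⟨a, ha⟩ := huniq _ hloc ⟨2 * T, by positivity, hper⟩ free
    refine ⟨toIcoMod hT 0 a, by simpa using toIcoMod_mem_Ico hT 0 a, fun t => ?_⟩
    have h1 := hgT.zsmul (toIcoDiv hT 0 a) (t + toIcoMod hT 0 a)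
    rw [add_assoc, toIcoMod_add_toIcoDiv_zsmul] at h1
    rw [← h1]
    exact ha t
  obtain ⟨ε, hε, hE⟩ := Eloc 0
  have hpos : ∀ n : ℕ, (0:ℝ) < n + 2 := fun n => by positivity
  have hu : ∀ n : ℕ, 0 ≤ η / (n + 2) ∧ η / (n + 2) < η := by
    intro n
    refine ⟨by positivity, ?_⟩
    rw [div_lt_iff₀ (hpos n)]
    nlinarith [(Nat.cast_nonneg n : (0:ℝ) ≤ n)]
  choose a ha haE using fun n : ℕ => par (η / (n + 2)) (hu n).1 (hu n).2
  -- two of the parallel copies are almost in phase, and then coincide at a point of the strip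
  obtain ⟨x, -, ψ, hψ, hlim⟩ := (isCompact_Icc (a := (0:ℝ)) (b := T)).tendsto_subseq
    (fun n => Ico_subset_Icc_self (ha n))
  obtain ⟨N, hN⟩ := Metric.cauchySeq_iff.1 hlim.cauchySeq ε hε
  have hd := hN N le_rfl (N + 1) (Nat.le_succ N)
  rw [Function.comp_apply, Function.comp_apply, Real.dist_eq] at hd
  set i := ψ N
  set j := ψ (N + 1)
  have hij : i ≠ j := (hψ (Nat.lt_succ_self N)).ne
  have e : E (a j - a i) (η / (i + 2)) = E 0 (η / (j + 2)) := by
    rw [haE, haE, sub_add_cancel, zero_add]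
  have h1 := hE (a j - a i) 0 (η / (i + 2)) (η / (j + 2)) (by rwa [sub_zero, abs_sub_comm])
    (by simpa using hε) (by rw [abs_of_nonneg (hu i).1]; exact (hu i).2)
    (by rw [abs_of_nonneg (hu j).1]; exact (hu j).2)
  rw [e, dist_self] at h1
  have h2 := congrArg Complex.im (norm_eq_zero.1 h1.symm)
  simp only [Complex.add_im, Complex.ofReal_im, Complex.mul_im, Complex.ofReal_re, Complex.I_im,
    mul_one, Complex.I_re, mul_zero, add_zero, zero_add, Complex.zero_im] at h2
  have hi := hpos i
  have hj := hpos j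
  field_simp at h2
  apply hij
  rw [mul_zero] at h2
  have : (i : ℝ) = j := by linarith [(mul_eq_zero.1 h2).resolve_left hη.ne']
  exact_mod_cast this

/-- Let `f, g, g' ∈ GS` with `f` non-closed, `f ∈ closure (W^ss(g))`,
and `g, g'` closed geodesics, each unique in its free homotopy class. If `g ∼_{s_n} g'`
for some sequence `s_n → ∞`, then `f ∼_{s_n} g'`. -/
theorem mixing_transfers_along_strong_stable (S X : Type) [MetricSpace S] [MetricSpace X]
    (hS : ESCS S) (cov : UnivCover S X) (f g g' : GeodSp S)
    (hfnc : ¬ ∃ T > (0:ℝ), Function.Periodic (⇑f.1) T)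
    (hfg : f ∈ closure (WssGS cov g))
    (hg : UniqueClosedGeodesic (⇑g.1)) (hg' : UniqueClosedGeodesic (⇑g'.1))
    (s : ℕ → ℝ) (hs : Tendsto s atTop atTop) (hmix : SnMixing s g g') :
    SnMixing s f g' := by
  intro O U hO hU hf hgU
  obtain ⟨P, hP⟩ := conical_nonempty hS hg
  obtain ⟨Y, _, ⟨G⟩⟩ := exists_geoCover hS cov
  obtain ⟨T, hT⟩ := topological_mixing hS G hP hO hU hf hgU
  filter_upwards [hs.eventually_ge_atTop T] with n hn
  obtain ⟨h, hhO, hhU⟩ := hT (s n) hn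
  exact ⟨geodFlow (s n) h, ⟨h, hhO, rfl⟩, hhU⟩

end ESCSPaper
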